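/- Let n ≥ 2 and let M^n be a smooth, closed, strictly convex hypersurface in ℝ^{n+1} enclosing the origin, with positive support function h. If M satisfies the isotropic L_p dual Minkowski equation h^{p-1} |Dh|^{n+1-q} 𝒦 = 1 on S^n (where 𝒦 is the Gauss curvature and Dh = ∇̄h + h x is the inverse Gauss map), and if −(n+1) < p ≤ −1 and n ≤ q ≤ n+1, then M is the unit sphere. -/

import Mathlib

open MeasureTheory Matrix Metric
open scoped RealInnerProductSpace

noncomputable section

/-- Euclidean space `ℝ^{n+1}`. -/
abbrev Euc (n : ℕ) : Type := EuclideanSpace ℝ (Fin (n + 1))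

/-- The Euclidean Hessian matrix of `H : ℝ^{n+1} → ℝ` at `x`. -/
def ehess (n : ℕ) (H : Euc n → ℝ) (x : Euc n) : Matrix (Fin (n + 1)) (Fin (n + 1)) ℝ :=
  Matrix.of fun i j =>
    fderiv ℝ (fun y => fderiv ℝ H y (EuclideanSpace.single j 1)) x (EuclideanSpace.single i 1)

/-- For the 1-homogeneous extension `H` of the support function `h` and `x ∈ S^n`, the matrix
`D²H(x) + h(x)·x xᵀ`.  Its restriction to the tangent space `x^⊥ = T_x S^n` is
`A[h] = ∇̄²h + h ḡ`, and `x` is an eigenvector with eigenvalue `h(x)`. -/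
def bmat (n : ℕ) (H : Euc n → ℝ) (x : Euc n) : Matrix (Fin (n + 1)) (Fin (n + 1)) ℝ :=
  ehess n H x + Matrix.of fun i j => H x * (x i * x j)

/-- `σ_n = det A[h] = det(∇̄²h + h ḡ)/det ḡ`, computed as `det(bmat)/h`. -/
def sigman (n : ℕ) (H : Euc n → ℝ) (x : Euc n) : ℝ :=
  Matrix.det (bmat n H x) / H x

/-- The Gauss curvature `𝒦 = 1/σ_n`. -/
def gaussCurv (n : ℕ) (H : Euc n → ℝ) (x : Euc n) : ℝ := (sigman n H x)⁻¹

/-- The round (spherical) gradient `∇̄f` at `x ∈ S^n`: the Euclidean gradient of the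
0-homogeneous extension `y ↦ f(y/‖y‖)`.  It depends only on `f|_{S^n}` and lies in `T_x S^n`. -/
def sphGrad (n : ℕ) (f : Euc n → ℝ) (x : Euc n) : Euc n :=
  gradient (fun y => f (‖y‖⁻¹ • y)) x

/-- The function `log (h^{n+2}/𝒦)` (as a function of `y`; on the sphere it agrees with the
centro-affine expression appearing in the paper). -/
def logQ (n : ℕ) (H : Euc n → ℝ) (y : Euc n) : ℝ :=
  Real.log ((H y) ^ (n + 2) / gaussCurv n H y)

/-- The centro-affine inner product `g(∇f, ∇u) = h ⟨A[h]⁻¹ ∇̄f, ∇̄u⟩` of the `g`-gradients of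
`f` and `u`, where `g = A[h]/h` is the centro-affine metric. -/
def gInner (n : ℕ) (H f u : Euc n → ℝ) (x : Euc n) : ℝ :=
  H x * ∑ i, (bmat n H x)⁻¹.mulVec (fun j => sphGrad n f x j) i * sphGrad n u x i

/-- The squared centro-affine norm `|∇f|_g²` of the `g`-gradient of `f`. -/
def gNormSq (n : ℕ) (H f : Euc n → ℝ) (x : Euc n) : ℝ := gInner n H f f x

/-- The centro-affine Laplacian `Δf = div_g(∇ f)` (with respect to the centro-affine connection
`∇` induced by the centro-affine normal `ξ = X`, and the centro-affine metric `g = A[h]/h`),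
computed via the identity `Δf = tr_g(A[hf]/h) - n f`, i.e.
`Δf = tr(B[h]⁻¹ B[hf]) - (n+1) f` where `B[u] = D²ũ + u·x xᵀ` for the 1-homogeneous
extension `ũ` of `u`. -/
def caLap (n : ℕ) (H f : Euc n → ℝ) (x : Euc n) : ℝ :=
  Matrix.trace ((bmat n H x)⁻¹ * bmat n (fun y => H y * f (‖y‖⁻¹ • y)) x) - (n + 1) * f x

/-- The spherical Lebesgue measure on `S^n ⊂ ℝ^{n+1}` (up to a positive constant). -/
def sphMeasure (n : ℕ) : Measure (sphere (0 : Euc n) 1) :=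
  (volume : Measure (Euc n)).toSphere

/-- The density of the cone-volume-type measure `dV = h σ_n dμ` with respect to the spherical
Lebesgue measure. -/
def volDens (n : ℕ) (H : Euc n → ℝ) (x : Euc n) : ℝ := H x * sigman n H x

/-!
Let `X = Dh` be the inverse Gauss map, `b = n + 1 - q ∈ [0, 1]` and `dV = h σ_n dμ`. Along the
support functions `h (1 + t f)` the volume is log-concave near `t = 0`: this is the multiplicative
Brunn–Minkowski inequality, a consequence of Prékopa–Leindler. The second variation at `t = 0` is a
Poincaré inequality `n ∫ f² dV ≤ ∫ |∇f|² dV + n (∫ f dV)² / ∫ dV` for the centro-affine metric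
`A[h] / h`.

Applied to `f = |X|^{-b} X_k` and summed over `k`, and combined with Green's formula for the vector
field `h^{p + 1} |X|^{-b} ∇̄h`, it bounds `∫ h^p |X|^{-b} |∇̄h|²` by `|∫ h^p ∇̄h|² / ∫ dV`; here
`0 ≤ b ≤ 1` and `0 < n + 1 + p ≤ n` give the signs, and the equation reads `dV = h^p |X|^b dμ`. This
is the reverse of the Cauchy–Schwarz inequality, so `∇̄h = |X|^b c` for a constant vector `c`. At a
maximum of `h` the left side vanishes, so `c = 0`, `h` is constant and the equation makes it `1`.

The sphere is never parametrised: a function on `S^n` is extended homogeneously and integrated over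
the shell `1 < |x|² < 3` against a radial cutoff.
-/

section PrekopaLeindler

open scoped Pointwise ENNReal

lemma volume_add_volume_le_of_isCompact {A B : Set ℝ} (hA : IsCompact A) (hB : IsCompact B)
    (hA₀ : A.Nonempty) (hB₀ : B.Nonempty) : volume A + volume B ≤ volume (A + B) := by
  obtain ⟨a, haA, ha⟩ := hA.exists_isGreatest hA₀
  obtain ⟨b, hbB, hb⟩ := hB.exists_isLeast hB₀
  have almost_disjoint : AEDisjoint volume (b +ᵥ A) (a +ᵥ B) := by
    refine measure_mono_null (t := {a + b}) ?_ (by simp)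
    rintro _ ⟨⟨x, hx, rfl⟩, ⟨y, hy, hxy⟩⟩
    have := ha hx
    have := hb hy
    simp only [vadd_eq_add, Set.mem_singleton_iff] at hxy ⊢
    linarith
  calc volume A + volume B = volume (b +ᵥ A) + volume (a +ᵥ B) := by
        rw [measure_vadd, measure_vadd]
    _ = volume ((b +ᵥ A) ∪ (a +ᵥ B)) :=
        (measure_union₀ (hB.measurableSet.const_vadd a).nullMeasurableSet almost_disjoint).symm
    _ ≤ volume (A + B) := by
        refine measure_mono (Set.union_subset ?_ ?_)
        · rintro _ ⟨x, hx, rfl⟩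
          exact ⟨x, hx, b, hbB, add_comm x b⟩
        · rintro _ ⟨y, hy, rfl⟩
          exact ⟨a, haA, y, hy, rfl⟩

lemma volume_add_volume_le {A B : Set ℝ} (hA : MeasurableSet A) (hB : MeasurableSet B)
    (hA₀ : A.Nonempty) (hB₀ : B.Nonempty) : volume A + volume B ≤ volume (A + B) := by
  obtain ⟨a, ha⟩ := hA₀
  obtain ⟨b, hb⟩ := hB₀
  rw [hA.measure_eq_iSup_isCompact, hB.measure_eq_iSup_isCompact]
  simp only [iSup_and']
  refine ENNReal.biSup_add_biSup_le' (p := fun K ↦ K ⊆ A ∧ IsCompact K)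
    (q := fun K ↦ K ⊆ B ∧ IsCompact K) ⟨∅, by simp⟩ ⟨∅, by simp⟩ ?_
  rintro A' ⟨hA'A, hA'⟩ B' ⟨hB'B, hB'⟩
  calc volume A' + volume B' ≤ volume (insert a A') + volume (insert b B') := by
        gcongr <;> exact Set.subset_insert _ _
    _ ≤ volume (insert a A' + insert b B') :=
        volume_add_volume_le_of_isCompact (hA'.insert a) (hB'.insert b) ⟨a, by simp⟩ ⟨b, by simp⟩
    _ ≤ volume (A + B) := by
        gcongr
        exacts [Set.insert_subset ha hA'A, Set.insert_subset hb hB'B]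

lemma volume_add_volume_le_two_mul_of_midpoint_mem {A B C : Set ℝ} (hA : MeasurableSet A)
    (hB : MeasurableSet B) (hA₀ : A.Nonempty) (hB₀ : B.Nonempty)
    (h : ∀ x ∈ A, ∀ y ∈ B, (x + y) / 2 ∈ C) : volume A + volume B ≤ 2 * volume C := by
  have sum_subset : A + B ⊆ (2 : ℝ) • C := by
    rintro _ ⟨x, hx, y, hy, rfl⟩
    exact ⟨(x + y) / 2, h x hx y hy, by simp only [smul_eq_mul]; ring⟩
  calc volume A + volume B ≤ volume (A + B) := volume_add_volume_le hA hB hA₀ hB₀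
    _ ≤ volume ((2 : ℝ) • C) := measure_mono sum_subset
    _ = 2 * volume C := by simp [Measure.addHaar_smul]

lemma lintegral_min_one_eq_lintegral_measure_lt {α : Type*} [MeasurableSpace α] (μ : Measure α)
    {f : α → ℝ≥0∞} (hf : Measurable f) :
    ∫⁻ x, min (f x) 1 ∂μ = ∫⁻ s in Set.Ioo (0 : ℝ) 1, μ {x | ENNReal.ofReal s < f x} := by
  have min_ne_top (x : α) : min (f x) 1 ≠ ∞ := by simp
  have superlevel {s : ℝ} (hs : 0 < s) :
      {x | s < (min (f x) 1).toReal} = {x | ENNReal.ofReal s < f x ∧ s < 1} := by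
    ext x
    simp [← ENNReal.ofReal_lt_iff_lt_toReal hs.le (min_ne_top x)]
  calc ∫⁻ x, min (f x) 1 ∂μ = ∫⁻ x, ENNReal.ofReal (min (f x) 1).toReal ∂μ := by
        simp only [ENNReal.ofReal_toReal (min_ne_top _)]
    _ = ∫⁻ s in Set.Ioi (0 : ℝ), μ {x | s < (min (f x) 1).toReal} :=
        lintegral_eq_lintegral_meas_lt μ (.of_forall fun _ ↦ ENNReal.toReal_nonneg)
          (hf.min measurable_const).ennreal_toReal.aemeasurable
    _ = ∫⁻ s in Set.Ioi (0 : ℝ),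
          (Set.Iio (1 : ℝ)).indicator (fun s ↦ μ {x | ENNReal.ofReal s < f x}) s := by
        refine setLIntegral_congr_fun measurableSet_Ioi fun s hs ↦ ?_
        by_cases hs₁ : s < 1 <;> simp [superlevel hs, hs₁]
    _ = ∫⁻ s in Set.Ioo (0 : ℝ) 1, μ {x | ENNReal.ofReal s < f x} := by
        rw [setLIntegral_indicator measurableSet_Iio, Set.Iio_inter_Ioi]

lemma lintegral_add_lintegral_le_of_iSup_eq_one {f g h : ℝ → ℝ≥0∞} (hf : Measurable f)
    (hg : Measurable g) (hh : Measurable h) (hf₁ : ⨆ x, f x = 1) (hg₁ : ⨆ x, g x = 1)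
    (hfgh : ∀ x y, f x * g y ≤ h ((x + y) / 2) ^ 2) :
    (∫⁻ x, f x) + ∫⁻ x, g x ≤ 2 * ∫⁻ x, h x := by
  have f_eq : ∫⁻ x, f x = ∫⁻ x, min (f x) 1 :=
    lintegral_congr fun x ↦ (min_eq_left (hf₁ ▸ le_iSup f x)).symm
  have g_eq : ∫⁻ x, g x = ∫⁻ x, min (g x) 1 :=
    lintegral_congr fun x ↦ (min_eq_left (hg₁ ▸ le_iSup g x)).symm
  have superlevel_measurable : Measurable fun s : ℝ ↦ volume {x | ENNReal.ofReal s < f x} :=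
    Antitone.measurable fun s t hst ↦
      measure_mono fun x hx ↦ (ENNReal.ofReal_le_ofReal hst).trans_lt hx
  calc (∫⁻ x, f x) + ∫⁻ x, g x
      = ∫⁻ s in Set.Ioo (0 : ℝ) 1,
          (volume {x | ENNReal.ofReal s < f x} + volume {x | ENNReal.ofReal s < g x}) := by
        rw [f_eq, g_eq, lintegral_min_one_eq_lintegral_measure_lt _ hf,
          lintegral_min_one_eq_lintegral_measure_lt _ hg, lintegral_add_left superlevel_measurable]
    _ ≤ ∫⁻ s in Set.Ioo (0 : ℝ) 1, 2 * volume {x | ENNReal.ofReal s < h x} := by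
        refine setLIntegral_mono' measurableSet_Ioo fun s hs ↦ ?_
        have s_lt_one : ENNReal.ofReal s < 1 := by simpa using hs.2
        refine volume_add_volume_le_two_mul_of_midpoint_mem (measurableSet_lt measurable_const hf)
          (measurableSet_lt measurable_const hg) (lt_iSup_iff.1 (s_lt_one.trans_eq hf₁.symm))
          (lt_iSup_iff.1 (s_lt_one.trans_eq hg₁.symm)) fun x hx y hy ↦ ?_
        rw [Set.mem_ofPred_eq, ← (ENNReal.pow_right_strictMono two_ne_zero).lt_iff_lt, sq]
        exact (ENNReal.mul_lt_mul hx hy).trans_le (hfgh x y)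
    _ = 2 * ∫⁻ x, min (h x) 1 := by
        rw [lintegral_const_mul' _ _ (by simp), lintegral_min_one_eq_lintegral_measure_lt _ hh]
    _ ≤ 2 * ∫⁻ x, h x := by
        gcongr
        exact min_le_left _ _

lemma mul_le_sq_of_add_le_two_mul {x y z : ℝ≥0∞} (h : x + y ≤ 2 * z) : x * y ≤ z ^ 2 := by
  rcases eq_or_ne z ∞ with rfl | hz
  · simp
  obtain ⟨hx, hy⟩ : x ≠ ∞ ∧ y ≠ ∞ :=
    ENNReal.add_ne_top.1 (ne_top_of_le_ne_top (ENNReal.mul_ne_top (by simp) hz) h)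
  lift x to NNReal using hx
  lift y to NNReal using hy
  lift z to NNReal using hz
  norm_cast at h ⊢
  calc x * y ≤ ((x + y) / 2) ^ 2 := by
        rw [← NNReal.coe_le_coe]
        push_cast
        nlinarith [sq_nonneg ((x : ℝ) - y)]
    _ ≤ z ^ 2 := by
        gcongr
        exact (div_le_iff₀' two_pos).2 h

lemma lintegral_mul_lintegral_le_sq_of_iSup_ne_top {f g h : ℝ → ℝ≥0∞} (hf : Measurable f)
    (hg : Measurable g) (hh : Measurable h) (hf_top : ⨆ x, f x ≠ ∞) (hg_top : ⨆ x, g x ≠ ∞)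
    (hfgh : ∀ x y, f x * g y ≤ h ((x + y) / 2) ^ 2) :
    (∫⁻ x, f x) * ∫⁻ x, g x ≤ (∫⁻ x, h x) ^ 2 := by
  set a := ⨆ x, f x
  set b := ⨆ x, g x
  rcases eq_or_ne a 0 with ha₀ | ha₀
  · simp [ENNReal.iSup_eq_zero.1 ha₀]
  rcases eq_or_ne b 0 with hb₀ | hb₀
  · simp [ENNReal.iSup_eq_zero.1 hb₀]
  set c : ℝ≥0∞ := (a * b) ^ (1 / 2 : ℝ) with hc
  have c_sq : c ^ 2 = a * b := by
    rw [hc, ← ENNReal.rpow_natCast, ← ENNReal.rpow_mul]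
    norm_num
  have c_inv_sq : c⁻¹ ^ 2 = a⁻¹ * b⁻¹ := by
    rw [← ENNReal.inv_pow, c_sq, ENNReal.mul_inv (.inl ha₀) (.inl hf_top)]
  have normalized : (∫⁻ x, a⁻¹ * f x) + ∫⁻ x, b⁻¹ * g x ≤ 2 * ∫⁻ x, c⁻¹ * h x := by
    refine lintegral_add_lintegral_le_of_iSup_eq_one (hf.const_mul _) (hg.const_mul _)
      (hh.const_mul _) ?_ ?_ fun x y ↦ ?_
    · rw [← ENNReal.mul_iSup, ENNReal.inv_mul_cancel ha₀ hf_top]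
    · rw [← ENNReal.mul_iSup, ENNReal.inv_mul_cancel hb₀ hg_top]
    · calc a⁻¹ * f x * (b⁻¹ * g y) = a⁻¹ * b⁻¹ * (f x * g y) := by ring
        _ ≤ c⁻¹ ^ 2 * h ((x + y) / 2) ^ 2 := by
          rw [c_inv_sq]
          gcongr
          exact hfgh x y
        _ = (c⁻¹ * h ((x + y) / 2)) ^ 2 := (mul_pow _ _ _).symm
  have scaled := mul_le_sq_of_add_le_two_mul normalized
  rw [lintegral_const_mul _ hf, lintegral_const_mul _ hg, lintegral_const_mul _ hh, mul_pow,
    c_inv_sq, mul_mul_mul_comm] at scaled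
  have ab_ne_zero : a⁻¹ * b⁻¹ ≠ 0 :=
    mul_ne_zero (ENNReal.inv_ne_zero.2 hf_top) (ENNReal.inv_ne_zero.2 hg_top)
  have ab_ne_top : a⁻¹ * b⁻¹ ≠ ∞ :=
    ENNReal.mul_ne_top (ENNReal.inv_ne_top.2 ha₀) (ENNReal.inv_ne_top.2 hb₀)
  exact (ENNReal.mul_le_mul_iff_right ab_ne_zero ab_ne_top).1 scaled

lemma lintegral_eq_iSup_lintegral_min_natCast {α : Type*} [MeasurableSpace α] {μ : Measure α}
    {f : α → ℝ≥0∞} (hf : Measurable f) : ∫⁻ x, f x ∂μ = ⨆ k : ℕ, ∫⁻ x, min (f x) k ∂μ := by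
  rw [← lintegral_iSup (fun k ↦ by fun_prop) fun i j hij x ↦ by dsimp; gcongr]
  refine lintegral_congr fun x ↦ ?_
  rw [← inf_iSup_eq, ENNReal.iSup_natCast, inf_top_eq]

theorem prekopa_leindler_midpoint_real {f g h : ℝ → ℝ≥0∞} (hf : Measurable f)
    (hg : Measurable g) (hh : Measurable h) (hfgh : ∀ x y, f x * g y ≤ h ((x + y) / 2) ^ 2) :
    (∫⁻ x, f x) * ∫⁻ x, g x ≤ (∫⁻ x, h x) ^ 2 := by
  have iSup_min_ne_top (u : ℝ → ℝ≥0∞) (k : ℕ) : ⨆ x, min (u x) k ≠ ∞ :=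
    ne_top_of_le_ne_top (ENNReal.natCast_ne_top k) (iSup_le fun _ ↦ min_le_right _ _)
  rw [lintegral_eq_iSup_lintegral_min_natCast hf, lintegral_eq_iSup_lintegral_min_natCast hg,
    ENNReal.iSup_mul]
  refine iSup_le fun i ↦ ?_
  rw [ENNReal.mul_iSup]
  refine iSup_le fun j ↦ ?_
  exact lintegral_mul_lintegral_le_sq_of_iSup_ne_top (by fun_prop) (by fun_prop) hh
    (iSup_min_ne_top f i) (iSup_min_ne_top g j)
    fun x y ↦ (mul_le_mul' (min_le_left _ _) (min_le_left _ _)).trans (hfgh x y)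

lemma measurable_fin_cons (N : ℕ) :
    Measurable fun z : ℝ × (Fin N → ℝ) ↦ (Fin.cons z.1 z.2 : Fin (N + 1) → ℝ) := by
  refine measurable_pi_iff.2 fun i ↦ ?_
  refine Fin.cases ?_ (fun i ↦ ?_) i <;> simp only [Fin.cons_zero, Fin.cons_succ] <;> fun_prop

lemma lintegral_fin_succ {N : ℕ} {f : (Fin (N + 1) → ℝ) → ℝ≥0∞} (hf : Measurable f) :
    ∫⁻ x, f x = ∫⁻ a : ℝ, ∫⁻ z : Fin N → ℝ, f (Fin.cons a z) := by
  rw [← (volume_preserving_piFinSuccAbove (fun _ ↦ ℝ) 0).symm.lintegral_comp hf,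
    Measure.volume_eq_prod, lintegral_prod]
  · simp [MeasurableEquiv.piFinSuccAbove, Fin.insertNthEquiv]
  · exact (hf.comp (MeasurableEquiv.measurable _)).aemeasurable

theorem prekopa_leindler_midpoint (N : ℕ) {f g h : (Fin N → ℝ) → ℝ≥0∞} (hf : Measurable f)
    (hg : Measurable g) (hh : Measurable h)
    (hfgh : ∀ x y, f x * g y ≤ h ((1 / 2 : ℝ) • (x + y)) ^ 2) :
    (∫⁻ x, f x) * ∫⁻ x, g x ≤ (∫⁻ x, h x) ^ 2 := by
  induction N with
  | zero =>
    rw [volume_pi, Measure.pi_of_empty _ 0]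
    simpa [lintegral_dirac] using hfgh 0 0
  | succ N ih =>
    have slice_measurable {u : (Fin (N + 1) → ℝ) → ℝ≥0∞} (hu : Measurable u) (a : ℝ) :
        Measurable fun z : Fin N → ℝ ↦ u (Fin.cons a z) :=
      (hu.comp (measurable_fin_cons N)).comp measurable_prodMk_left
    have marginal_measurable {u : (Fin (N + 1) → ℝ) → ℝ≥0∞} (hu : Measurable u) :
        Measurable fun a : ℝ ↦ ∫⁻ z : Fin N → ℝ, u (Fin.cons a z) :=
      Measurable.lintegral_prod_right (hu.comp (measurable_fin_cons N))
    rw [lintegral_fin_succ hf, lintegral_fin_succ hg, lintegral_fin_succ hh]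
    refine prekopa_leindler_midpoint_real (marginal_measurable hf) (marginal_measurable hg)
      (marginal_measurable hh) fun a b ↦ ?_
    refine ih (slice_measurable hf a) (slice_measurable hg b) (slice_measurable hh _) fun x y ↦ ?_
    refine (hfgh _ _).trans_eq ?_
    congr 2
    ext i
    refine Fin.cases ?_ (fun i ↦ ?_) i
    · simp only [Pi.smul_apply, Pi.add_apply, Fin.cons_zero, smul_eq_mul]
      ring
    · simp only [Pi.smul_apply, Pi.add_apply, Fin.cons_succ, smul_eq_mul]

theorem volume_mul_volume_le_sq_of_midpoint_mem {N : ℕ} {A B C : Set (EuclideanSpace ℝ (Fin N))}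
    (hA : MeasurableSet A) (hB : MeasurableSet B) (hC : MeasurableSet C)
    (h : ∀ x ∈ A, ∀ y ∈ B, (1 / 2 : ℝ) • (x + y) ∈ C) :
    volume A * volume B ≤ volume C ^ 2 := by
  have toLp_preserving := PiLp.volume_preserving_toLp (Fin N)
  have volume_eq {S : Set (EuclideanSpace ℝ (Fin N))} (hS : MeasurableSet S) :
      volume S = ∫⁻ x, (WithLp.toLp 2 ⁻¹' S).indicator 1 x := by
    rw [lintegral_indicator_one (toLp_preserving.measurable hS),
      toLp_preserving.measure_preimage hS.nullMeasurableSet]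
  rw [volume_eq hA, volume_eq hB, volume_eq hC]
  refine prekopa_leindler_midpoint N (measurable_one.indicator (toLp_preserving.measurable hA))
    (measurable_one.indicator (toLp_preserving.measurable hB))
    (measurable_one.indicator (toLp_preserving.measurable hC)) fun x y ↦ ?_
  by_cases hx : WithLp.toLp 2 x ∈ A
  · by_cases hy : WithLp.toLp 2 y ∈ B
    · have mid_mem : (1 / 2 : ℝ) • (x + y) ∈ WithLp.toLp 2 ⁻¹' C := h _ hx _ hy
      rw [Set.indicator_of_mem mid_mem]
      simp [hx, hy]
    · simp [Set.indicator, hy]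
  · simp [Set.indicator, hx]

end PrekopaLeindler

section PartialDerivatives

variable {n : ℕ} {F G : Euc n → ℝ} {x : Euc n}

/-- The partial derivative of `F` in the `i`-th coordinate direction; `0` where `F` is not
differentiable. -/
def pderiv (i : Fin (n + 1)) (F : Euc n → ℝ) (x : Euc n) : ℝ :=
  fderiv ℝ F x (EuclideanSpace.single i 1)

/-- Smoothness on `ℝ^{n+1} ∖ {0}`, the natural regularity of homogeneous extensions of smooth
functions on `S^n`. -/
def SmoothOffZero (F : Euc n → ℝ) : Prop := ContDiffOn ℝ (⊤ : ℕ∞) F {(0 : Euc n)}ᶜ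

lemma compl_zero_mem_nhds (hx : x ≠ 0) : {(0 : Euc n)}ᶜ ∈ nhds x :=
  isOpen_compl_singleton.mem_nhds hx

lemma SmoothOffZero.contDiffAt (hF : SmoothOffZero F) (hx : x ≠ 0) :
    ContDiffAt ℝ (⊤ : ℕ∞) F x :=
  ContDiffOn.contDiffAt hF (compl_zero_mem_nhds hx)

lemma SmoothOffZero.differentiableAt (hF : SmoothOffZero F) (hx : x ≠ 0) :
    DifferentiableAt ℝ F x :=
  (hF.contDiffAt hx).differentiableAt (by simp)

lemma SmoothOffZero.fderiv (hF : SmoothOffZero F) :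
    ContDiffOn ℝ (⊤ : ℕ∞) (fderiv ℝ F) {(0 : Euc n)}ᶜ :=
  ContDiffOn.fderiv_of_isOpen hF isOpen_compl_singleton (by simp)

lemma SmoothOffZero.pderiv (hF : SmoothOffZero F) (i : Fin (n + 1)) :
    SmoothOffZero (pderiv i F) :=
  hF.fderiv.clm_apply contDiffOn_const

lemma smoothOffZero_norm : SmoothOffZero fun x : Euc n ↦ ‖x‖ :=
  fun _ hx ↦ (contDiffAt_norm ℝ hx).contDiffWithinAt

lemma smoothOffZero_coord (i : Fin (n + 1)) : SmoothOffZero fun x : Euc n ↦ x i :=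
  (EuclideanSpace.proj (𝕜 := ℝ) i).contDiff.contDiffOn

lemma pderiv_congr (h : ∀ x ≠ 0, F x = G x) (i : Fin (n + 1)) (hx : x ≠ 0) :
    pderiv i F x = pderiv i G x := by
  rw [pderiv, pderiv, Filter.EventuallyEq.fderiv_eq]
  filter_upwards [compl_zero_mem_nhds hx] with y hy using h y hy

lemma pderiv_eq_of_hasFDerivAt {F' : Euc n →L[ℝ] ℝ} (h : HasFDerivAt F F' x) (i : Fin (n + 1)) :
    pderiv i F x = F' (EuclideanSpace.single i 1) := by
  rw [pderiv, h.fderiv]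

lemma pderiv_add (i : Fin (n + 1)) (hF : DifferentiableAt ℝ F x) (hG : DifferentiableAt ℝ G x) :
    pderiv i (fun y ↦ F y + G y) x = pderiv i F x + pderiv i G x :=
  pderiv_eq_of_hasFDerivAt (hF.hasFDerivAt.add hG.hasFDerivAt) i

lemma pderiv_sub (i : Fin (n + 1)) (hF : DifferentiableAt ℝ F x) (hG : DifferentiableAt ℝ G x) :
    pderiv i (fun y ↦ F y - G y) x = pderiv i F x - pderiv i G x :=
  pderiv_eq_of_hasFDerivAt (hF.hasFDerivAt.sub hG.hasFDerivAt) i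

lemma pderiv_mul (i : Fin (n + 1)) (hF : DifferentiableAt ℝ F x) (hG : DifferentiableAt ℝ G x) :
    pderiv i (fun y ↦ F y * G y) x = pderiv i F x * G x + F x * pderiv i G x := by
  refine (pderiv_eq_of_hasFDerivAt (hF.hasFDerivAt.mul hG.hasFDerivAt) i).trans ?_
  simp only [_root_.add_apply, _root_.smul_apply, smul_eq_mul, pderiv]
  ring

lemma pderiv_const (c : ℝ) (i : Fin (n + 1)) : pderiv i (fun _ ↦ c) x = 0 := by
  simp [pderiv]

lemma pderiv_const_mul (i : Fin (n + 1)) (c : ℝ) (hF : DifferentiableAt ℝ F x) :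
    pderiv i (fun y ↦ c * F y) x = c * pderiv i F x := by
  rw [pderiv_mul i (differentiableAt_const c) hF, pderiv_const, zero_mul, zero_add]

lemma pderiv_sum {ι : Type*} {s : Finset ι} {F : ι → Euc n → ℝ} (i : Fin (n + 1))
    (hF : ∀ j ∈ s, DifferentiableAt ℝ (F j) x) :
    pderiv i (fun y ↦ ∑ j ∈ s, F j y) x = ∑ j ∈ s, pderiv i (F j) x := by
  rw [pderiv_eq_of_hasFDerivAt (HasFDerivAt.fun_sum fun j hj ↦ (hF j hj).hasFDerivAt)]
  simp [pderiv]

lemma pderiv_rpow (i : Fin (n + 1)) (r : ℝ) (hF : DifferentiableAt ℝ F x) (hF₀ : F x ≠ 0) :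
    pderiv i (fun y ↦ F y ^ r) x = r * F x ^ (r - 1) * pderiv i F x := by
  rw [pderiv_eq_of_hasFDerivAt (hF.hasFDerivAt.rpow_const (.inl hF₀))]
  simp [pderiv]

lemma pderiv_inv (i : Fin (n + 1)) (hF : DifferentiableAt ℝ F x) (hF₀ : F x ≠ 0) :
    pderiv i (fun y ↦ (F y)⁻¹) x = -pderiv i F x / F x ^ 2 := by
  have inv_comp := (hasDerivAt_inv hF₀).comp_hasFDerivAt x hF.hasFDerivAt
  refine (pderiv_eq_of_hasFDerivAt inv_comp i).trans ?_
  simp only [_root_.smul_apply, smul_eq_mul, pderiv]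
  field_simp

lemma pderiv_div (i : Fin (n + 1)) (hF : DifferentiableAt ℝ F x) (hG : DifferentiableAt ℝ G x)
    (hG₀ : G x ≠ 0) :
    pderiv i (fun y ↦ F y / G y) x = (pderiv i F x * G x - F x * pderiv i G x) / G x ^ 2 := by
  simp only [div_eq_mul_inv (F _)]
  rw [pderiv_mul i hF (hG.fun_inv hG₀), pderiv_inv i hG hG₀]
  field_simp
  ring

lemma pderiv_coord (i j : Fin (n + 1)) :
    pderiv i (fun y : Euc n ↦ y j) x = if j = i then 1 else 0 := by
  refine (pderiv_eq_of_hasFDerivAt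
    (EuclideanSpace.proj (𝕜 := ℝ) j : Euc n →L[ℝ] ℝ).hasFDerivAt i).trans ?_
  simp

lemma pderiv_norm_sq (i : Fin (n + 1)) : pderiv i (fun y : Euc n ↦ ‖y‖ ^ 2) x = 2 * x i := by
  rw [pderiv, fderiv_norm_sq_apply]
  simp [EuclideanSpace.inner_single_right]

lemma pderiv_norm (i : Fin (n + 1)) (hx : x ≠ 0) :
    pderiv i (fun y : Euc n ↦ ‖y‖) x = x i / ‖x‖ := by
  have norm_differentiableAt := smoothOffZero_norm.differentiableAt hx
  have norm_sq := pderiv_norm_sq (x := x) i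
  simp only [sq] at norm_sq
  rw [pderiv_mul i norm_differentiableAt norm_differentiableAt] at norm_sq
  rw [eq_div_iff (norm_ne_zero_iff.2 hx)]
  linarith

lemma fderiv_apply_eq_sum_pderiv (F : Euc n → ℝ) (x v : Euc n) :
    fderiv ℝ F x v = ∑ i, v i * pderiv i F x := by
  have v_eq : v = ∑ i, v i • (EuclideanSpace.single i (1 : ℝ) : Euc n) := by
    ext j
    simp [Pi.single_apply]
  conv_lhs => rw [v_eq]
  simp [pderiv]

lemma SmoothOffZero.pderiv_comm (hF : SmoothOffZero F) (i j : Fin (n + 1)) (hx : x ≠ 0) :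
    _root_.pderiv i (_root_.pderiv j F) x = _root_.pderiv j (_root_.pderiv i F) x := by
  have symm_second : IsSymmSndFDerivAt ℝ F x := (hF.contDiffAt hx).isSymmSndFDerivAt (by
    rw [minSmoothness_of_isRCLikeNormedField]
    exact WithTop.coe_le_coe.2 le_top)
  have fderiv_differentiableAt : DifferentiableAt ℝ (_root_.fderiv ℝ F) x :=
    (hF.fderiv.contDiffAt (compl_zero_mem_nhds hx)).differentiableAt (by simp)
  have second_eq (a b : Fin (n + 1)) : _root_.pderiv a (_root_.pderiv b F) x =
      _root_.fderiv ℝ (_root_.fderiv ℝ F) x (EuclideanSpace.single a 1)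
        (EuclideanSpace.single b 1) := by
    refine (pderiv_eq_of_hasFDerivAt (fderiv_differentiableAt.hasFDerivAt.clm_apply
      (hasFDerivAt_const (EuclideanSpace.single b (1 : ℝ) : Euc n) x)) a).trans ?_
    simp
  rw [second_eq, second_eq, symm_second.eq]

end PartialDerivatives

section Homogeneity

variable {n : ℕ} {F G : Euc n → ℝ} {x : Euc n} {d e : ℤ}

/-- Positive homogeneity of degree `d` on `ℝ^{n+1} ∖ {0}`; the value at the origin is free. -/
def PosHomogeneous (d : ℤ) (F : Euc n → ℝ) : Prop :=
  ∀ c : ℝ, 0 < c → ∀ x : Euc n, x ≠ 0 → F (c • x) = c ^ d * F x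

lemma PosHomogeneous.pderiv (hF : PosHomogeneous d F) (i : Fin (n + 1)) :
    PosHomogeneous (d - 1) (pderiv i F) := by
  intro c hc x hx
  have fderiv_scaled : c • fderiv ℝ F (c • x) = c ^ d • fderiv ℝ F x := by
    calc c • fderiv ℝ F (c • x) = fderiv ℝ (fun y ↦ F (c • y)) x := (fderiv_comp_smul ..).symm
      _ = fderiv ℝ (c ^ d • F) x := by
          apply Filter.EventuallyEq.fderiv_eq
          filter_upwards [compl_zero_mem_nhds hx] with y hy using hF c hc y hy
      _ = c ^ d • fderiv ℝ F x := by rw [fderiv_const_smul_field]; rfl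
  have pderiv_scaled : c * _root_.pderiv i F (c • x) = c ^ d * _root_.pderiv i F x :=
    congrArg (fun L : Euc n →L[ℝ] ℝ ↦ L (EuclideanSpace.single i 1)) fderiv_scaled
  rw [zpow_sub_one₀ hc.ne', mul_right_comm, ← pderiv_scaled]
  field_simp

lemma PosHomogeneous.mul (hF : PosHomogeneous d F) (hG : PosHomogeneous e G) :
    PosHomogeneous (d + e) fun x ↦ F x * G x := by
  intro c hc x hx
  simp only [hF c hc x hx, hG c hc x hx, zpow_add₀ hc.ne']
  ring

lemma posHomogeneous_norm : PosHomogeneous 1 fun x : Euc n ↦ ‖x‖ := by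
  intro c hc x _
  simp [norm_smul, abs_of_pos hc]

theorem PosHomogeneous.euler (hF : PosHomogeneous d F) (hFx : DifferentiableAt ℝ F x)
    (hx : x ≠ 0) : ∑ i, x i * _root_.pderiv i F x = d * F x := by
  have along_ray : HasDerivAt (fun t : ℝ ↦ F (t • x)) (fderiv ℝ F x x) 1 := by
    have ray : HasDerivAt (fun t : ℝ ↦ t • x) x 1 := by
      simpa using (hasDerivAt_id (1 : ℝ)).smul_const x
    have F_at : HasFDerivAt F (fderiv ℝ F x) ((1 : ℝ) • x) := by simpa using hFx.hasFDerivAt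
    exact F_at.comp_hasDerivAt 1 ray
  have power : HasDerivAt (fun t : ℝ ↦ t ^ d * F x) (d * F x) 1 := by
    simpa using (hasDerivAt_zpow d 1 (by simp)).mul_const (F x)
  rw [← fderiv_apply_eq_sum_pderiv]
  refine along_ray.unique (power.congr_of_eventuallyEq ?_)
  filter_upwards [lt_mem_nhds one_pos] with t ht using hF t ht x hx

end Homogeneity

section ShellIntegral

variable {n : ℕ} {F G : Euc n → ℝ} {x : Euc n}

/-- The profile of the radial cutoff `shellBump`, a bump centred at `2` and supported in
`(1, 3)`. -/
def shellProfile : ContDiffBump (2 : ℝ) := ⟨1 / 2, 1, by norm_num, by norm_num⟩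

/-- A radial cutoff, positive exactly on the shell `1 < ‖x‖² < 3`. -/
def shellBump (x : Euc n) : ℝ := shellProfile (‖x‖ ^ 2)

/-- A closed annulus that contains the support of `shellBump`. -/
def shell (n : ℕ) : Set (Euc n) := {x | 1 ≤ ‖x‖ ∧ ‖x‖ ≤ 2}

/-- Integration against `shellBump`.  On functions homogeneous of degree `0` it is a constant
multiple of integration over `S^n`, and it turns integration by parts on the sphere into
integration by parts in `ℝ^{n+1}`. -/
def shellIntegral (F : Euc n → ℝ) : ℝ := ∫ x, shellBump x * F x

lemma contDiff_shellBump : ContDiff ℝ (⊤ : ℕ∞) (shellBump : Euc n → ℝ) :=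
  shellProfile.contDiff.comp (contDiff_norm_sq ℝ)

lemma shellBump_nonneg (x : Euc n) : 0 ≤ shellBump x := shellProfile.nonneg

lemma shellBump_ne_zero_iff : shellBump x ≠ 0 ↔ 1 < ‖x‖ ^ 2 ∧ ‖x‖ ^ 2 < 3 := by
  have rOut_eq : shellProfile.rOut = 1 := rfl
  rw [shellBump, ← Function.mem_support, shellProfile.support_eq, rOut_eq, mem_ball, Real.dist_eq,
    abs_lt]
  constructor <;> rintro ⟨hl, hr⟩ <;> constructor <;> linarith

lemma isCompact_shell : IsCompact (shell n) := by
  refine isCompact_of_isClosed_isBounded ?_ ?_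
  · exact (isClosed_le continuous_const continuous_norm).inter
      (isClosed_le continuous_norm continuous_const)
  · exact isBounded_closedBall.subset fun x hx ↦ mem_closedBall_zero_iff.2 hx.2

lemma ne_zero_of_mem_shell (hx : x ∈ shell n) : x ≠ 0 :=
  norm_pos_iff.1 (one_pos.trans_le hx.1)

lemma shellBump_eq_zero_of_notMem_shell (hx : x ∉ shell n) : shellBump x = 0 := by
  by_contra h
  obtain ⟨hl, hr⟩ := shellBump_ne_zero_iff.1 h
  exact hx ⟨by nlinarith [norm_nonneg x], by nlinarith [norm_nonneg x]⟩

lemma shellBump_eventually_eq_zero : ∀ᶠ y in nhds (0 : Euc n), shellBump y = 0 := by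
  filter_upwards [ball_mem_nhds (0 : Euc n) one_pos] with y hy
  exact shellBump_eq_zero_of_notMem_shell fun h ↦ (mem_ball_zero_iff.1 hy).not_ge h.1

lemma shellBump_zero : shellBump (0 : Euc n) = 0 := shellBump_eventually_eq_zero.self_of_nhds

lemma shellBump_mul_eventuallyEq_zero (F : Euc n → ℝ) :
    (fun y ↦ shellBump y * F y) =ᶠ[nhds 0] fun _ ↦ 0 := by
  filter_upwards [shellBump_eventually_eq_zero] with y hy
  rw [hy, zero_mul]

lemma hasCompactSupport_shellBump_mul (F : Euc n → ℝ) :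
    HasCompactSupport fun x ↦ shellBump x * F x :=
  HasCompactSupport.intro isCompact_shell fun x hx ↦ by
    rw [shellBump_eq_zero_of_notMem_shell hx, zero_mul]

lemma continuous_shellBump_mul (hF : ContinuousOn F {(0 : Euc n)}ᶜ) :
    Continuous fun x ↦ shellBump x * F x := by
  rw [continuous_iff_continuousAt]
  intro x
  rcases eq_or_ne x 0 with rfl | hx
  · exact continuousAt_const.congr (shellBump_mul_eventuallyEq_zero F).symm
  · exact contDiff_shellBump.continuous.continuousAt.mul (hF.continuousAt (compl_zero_mem_nhds hx))

lemma SmoothOffZero.contDiff_shellBump_mul (hF : SmoothOffZero F) :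
    ContDiff ℝ (⊤ : ℕ∞) fun x ↦ shellBump x * F x := by
  rw [contDiff_iff_contDiffAt]
  intro x
  rcases eq_or_ne x 0 with rfl | hx
  · exact contDiffAt_const.congr_of_eventuallyEq (shellBump_mul_eventuallyEq_zero F)
  · exact contDiff_shellBump.contDiffAt.mul (hF.contDiffAt hx)

lemma integrable_shellBump_mul (hF : ContinuousOn F {(0 : Euc n)}ᶜ) :
    Integrable fun x ↦ shellBump x * F x :=
  (continuous_shellBump_mul hF).integrable_of_hasCompactSupport (hasCompactSupport_shellBump_mul F)

lemma shellBump_mul_nonneg (hF : ∀ x ≠ 0, 0 ≤ F x) (x : Euc n) : 0 ≤ shellBump x * F x := by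
  rcases eq_or_ne x 0 with rfl | hx
  · simp [shellBump_zero]
  · exact mul_nonneg (shellBump_nonneg x) (hF x hx)

lemma shellIntegral_congr (h : ∀ x ≠ 0, F x = G x) : shellIntegral F = shellIntegral G := by
  refine integral_congr_ae (.of_forall fun x ↦ ?_)
  rcases eq_or_ne x 0 with rfl | hx
  · simp [shellBump_zero]
  · simp only [h x hx]

lemma shellIntegral_add (hF : ContinuousOn F {(0 : Euc n)}ᶜ) (hG : ContinuousOn G {(0 : Euc n)}ᶜ) :
    shellIntegral (fun x ↦ F x + G x) = shellIntegral F + shellIntegral G := by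
  simp only [shellIntegral, mul_add]
  exact integral_add (integrable_shellBump_mul hF) (integrable_shellBump_mul hG)

lemma shellIntegral_sub (hF : ContinuousOn F {(0 : Euc n)}ᶜ) (hG : ContinuousOn G {(0 : Euc n)}ᶜ) :
    shellIntegral (fun x ↦ F x - G x) = shellIntegral F - shellIntegral G := by
  simp only [shellIntegral, mul_sub]
  exact integral_sub (integrable_shellBump_mul hF) (integrable_shellBump_mul hG)

lemma shellIntegral_const_mul (c : ℝ) (F : Euc n → ℝ) :
    shellIntegral (fun x ↦ c * F x) = c * shellIntegral F := by
  simp only [shellIntegral, mul_left_comm _ c, integral_const_mul]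

lemma shellIntegral_sum {ι : Type*} {s : Finset ι} {F : ι → Euc n → ℝ}
    (hF : ∀ i ∈ s, ContinuousOn (F i) {(0 : Euc n)}ᶜ) :
    shellIntegral (fun x ↦ ∑ i ∈ s, F i x) = ∑ i ∈ s, shellIntegral (F i) := by
  simp only [shellIntegral, Finset.mul_sum]
  exact integral_finsetSum _ fun i hi ↦ integrable_shellBump_mul (hF i hi)

lemma shellIntegral_nonneg (hF : ∀ x ≠ 0, 0 ≤ F x) : 0 ≤ shellIntegral F :=
  integral_nonneg (shellBump_mul_nonneg hF)

lemma shellIntegral_mono (hF : ContinuousOn F {(0 : Euc n)}ᶜ)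
    (hG : ContinuousOn G {(0 : Euc n)}ᶜ) (h : ∀ x ≠ 0, F x ≤ G x) :
    shellIntegral F ≤ shellIntegral G := by
  rw [← sub_nonneg, ← shellIntegral_sub hG hF]
  exact shellIntegral_nonneg fun x hx ↦ sub_nonneg.2 (h x hx)

lemma eq_zero_of_shellIntegral_nonpos (hF : ContinuousOn F {(0 : Euc n)}ᶜ)
    (hF₀ : ∀ x ≠ 0, 0 ≤ F x) (hint : shellIntegral F ≤ 0) (hx : shellBump x ≠ 0) : F x = 0 := by
  by_contra hFx
  have := (continuous_shellBump_mul hF).integral_pos_of_hasCompactSupport_nonneg_nonzero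
    (μ := volume) (hasCompactSupport_shellBump_mul F) (shellBump_mul_nonneg hF₀)
    (mul_ne_zero hx hFx)
  exact hint.not_gt this

lemma exists_shellBump_ne_zero (n : ℕ) : ∃ x : Euc n, x ≠ 0 ∧ shellBump x ≠ 0 := by
  have norm_sq : ‖(EuclideanSpace.single 0 √2 : Euc n)‖ ^ 2 = 2 := by simp
  refine ⟨EuclideanSpace.single 0 √2, by simp, shellBump_ne_zero_iff.2 ?_⟩
  rw [norm_sq]
  norm_num

lemma shellIntegral_pos (hF : ContinuousOn F {(0 : Euc n)}ᶜ) (hF₀ : ∀ x ≠ 0, 0 < F x) :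
    0 < shellIntegral F := by
  obtain ⟨x, hx, hbump⟩ := exists_shellBump_ne_zero n
  by_contra! hint
  exact (hF₀ x hx).ne'
    (eq_zero_of_shellIntegral_nonpos hF (fun y hy ↦ (hF₀ y hy).le) hint hbump)

lemma SmoothOffZero.integrable_pderiv_shellBump_mul (hF : SmoothOffZero F) (i : Fin (n + 1)) :
    Integrable (_root_.pderiv i fun y ↦ shellBump y * F y) := by
  refine Continuous.integrable_of_hasCompactSupport ?_ ?_
  · exact (hF.contDiff_shellBump_mul.continuous_fderiv (by simp)).clm_apply continuous_const
  · exact ((hasCompactSupport_shellBump_mul F).fderiv (𝕜 := ℝ)).comp_left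
      (g := fun L : Euc n →L[ℝ] ℝ ↦ L (EuclideanSpace.single i 1)) (by simp)

lemma SmoothOffZero.integral_pderiv_shellBump_mul (hF : SmoothOffZero F) (i : Fin (n + 1)) :
    ∫ x, _root_.pderiv i (fun y ↦ shellBump y * F y) x = 0 := by
  have by_parts := integral_mul_fderiv_eq_neg_fderiv_mul_of_integrable
    (μ := (volume : Measure (Euc n))) (f := fun y ↦ shellBump y * F y) (g := fun _ ↦ (1 : ℝ))
    (v := EuclideanSpace.single i 1)
    (by simp only [mul_one]; exact hF.integrable_pderiv_shellBump_mul i) (by simp)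
    (by simpa using integrable_shellBump_mul hF.continuousOn)
    (fun x _ ↦ hF.contDiff_shellBump_mul.contDiffAt.differentiableAt (by simp))
    (fun x _ ↦ differentiableAt_const _)
  simp only [fderiv_fun_const, Pi.zero_apply, _root_.zero_apply, mul_zero, integral_zero,
    mul_one] at by_parts
  exact neg_eq_zero.1 by_parts.symm

lemma pderiv_shellBump (i : Fin (n + 1)) (x : Euc n) :
    pderiv i shellBump x = deriv shellProfile (‖x‖ ^ 2) * (2 * x i) := by
  have profile_deriv : HasDerivAt shellProfile (deriv shellProfile (‖x‖ ^ 2)) (‖x‖ ^ 2) :=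
    ((shellProfile.contDiff (n := 1)).differentiable (by simp) _).hasDerivAt
  have norm_sq_differentiable : DifferentiableAt ℝ (fun y : Euc n ↦ ‖y‖ ^ 2) x :=
    (contDiff_norm_sq ℝ (n := 1)).differentiable (by simp) x
  refine (pderiv_eq_of_hasFDerivAt
    (profile_deriv.comp_hasFDerivAt x norm_sq_differentiable.hasFDerivAt) i).trans ?_
  rw [_root_.smul_apply, smul_eq_mul, ← pderiv, pderiv_norm_sq]

-- The radial derivative of the cutoff pairs to zero with a tangential field.
theorem shellIntegral_divergence_eq_zero {Y : Fin (n + 1) → Euc n → ℝ}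
    (hY : ∀ i, SmoothOffZero (Y i)) (htangent : ∀ x ≠ 0, ∑ i, x i * Y i x = 0) :
    shellIntegral (fun x ↦ ∑ i, pderiv i (Y i) x) = 0 := by
  have divergence_eq (x : Euc n) : ∑ i, pderiv i (fun y ↦ shellBump y * Y i y) x =
      shellBump x * ∑ i, pderiv i (Y i) x := by
    rcases eq_or_ne x 0 with rfl | hx
    · rw [shellBump_zero, zero_mul]
      refine Finset.sum_eq_zero fun i _ ↦ ?_
      rw [pderiv, (shellBump_mul_eventuallyEq_zero (Y i)).fderiv_eq]
      simp
    · have product_rule (i : Fin (n + 1)) : pderiv i (fun y ↦ shellBump y * Y i y) x =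
          deriv shellProfile (‖x‖ ^ 2) * 2 * (x i * Y i x) + shellBump x * pderiv i (Y i) x := by
        rw [pderiv_mul i (contDiff_shellBump.contDiffAt.differentiableAt (by simp))
          ((hY i).differentiableAt hx), pderiv_shellBump]
        ring
      simp only [product_rule, Finset.sum_add_distrib, ← Finset.mul_sum, htangent x hx, mul_zero,
        zero_add]
  calc shellIntegral (fun x ↦ ∑ i, pderiv i (Y i) x)
      = ∫ x, ∑ i, pderiv i (fun y ↦ shellBump y * Y i y) x := by
        simp only [shellIntegral, divergence_eq]
    _ = ∑ i, ∫ x, pderiv i (fun y ↦ shellBump y * Y i y) x :=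
        integral_finsetSum _ fun i _ ↦ (hY i).integrable_pderiv_shellBump_mul i
    _ = 0 := Finset.sum_eq_zero fun i _ ↦ (hY i).integral_pderiv_shellBump_mul i

end ShellIntegral

section Determinants

variable {ι : Type*} [DecidableEq ι] {n : ℕ}

lemma smoothOffZero_updateRow_const {A : Euc n → Matrix ι ι ℝ}
    (h : ∀ i j, SmoothOffZero fun y ↦ A y i j) (l : ι) (b : ι → ℝ) (i j : ι) :
    SmoothOffZero fun y ↦ (A y).updateRow l b i j := by
  rcases eq_or_ne i l with rfl | hi
  · simp only [Matrix.updateRow_self]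
    exact contDiffOn_const
  · simpa only [Matrix.updateRow_ne hi] using h i j

variable [Fintype ι]

lemma det_updateCol_eq_sum_adjugate_mul (A : Matrix ι ι ℝ) (k : ι) (b : ι → ℝ) :
    (A.updateCol k b).det = ∑ i, A.adjugate k i * b i := by
  rw [← Matrix.cramer_apply, Matrix.cramer_eq_adjugate_mulVec, Matrix.mulVec, dotProduct]

lemma sum_adjugate_mul_eq_sum_perm (A : Matrix ι ι ℝ) (k : ι) (b : ι → ℝ) :
    ∑ i, A.adjugate k i * b i = ∑ σ : Equiv.Perm ι, ((Equiv.Perm.sign σ : ℤ) : ℝ) *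
      ((∏ j ∈ Finset.univ.erase k, A (σ j) j) * b (σ k)) := by
  rw [← det_updateCol_eq_sum_adjugate_mul, Matrix.det_apply']
  refine Finset.sum_congr rfl fun σ _ ↦ congrArg _ ?_
  rw [← Finset.prod_erase_mul Finset.univ _ (Finset.mem_univ k), Matrix.updateCol_self]
  refine congrArg (· * _) (Finset.prod_congr rfl fun j hj ↦ ?_)
  rw [Matrix.updateCol_ne (Finset.ne_of_mem_erase hj)]

/-- Jacobi's formula. -/
theorem hasFDerivAt_det {E : Type*} [NormedAddCommGroup E] [NormedSpace ℝ E]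
    {A : E → Matrix ι ι ℝ} {A' : ι → ι → E →L[ℝ] ℝ} {x : E}
    (h : ∀ i j, HasFDerivAt (fun y ↦ A y i j) (A' i j) x) :
    HasFDerivAt (fun y ↦ (A y).det) (∑ k, ∑ i, (A x).adjugate k i • A' i k) x := by
  have leibniz : HasFDerivAt
      (fun y ↦ ∑ σ : Equiv.Perm ι, ((Equiv.Perm.sign σ : ℤ) : ℝ) * ∏ i, A y (σ i) i)
      (∑ σ : Equiv.Perm ι, ((Equiv.Perm.sign σ : ℤ) : ℝ) •
        ∑ k, (∏ j ∈ Finset.univ.erase k, A x (σ j) j) • A' (σ k) k) x :=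
    HasFDerivAt.fun_sum fun σ _ ↦
      (HasFDerivAt.finsetProd fun i _ ↦ h (σ i) i).const_mul _
  simp only [Matrix.det_apply']
  refine leibniz.congr_fderiv ?_
  ext v
  simp only [_root_.sum_apply, _root_.smul_apply, smul_eq_mul,
    sum_adjugate_mul_eq_sum_perm (A x) _ fun i ↦ A' i _ v]
  rw [Finset.sum_comm]
  simp only [Finset.mul_sum]

lemma det_updateRow_updateRow_swap (A : Matrix ι ι ℝ) {i k : ι} (hik : i ≠ k) (u v : ι → ℝ) :
    ((A.updateRow i u).updateRow k v).det = -((A.updateRow i v).updateRow k u).det := by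
  have swap : (A.updateRow i v).updateRow k u =
      ((A.updateRow i u).updateRow k v).submatrix (Equiv.swap i k) id := by
    ext a b
    rcases eq_or_ne a k with rfl | hk
    · simp [Matrix.updateRow_ne hik]
    rcases eq_or_ne a i with rfl | hi
    · simp [Matrix.updateRow_ne hik]
    · simp [Equiv.swap_apply_of_ne_of_ne hi hk, Matrix.updateRow_ne hk, Matrix.updateRow_ne hi]
  rw [swap, Matrix.det_permute, Equiv.Perm.sign_swap hik]
  simp

variable {A : Euc n → Matrix ι ι ℝ} {x : Euc n}

lemma pderiv_det (h : ∀ i j, DifferentiableAt ℝ (fun y ↦ A y i j) x) (l : Fin (n + 1)) :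
    pderiv l (fun y ↦ (A y).det) x =
      ∑ k, ∑ i, (A x).adjugate k i * pderiv l (fun y ↦ A y i k) x := by
  rw [pderiv_eq_of_hasFDerivAt (hasFDerivAt_det fun i j ↦ (h i j).hasFDerivAt)]
  simp [pderiv]

lemma smoothOffZero_det (h : ∀ i j, SmoothOffZero fun y ↦ A y i j) :
    SmoothOffZero fun y ↦ (A y).det := by
  simp only [Matrix.det_apply']
  exact ContDiffOn.sum fun σ _ ↦ contDiffOn_const.mul (contDiffOn_prod fun i _ ↦ h (σ i) i)

lemma smoothOffZero_adjugate (h : ∀ i j, SmoothOffZero fun y ↦ A y i j) (k l : ι) :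
    SmoothOffZero fun y ↦ (A y).adjugate k l := by
  simp only [Matrix.adjugate_apply]
  exact smoothOffZero_det (smoothOffZero_updateRow_const h l _)

lemma pderiv_adjugate (h : ∀ i j, SmoothOffZero fun y ↦ A y i j) (i j : ι) (m : Fin (n + 1))
    (hx : x ≠ 0) :
    pderiv m (fun y ↦ (A y).adjugate j i) x = ∑ k ∈ Finset.univ.erase i, ∑ l,
      (((A x).updateRow i (Pi.single j 1)).updateRow k (Pi.single l 1)).det
        * pderiv m (fun y ↦ A y k l) x := by
  simp only [Matrix.adjugate_apply]
  rw [pderiv_det fun a b ↦ (smoothOffZero_updateRow_const h i _ a b).differentiableAt hx,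
    Finset.sum_comm, ← Finset.add_sum_erase Finset.univ _ (Finset.mem_univ i)]
  simp only [Matrix.updateRow_self, pderiv_const, mul_zero, Finset.sum_const_zero, zero_add]
  refine Finset.sum_congr rfl fun k hk ↦ Finset.sum_congr rfl fun l _ ↦ ?_
  rw [← Matrix.adjugate_apply]
  simp only [Matrix.updateRow_ne (Finset.ne_of_mem_erase hk)]

/-- The Piola identity. -/
theorem sum_pderiv_adjugate_jacobian_eq_zero {T : Fin (n + 1) → Euc n → ℝ}
    (hT : ∀ i, SmoothOffZero (T i)) (i : Fin (n + 1)) (hx : x ≠ 0) :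
    ∑ j, pderiv j (fun y ↦ (Matrix.of fun k l ↦ pderiv l (T k) y :
      Matrix (Fin (n + 1)) (Fin (n + 1)) ℝ).adjugate j i) x = 0 := by
  have entries (k l : Fin (n + 1)) : SmoothOffZero fun y ↦
      (Matrix.of fun k l ↦ pderiv l (T k) y : Matrix (Fin (n + 1)) (Fin (n + 1)) ℝ) k l :=
    (hT k).pderiv l
  simp only [pderiv_adjugate entries i _ _ hx, Matrix.of_apply]
  rw [Finset.sum_comm]
  refine Finset.sum_eq_zero fun k hk ↦ self_eq_neg.1 ?_
  conv_lhs => rw [Finset.sum_comm]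
  simp only [← Finset.sum_neg_distrib]
  refine Finset.sum_congr rfl fun j _ ↦ Finset.sum_congr rfl fun l _ ↦ ?_
  rw [det_updateRow_updateRow_swap _ (Finset.ne_of_mem_erase hk).symm,
    (hT k).pderiv_comm l j hx, neg_mul]

end Determinants

section ConeMap

variable {n : ℕ} {H f : Euc n → ℝ} {x : Euc n}

lemma gradient_apply (H : Euc n → ℝ) (x : Euc n) (i : Fin (n + 1)) :
    gradient H x i = pderiv i H x := by
  rw [pderiv, ← inner_gradient_left, EuclideanSpace.inner_single_right]
  simp

/-- The map `x ↦ ‖x‖ ∇H(x)`. For a support function `H` it is the `1`-homogeneous extension of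
the inverse Gauss map, and it sends the unit ball onto the convex body. -/
def coneMap (H : Euc n → ℝ) (x : Euc n) : Euc n := ‖x‖ • gradient H x

lemma coneMap_apply (H : Euc n → ℝ) (x : Euc n) (i : Fin (n + 1)) :
    coneMap H x i = ‖x‖ * pderiv i H x := by
  rw [coneMap, PiLp.smul_apply, gradient_apply, smul_eq_mul]

/-- The Jacobian matrix of `coneMap H`. -/
def coneJacobian (H : Euc n → ℝ) (x : Euc n) : Matrix (Fin (n + 1)) (Fin (n + 1)) ℝ :=
  Matrix.of fun i j ↦ pderiv j (fun y ↦ coneMap H y i) x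

/-- The Jacobian determinant of `coneMap H`; on the unit sphere it is the density `h σ_n` of the
cone-volume measure. -/
def coneDensity (H : Euc n → ℝ) (x : Euc n) : ℝ := (coneJacobian H x).det

lemma smoothOffZero_coneMap (hH : SmoothOffZero H) (i : Fin (n + 1)) :
    SmoothOffZero fun y ↦ coneMap H y i := by
  simp only [coneMap_apply]
  exact smoothOffZero_norm.mul (hH.pderiv i)

lemma smoothOffZero_coneJacobian (hH : SmoothOffZero H) (i j : Fin (n + 1)) :
    SmoothOffZero fun y ↦ coneJacobian H y i j :=
  (smoothOffZero_coneMap hH i).pderiv j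

lemma smoothOffZero_coneDensity (hH : SmoothOffZero H) : SmoothOffZero (coneDensity H) :=
  smoothOffZero_det (smoothOffZero_coneJacobian hH)

lemma smoothOffZero_adjugate_coneJacobian (hH : SmoothOffZero H) (i j : Fin (n + 1)) :
    SmoothOffZero fun y ↦ (coneJacobian H y).adjugate i j :=
  smoothOffZero_adjugate (smoothOffZero_coneJacobian hH) i j

lemma coneJacobian_apply (hH : SmoothOffZero H) (hx : x ≠ 0) (i j : Fin (n + 1)) :
    coneJacobian H x i j = ‖x‖ * pderiv j (pderiv i H) x + pderiv i H x * x j / ‖x‖ := by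
  simp only [coneJacobian, Matrix.of_apply, coneMap_apply]
  rw [pderiv_mul j (smoothOffZero_norm.differentiableAt hx) ((hH.pderiv i).differentiableAt hx),
    pderiv_norm j hx]
  ring

lemma posHomogeneous_coneMap (hH₁ : PosHomogeneous 1 H) (i : Fin (n + 1)) :
    PosHomogeneous 1 fun y ↦ coneMap H y i := by
  simpa [coneMap_apply] using posHomogeneous_norm.mul (hH₁.pderiv i)

lemma sum_mul_pderiv_eq_self (hH : SmoothOffZero H) (hH₁ : PosHomogeneous 1 H) (hx : x ≠ 0) :
    ∑ i, x i * pderiv i H x = H x := by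
  simpa using hH₁.euler (hH.differentiableAt hx) hx

lemma inner_gradient_self (hH : SmoothOffZero H) (hH₁ : PosHomogeneous 1 H) (hx : x ≠ 0) :
    ⟪gradient H x, x⟫ = H x := by
  rw [inner_gradient_left, fderiv_apply_eq_sum_pderiv, sum_mul_pderiv_eq_self hH hH₁ hx]

lemma sum_mul_pderiv_eq_zero (hf : SmoothOffZero f) (hf₀ : PosHomogeneous 0 f) (hx : x ≠ 0) :
    ∑ i, x i * pderiv i f x = 0 := by
  simpa using hf₀.euler (hf.differentiableAt hx) hx

lemma sum_mul_pderiv_pderiv_eq_zero (hH : SmoothOffZero H) (hH₁ : PosHomogeneous 1 H)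
    (hx : x ≠ 0) (j : Fin (n + 1)) : ∑ i, x i * pderiv i (pderiv j H) x = 0 :=
  sum_mul_pderiv_eq_zero (hH.pderiv j) (by simpa using hH₁.pderiv j) hx

lemma coneJacobian_mulVec_self (hH : SmoothOffZero H) (hH₁ : PosHomogeneous 1 H) (hx : x ≠ 0) :
    coneJacobian H x *ᵥ x = coneMap H x := by
  ext i
  rw [← sum_mul_pderiv_eq_self (smoothOffZero_coneMap hH i) (posHomogeneous_coneMap hH₁ i) hx]
  simp only [Matrix.mulVec, dotProduct, coneJacobian, Matrix.of_apply, mul_comm]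

lemma self_vecMul_coneJacobian (hH : SmoothOffZero H) (hH₁ : PosHomogeneous 1 H) (hx : x ≠ 0) :
    x ᵥ* coneJacobian H x = (H x / ‖x‖) • x.ofLp := by
  ext j
  have entry (i : Fin (n + 1)) : x i * coneJacobian H x i j =
      ‖x‖ * (x i * pderiv i (pderiv j H) x) + x j / ‖x‖ * (x i * pderiv i H x) := by
    rw [coneJacobian_apply hH hx, hH.pderiv_comm j i hx]
    ring
  simp only [Matrix.vecMul, dotProduct, entry, Finset.sum_add_distrib, ← Finset.mul_sum,
    sum_mul_pderiv_pderiv_eq_zero hH hH₁ hx, sum_mul_pderiv_eq_self hH hH₁ hx, Pi.smul_apply,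
    smul_eq_mul]
  ring

lemma sum_adjugate_coneJacobian_mul_coneMap (hH : SmoothOffZero H) (hH₁ : PosHomogeneous 1 H)
    (hx : x ≠ 0) (j : Fin (n + 1)) :
    ∑ i, (coneJacobian H x).adjugate j i * coneMap H x i = coneDensity H x * x j := by
  have vector_eq : (coneJacobian H x).adjugate *ᵥ coneMap H x = coneDensity H x • x.ofLp := by
    rw [← coneJacobian_mulVec_self hH hH₁ hx, Matrix.mulVec_mulVec, Matrix.adjugate_mul,
      Matrix.smul_mulVec, Matrix.one_mulVec, coneDensity]
  exact congrFun vector_eq j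

lemma div_norm_mul_sum_mul_adjugate_coneJacobian (hH : SmoothOffZero H)
    (hH₁ : PosHomogeneous 1 H) (hx : x ≠ 0) (i : Fin (n + 1)) :
    H x / ‖x‖ * ∑ j, x j * (coneJacobian H x).adjugate j i = coneDensity H x * x i := by
  have vector_eq : ((H x / ‖x‖) • x.ofLp) ᵥ* (coneJacobian H x).adjugate =
      coneDensity H x • x.ofLp := by
    rw [← self_vecMul_coneJacobian hH hH₁ hx, Matrix.vecMul_vecMul, Matrix.mul_adjugate,
      Matrix.vecMul_smul, Matrix.vecMul_one, coneDensity]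
  rw [Matrix.smul_vecMul] at vector_eq
  exact congrFun vector_eq i

lemma sum_pderiv_adjugate_coneJacobian_mul (hH : SmoothOffZero H)
    {a : Fin (n + 1) → Euc n → ℝ} (ha : ∀ i, SmoothOffZero (a i)) (hx : x ≠ 0) :
    ∑ j, pderiv j (fun y ↦ ∑ i, (coneJacobian H y).adjugate j i * a i y) x =
      ∑ i, ∑ j, (coneJacobian H x).adjugate j i * pderiv j (a i) x := by
  have hadj := smoothOffZero_adjugate_coneJacobian hH
  have product_rule (j : Fin (n + 1)) :
      pderiv j (fun y ↦ ∑ i, (coneJacobian H y).adjugate j i * a i y) x =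
        ∑ i, (pderiv j (fun y ↦ (coneJacobian H y).adjugate j i) x * a i x
          + (coneJacobian H x).adjugate j i * pderiv j (a i) x) := by
    rw [pderiv_sum j fun i _ ↦ SmoothOffZero.differentiableAt ((hadj j i).mul (ha i)) hx]
    exact Finset.sum_congr rfl fun i _ ↦
      pderiv_mul j ((hadj j i).differentiableAt hx) ((ha i).differentiableAt hx)
  have piola (i : Fin (n + 1)) :
      ∑ j, pderiv j (fun y ↦ (coneJacobian H y).adjugate j i) x = 0 :=
    sum_pderiv_adjugate_jacobian_eq_zero (smoothOffZero_coneMap hH) i hx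
  simp only [product_rule]
  rw [Finset.sum_comm]
  simp only [Finset.sum_add_distrib, ← Finset.sum_mul, piola, zero_mul, zero_add]

end ConeMap

section CentroAffineFlux

variable {n : ℕ} {H f : Euc n → ℝ} {x : Euc n}

/-- The vector field `‖x‖ H(x) adj(D(coneMap H)) ∇f`. Up to the density `coneDensity H` it is the
centro-affine gradient of `f`, so its divergence is the weighted centro-affine Laplacian. -/
def centroAffineFlux (H f : Euc n → ℝ) (j : Fin (n + 1)) (x : Euc n) : ℝ :=
  ∑ i, (coneJacobian H x).adjugate j i * (‖x‖ * H x * pderiv i f x)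

/-- The weighted centro-affine Dirichlet energy density `⟨flux of f, ∇f⟩`. -/
def dirichletDensity (H f : Euc n → ℝ) (x : Euc n) : ℝ :=
  ∑ j, centroAffineFlux H f j x * pderiv j f x

/-- The trace `tr(adj(D(coneMap H)) D(coneMap φ))`, which is the derivative of `coneDensity` at
`H` in the direction `φ`. -/
def mixedDensity (H φ : Euc n → ℝ) (x : Euc n) : ℝ :=
  ((coneJacobian H x).adjugate * coneJacobian φ x).trace

lemma smoothOffZero_centroAffineFlux (hH : SmoothOffZero H) (hf : SmoothOffZero f)
    (j : Fin (n + 1)) : SmoothOffZero (centroAffineFlux H f j) :=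
  ContDiffOn.sum fun i _ ↦ (smoothOffZero_adjugate_coneJacobian hH j i).mul
    ((smoothOffZero_norm.mul hH).mul (hf.pderiv i))

lemma smoothOffZero_dirichletDensity (hH : SmoothOffZero H) (hf : SmoothOffZero f) :
    SmoothOffZero (dirichletDensity H f) :=
  ContDiffOn.sum fun j _ ↦ (smoothOffZero_centroAffineFlux hH hf j).mul (hf.pderiv j)

lemma mixedDensity_eq_sum (H φ : Euc n → ℝ) (x : Euc n) : mixedDensity H φ x =
    ∑ j, ∑ i, (coneJacobian H x).adjugate j i * coneJacobian φ x i j := by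
  simp only [mixedDensity, Matrix.trace, Matrix.diag_apply, Matrix.mul_apply]

lemma smoothOffZero_mixedDensity {φ : Euc n → ℝ} (hH : SmoothOffZero H)
    (hφ : SmoothOffZero φ) : SmoothOffZero (mixedDensity H φ) := by
  simp only [funext (mixedDensity_eq_sum H φ)]
  exact ContDiffOn.sum fun j _ ↦ ContDiffOn.sum fun i _ ↦
    (smoothOffZero_adjugate_coneJacobian hH j i).mul (smoothOffZero_coneJacobian hφ i j)

lemma mixedDensity_self (H : Euc n → ℝ) (x : Euc n) :
    mixedDensity H H x = (n + 1) * coneDensity H x := by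
  rw [mixedDensity, Matrix.adjugate_mul, Matrix.trace_smul, Matrix.trace_one, Fintype.card_fin,
    smul_eq_mul, ← coneDensity]
  push_cast
  ring

lemma sum_mul_centroAffineFlux_eq_zero (hH : SmoothOffZero H) (hH₁ : PosHomogeneous 1 H)
    (hH₀ : H x ≠ 0) (hf : SmoothOffZero f) (hf₀ : PosHomogeneous 0 f) (hx : x ≠ 0) :
    ∑ j, x j * centroAffineFlux H f j x = 0 := by
  have hc : H x / ‖x‖ ≠ 0 := div_ne_zero hH₀ (norm_ne_zero_iff.2 hx)
  refine (mul_eq_zero.1 ?_).resolve_left hc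
  calc H x / ‖x‖ * ∑ j, x j * centroAffineFlux H f j x
      = ∑ i, H x / ‖x‖ * (∑ j, x j * (coneJacobian H x).adjugate j i)
          * (‖x‖ * H x * pderiv i f x) := by
        simp only [centroAffineFlux, Finset.mul_sum, Finset.sum_mul]
        rw [Finset.sum_comm]
        exact Finset.sum_congr rfl fun i _ ↦ Finset.sum_congr rfl fun j _ ↦ by ring
    _ = coneDensity H x * ‖x‖ * H x * ∑ i, x i * pderiv i f x := by
        simp only [div_norm_mul_sum_mul_adjugate_coneJacobian hH hH₁ hx, Finset.mul_sum]
        exact Finset.sum_congr rfl fun i _ ↦ by ring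
    _ = 0 := by rw [sum_mul_pderiv_eq_zero hf hf₀ hx, mul_zero]

lemma pderiv_norm_mul_mul_pderiv (hH : SmoothOffZero H) (hf : SmoothOffZero f) (hx : x ≠ 0)
    (i j : Fin (n + 1)) :
    pderiv j (fun y ↦ ‖y‖ * H y * pderiv i f y) x =
      coneJacobian (fun y ↦ f y * H y) x i j - f x * coneJacobian H x i j
        - pderiv j f x * coneMap H x i := by
  have split (y : Euc n) (hy : y ≠ 0) : ‖y‖ * H y * pderiv i f y =
      coneMap (fun y ↦ f y * H y) y i - f y * coneMap H y i := by
    rw [coneMap_apply, coneMap_apply,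
      pderiv_mul i (hf.differentiableAt hy) (hH.differentiableAt hy)]
    ring
  have hcone := smoothOffZero_coneMap hH i
  rw [pderiv_congr split j hx,
    pderiv_sub j ((smoothOffZero_coneMap (hf.mul hH) i).differentiableAt hx)
      (SmoothOffZero.differentiableAt (hf.mul hcone) hx),
    pderiv_mul j (hf.differentiableAt hx) (hcone.differentiableAt hx)]
  simp only [coneJacobian, Matrix.of_apply]
  ring

theorem sum_pderiv_centroAffineFlux (hH : SmoothOffZero H) (hH₁ : PosHomogeneous 1 H)
    (hf : SmoothOffZero f) (hf₀ : PosHomogeneous 0 f) (hx : x ≠ 0) :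
    ∑ j, pderiv j (centroAffineFlux H f j) x =
      mixedDensity H (fun y ↦ f y * H y) x - (n + 1) * (f x * coneDensity H x) := by
  have cross_term :
      ∑ j, ∑ i, (coneJacobian H x).adjugate j i * (pderiv j f x * coneMap H x i) = 0 := calc
    _ = ∑ j, pderiv j f x * ∑ i, (coneJacobian H x).adjugate j i * coneMap H x i := by
        simp only [Finset.mul_sum, mul_left_comm]
    _ = coneDensity H x * ∑ j, x j * pderiv j f x := by
        simp only [sum_adjugate_coneJacobian_mul_coneMap hH hH₁ hx, Finset.mul_sum]
        exact Finset.sum_congr rfl fun j _ ↦ by ring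
    _ = 0 := by rw [sum_mul_pderiv_eq_zero hf hf₀ hx, mul_zero]
  calc ∑ j, pderiv j (centroAffineFlux H f j) x
      = ∑ j, ∑ i, (coneJacobian H x).adjugate j i
          * pderiv j (fun y ↦ ‖y‖ * H y * pderiv i f y) x :=
        (sum_pderiv_adjugate_coneJacobian_mul hH
          (fun i ↦ (smoothOffZero_norm.mul hH).mul (hf.pderiv i)) hx).trans Finset.sum_comm
    _ = mixedDensity H (fun y ↦ f y * H y) x - f x * mixedDensity H H x := by
        simp only [pderiv_norm_mul_mul_pderiv hH hf hx, mul_sub, Finset.sum_sub_distrib,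
          cross_term, sub_zero, mixedDensity_eq_sum, Finset.mul_sum, mul_left_comm (f x)]
    _ = _ := by
        rw [mixedDensity_self]
        ring

theorem shellIntegral_mixedDensity (hH : SmoothOffZero H) (hH₁ : PosHomogeneous 1 H)
    (hH₀ : ∀ x ≠ 0, H x ≠ 0) (hf : SmoothOffZero f) (hf₀ : PosHomogeneous 0 f) :
    shellIntegral (mixedDensity H fun y ↦ f y * H y) =
      (n + 1) * shellIntegral fun x ↦ f x * coneDensity H x := by
  have hmixed := smoothOffZero_mixedDensity hH (hf.mul hH)
  have hvol : SmoothOffZero fun x ↦ (n + 1) * (f x * coneDensity H x) :=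
    contDiffOn_const.mul (hf.mul (smoothOffZero_coneDensity hH))
  have flux := shellIntegral_divergence_eq_zero (smoothOffZero_centroAffineFlux hH hf)
    fun x hx ↦ sum_mul_centroAffineFlux_eq_zero hH hH₁ (hH₀ x hx) hf hf₀ hx
  rw [shellIntegral_congr fun x hx ↦ sum_pderiv_centroAffineFlux hH hH₁ hf hf₀ hx,
    shellIntegral_sub hmixed.continuousOn hvol.continuousOn,
    shellIntegral_const_mul] at flux
  exact sub_eq_zero.1 flux

theorem shellIntegral_mul_mixedDensity (hH : SmoothOffZero H) (hH₁ : PosHomogeneous 1 H)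
    (hH₀ : ∀ x ≠ 0, H x ≠ 0) (hf : SmoothOffZero f) (hf₀ : PosHomogeneous 0 f) :
    shellIntegral (fun x ↦ f x * mixedDensity H (fun y ↦ f y * H y) x) =
      (n + 1) * shellIntegral (fun x ↦ f x ^ 2 * coneDensity H x)
        - shellIntegral (dirichletDensity H f) := by
  have hflux := smoothOffZero_centroAffineFlux hH hf
  have hmixed : SmoothOffZero fun x ↦ f x * mixedDensity H (fun y ↦ f y * H y) x :=
    hf.mul (smoothOffZero_mixedDensity hH (hf.mul hH))
  have hvol : SmoothOffZero fun x ↦ (n + 1) * (f x ^ 2 * coneDensity H x) :=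
    contDiffOn_const.mul ((hf.pow 2).mul (smoothOffZero_coneDensity hH))
  have hdir := smoothOffZero_dirichletDensity hH hf
  have tangential (x : Euc n) (hx : x ≠ 0) :
      ∑ j, x j * (f x * centroAffineFlux H f j x) = 0 := by
    simp only [mul_left_comm, ← Finset.mul_sum,
      sum_mul_centroAffineFlux_eq_zero hH hH₁ (hH₀ x hx) hf hf₀ hx, mul_zero]
  have divergence (x : Euc n) (hx : x ≠ 0) :
      ∑ j, pderiv j (fun x ↦ f x * centroAffineFlux H f j x) x =
        f x * mixedDensity H (fun y ↦ f y * H y) x - (n + 1) * (f x ^ 2 * coneDensity H x)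
          + dirichletDensity H f x := by
    simp only [pderiv_mul _ (hf.differentiableAt hx) ((hflux _).differentiableAt hx),
      Finset.sum_add_distrib, ← Finset.mul_sum, sum_pderiv_centroAffineFlux hH hH₁ hf hf₀ hx,
      dirichletDensity, mul_comm (pderiv _ f x)]
    ring
  have flux := shellIntegral_divergence_eq_zero (fun j ↦ hf.mul (hflux j)) tangential
  rw [shellIntegral_congr divergence,
    shellIntegral_add (hmixed.continuousOn.fun_sub hvol.continuousOn) hdir.continuousOn,
    shellIntegral_sub hmixed.continuousOn hvol.continuousOn,
    shellIntegral_const_mul] at flux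
  linarith

end CentroAffineFlux

section HessianForm

variable {n : ℕ} {H : Euc n → ℝ} {x : Euc n}

lemma real_inner_eq_sum (x v : Euc n) : ⟪x, v⟫ = ∑ i, x i * v i := by
  simp only [PiLp.inner_apply, RCLike.inner_apply, conj_trivial, mul_comm]

lemma real_inner_eq_dotProduct (x v : Euc n) : ⟪x, v⟫ = x.ofLp ⬝ᵥ v.ofLp :=
  real_inner_eq_sum x v

/-- The quadratic form `v ↦ D²H(x)(v, v)`. -/
def hessForm (H : Euc n → ℝ) (x v : Euc n) : ℝ := v.ofLp ⬝ᵥ ehess n H x *ᵥ v.ofLp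

lemma ehess_apply (H : Euc n → ℝ) (x : Euc n) (i j : Fin (n + 1)) :
    ehess n H x i j = pderiv i (pderiv j H) x := rfl

lemma bmat_eq_ehess_add (H : Euc n → ℝ) (x : Euc n) :
    bmat n H x = ehess n H x + H x • vecMulVec x.ofLp x.ofLp := rfl

lemma hessForm_eq_sum (H : Euc n → ℝ) (x v : Euc n) :
    hessForm H x v = ∑ i, ∑ j, v i * v j * pderiv i (pderiv j H) x := by
  simp only [hessForm, dotProduct, Matrix.mulVec, Finset.mul_sum, ehess_apply]
  exact Finset.sum_congr rfl fun i _ ↦ Finset.sum_congr rfl fun j _ ↦ by ring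

lemma ehess_transpose (hH : SmoothOffZero H) (hx : x ≠ 0) : (ehess n H x)ᵀ = ehess n H x := by
  ext i j
  exact hH.pderiv_comm j i hx

lemma self_vecMul_ehess (hH : SmoothOffZero H) (hH₁ : PosHomogeneous 1 H) (hx : x ≠ 0) :
    x.ofLp ᵥ* ehess n H x = 0 :=
  funext (sum_mul_pderiv_pderiv_eq_zero hH hH₁ hx)

lemma ehess_mulVec_self (hH : SmoothOffZero H) (hH₁ : PosHomogeneous 1 H) (hx : x ≠ 0) :
    ehess n H x *ᵥ x.ofLp = 0 := by
  rw [← ehess_transpose hH hx, Matrix.mulVec_transpose, self_vecMul_ehess hH hH₁ hx]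

lemma hessForm_add_smul_self (hH : SmoothOffZero H) (hH₁ : PosHomogeneous 1 H) (hx : x ≠ 0)
    (v : Euc n) (c : ℝ) : hessForm H x (v + c • x) = hessForm H x v := by
  simp only [hessForm, WithLp.ofLp_add, WithLp.ofLp_smul, Matrix.mulVec_add, Matrix.mulVec_smul,
    ehess_mulVec_self hH hH₁ hx, smul_zero, add_zero, add_dotProduct, smul_dotProduct,
    Matrix.dotProduct_mulVec x.ofLp, self_vecMul_ehess hH hH₁ hx, zero_dotProduct]

lemma hessForm_smul (H : Euc n → ℝ) (x v : Euc n) (c : ℝ) :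
    hessForm H x (c • v) = c ^ 2 * hessForm H x v := by
  simp only [hessForm, WithLp.ofLp_smul, Matrix.mulVec_smul, smul_dotProduct, dotProduct_smul,
    smul_eq_mul]
  ring

lemma hessForm_smul_self (hH : SmoothOffZero H) (hH₁ : PosHomogeneous 1 H) (hx : x ≠ 0) (c : ℝ) :
    hessForm H x (c • x) = 0 := by
  simp [hessForm, Matrix.mulVec_smul, ehess_mulVec_self hH hH₁ hx]

lemma hessForm_smul_left (hH₁ : PosHomogeneous 1 H) (hx : x ≠ 0) (v : Euc n) {c : ℝ}
    (hc : 0 < c) : hessForm H (c • x) v = c⁻¹ * hessForm H x v := by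
  simp only [hessForm_eq_sum, Finset.mul_sum]
  refine Finset.sum_congr rfl fun i _ ↦ Finset.sum_congr rfl fun j _ ↦ ?_
  rw [(hH₁.pderiv j).pderiv i c hc x hx, sub_self, zero_sub, _root_.zpow_neg_one]
  ring

lemma dotProduct_bmat_mulVec (H : Euc n → ℝ) (x v : Euc n) :
    v.ofLp ⬝ᵥ bmat n H x *ᵥ v.ofLp = hessForm H x v + H x * ⟪x, v⟫ ^ 2 := by
  rw [bmat_eq_ehess_add, Matrix.add_mulVec, dotProduct_add, Matrix.smul_mulVec,
    Matrix.vecMulVec_mulVec, dotProduct_smul, real_inner_eq_dotProduct, hessForm]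
  simp only [op_smul_eq_smul, dotProduct_smul, smul_eq_mul, dotProduct_comm v.ofLp x.ofLp]
  ring

lemma self_vecMul_bmat (hH : SmoothOffZero H) (hH₁ : PosHomogeneous 1 H) (hx : ‖x‖ = 1) :
    x.ofLp ᵥ* bmat n H x = H x • x.ofLp := by
  have hx₀ : x ≠ 0 := ne_zero_of_norm_ne_zero (by simp [hx])
  rw [bmat_eq_ehess_add, Matrix.vecMul_add, self_vecMul_ehess hH hH₁ hx₀, zero_add,
    Matrix.vecMul_smul, Matrix.vecMul_vecMulVec, ← real_inner_eq_dotProduct,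
    real_inner_self_eq_norm_sq, hx, one_pow, one_smul]

theorem coneDensity_eq_det_bmat (hH : SmoothOffZero H) (hH₁ : PosHomogeneous 1 H)
    (hx : ‖x‖ = 1) (hHx : H x ≠ 0) : coneDensity H x = (bmat n H x).det := by
  have hx₀ : x ≠ 0 := ne_zero_of_norm_ne_zero (by simp [hx])
  set u : Fin (n + 1) → ℝ := fun i ↦ (H x)⁻¹ * pderiv i H x - x i with hu
  have factorization :
      coneJacobian H x = (1 + replicateCol Unit u * replicateRow Unit x.ofLp) * bmat n H x := by
    rw [← Matrix.vecMulVec_eq, Matrix.add_mul, Matrix.one_mul, Matrix.vecMulVec_mul,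
      self_vecMul_bmat hH hH₁ hx]
    ext i j
    rw [coneJacobian_apply hH hx₀, hx, hH.pderiv_comm j i hx₀]
    simp only [bmat_eq_ehess_add, Matrix.add_apply, Matrix.smul_apply, Matrix.vecMulVec_apply,
      ehess_apply, hu, Pi.smul_apply, smul_eq_mul]
    field
  have orthogonal : x.ofLp ⬝ᵥ u = 0 := by
    have hxx : ∑ i, x i * x i = 1 := by
      rw [← real_inner_eq_sum, real_inner_self_eq_norm_sq, hx, one_pow]
    simp only [hu, dotProduct, mul_sub, Finset.sum_sub_distrib, mul_left_comm _ (H x)⁻¹,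
      ← Finset.mul_sum, sum_mul_pderiv_eq_self hH hH₁ hx₀, hxx]
    field
  rw [coneDensity, factorization, Matrix.det_mul, det_one_add_replicateCol_mul_replicateRow,
    orthogonal, add_zero, one_mul]

lemma posHomogeneous_coneDensity (hH₁ : PosHomogeneous 1 H) :
    PosHomogeneous 0 (coneDensity H) := by
  intro c hc x hx
  have jacobian_eq : coneJacobian H (c • x) = coneJacobian H x := by
    ext i j
    simpa [coneJacobian] using (posHomogeneous_coneMap hH₁ i).pderiv j c hc x hx
  simp [coneDensity, jacobian_eq]

end HessianForm

section StrictSupport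

variable {n : ℕ} {H : Euc n → ℝ} {x v z : Euc n}

/-- `H` is the `1`-homogeneous support function of a smooth strictly convex body containing the
origin in its interior. Strict convexity is positivity of `∇̄²h + h ḡ`, that is, of `D²H(x)` on
`x^⊥` for unit vectors `x`. -/
structure IsStrictSupport (H : Euc n → ℝ) : Prop where
  smooth : SmoothOffZero H
  map_smul : ∀ c : ℝ, 0 < c → ∀ x : Euc n, H (c • x) = c * H x
  pos_of_norm_eq_one : ∀ x : Euc n, ‖x‖ = 1 → 0 < H x
  hessForm_pos_of_orthonormal :
    ∀ x v : Euc n, ‖x‖ = 1 → ‖v‖ = 1 → ⟪x, v⟫ = 0 → 0 < hessForm H x v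

lemma isStrictSupport_of_posDef_bmat (hH : SmoothOffZero H)
    (hH₁ : ∀ c : ℝ, 0 < c → ∀ x : Euc n, H (c • x) = c * H x)
    (hpos : ∀ x ∈ sphere (0 : Euc n) 1, 0 < H x)
    (hbmat : ∀ x ∈ sphere (0 : Euc n) 1, (bmat n H x).PosDef) : IsStrictSupport H where
  smooth := hH
  map_smul := hH₁
  pos_of_norm_eq_one x hx := hpos x (mem_sphere_zero_iff_norm.2 hx)
  hessForm_pos_of_orthonormal x v hx hv hxv := by
    have hv₀ : v.ofLp ≠ 0 := by
      rw [Ne, WithLp.ofLp_eq_zero]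
      exact ne_zero_of_norm_ne_zero (by simp [hv])
    have quad := (hbmat x (mem_sphere_zero_iff_norm.2 hx)).dotProduct_mulVec_pos hv₀
    rwa [star_trivial, dotProduct_bmat_mulVec, hxv, zero_pow two_ne_zero, mul_zero,
      add_zero] at quad

namespace IsStrictSupport

lemma posHomogeneous (h : IsStrictSupport H) : PosHomogeneous 1 H := fun c hc x _ ↦ by
  rw [h.map_smul c hc x, zpow_one]

lemma pos (h : IsStrictSupport H) (hx : x ≠ 0) : 0 < H x := by
  have unit_pos := h.pos_of_norm_eq_one _ (norm_smul_inv_norm (𝕜 := ℝ) hx)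
  rw [RCLike.ofReal_real_eq_id, id, h.map_smul _ (inv_pos.2 (norm_pos_iff.2 hx))] at unit_pos
  exact pos_of_mul_pos_right unit_pos (inv_nonneg.2 (norm_nonneg x))

lemma map_zero (h : IsStrictSupport H) : H 0 = 0 := by
  have := h.map_smul 2 two_pos 0
  rw [smul_zero] at this
  linarith

lemma nonneg (h : IsStrictSupport H) (x : Euc n) : 0 ≤ H x := by
  rcases eq_or_ne x 0 with rfl | hx
  exacts [h.map_zero.ge, (h.pos hx).le]

lemma hessForm_pos (h : IsStrictSupport H) (hxv : LinearIndependent ℝ ![x, v]) :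
    0 < hessForm H x v := by
  have hx : x ≠ 0 := hxv.ne_zero 0
  set w : Euc n := v + (-(⟪x, v⟫ / ‖x‖ ^ 2)) • x with hw
  have hw₀ : w ≠ 0 := by
    rw [hw, add_comm]
    exact ((LinearIndependent.pair_add_smul_right_iff (R := ℝ) _).2 hxv).ne_zero 1
  have hxw : ⟪x, w⟫ = 0 := by
    have := norm_ne_zero_iff.2 hx
    rw [hw, inner_add_right, inner_smul_right, real_inner_self_eq_norm_sq]
    field
  have hx_pos := norm_pos_iff.2 hx
  have unit_pos : 0 < hessForm H (‖x‖⁻¹ • x) (‖w‖⁻¹ • w) := by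
    refine h.hessForm_pos_of_orthonormal _ _ (norm_smul_inv_norm (𝕜 := ℝ) hx)
      (norm_smul_inv_norm (𝕜 := ℝ) hw₀) ?_
    rw [inner_smul_left, inner_smul_right, hxw, mul_zero, mul_zero]
  rw [hessForm_smul, hessForm_smul_left h.posHomogeneous hx _ (inv_pos.2 hx_pos), inv_inv, hw,
    hessForm_add_smul_self h.smooth h.posHomogeneous hx] at unit_pos
  exact pos_of_mul_pos_right (pos_of_mul_pos_right unit_pos (by positivity)) hx_pos.le

lemma posDef_bmat (h : IsStrictSupport H) (hx : ‖x‖ = 1) : (bmat n H x).PosDef := by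
  have hx₀ : x ≠ 0 := ne_zero_of_norm_ne_zero (by simp [hx])
  have hHx := h.pos hx₀
  refine Matrix.PosDef.of_dotProduct_mulVec_pos ?_ fun v hv ↦ ?_
  · rw [Matrix.IsHermitian, Matrix.conjTranspose_eq_transpose_of_trivial, bmat_eq_ehess_add,
      Matrix.transpose_add, Matrix.transpose_smul, Matrix.transpose_vecMulVec,
      ehess_transpose h.smooth hx₀]
  rw [star_trivial]
  refine (dotProduct_bmat_mulVec H x (WithLp.toLp 2 v)).symm ▸ ?_
  by_cases hind : LinearIndependent ℝ ![x, WithLp.toLp 2 v]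
  · have := h.hessForm_pos hind
    positivity
  · obtain ⟨c, hc⟩ : ∃ c : ℝ, c • x = WithLp.toLp 2 v := by
      simpa [LinearIndependent.pair_iff' hx₀] using hind
    have hc₀ : c ≠ 0 := by
      rintro rfl
      exact hv (by simpa using hc.symm)
    rw [← hc, hessForm_smul_self h.smooth h.posHomogeneous hx₀, inner_smul_right,
      real_inner_self_eq_norm_sq, hx]
    positivity

lemma coneDensity_pos (h : IsStrictSupport H) (hx : x ≠ 0) : 0 < coneDensity H x := by
  have unit : ‖‖x‖⁻¹ • x‖ = 1 := norm_smul_inv_norm (𝕜 := ℝ) hx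
  have scale := posHomogeneous_coneDensity h.posHomogeneous ‖x‖⁻¹
    (inv_pos.2 (norm_pos_iff.2 hx)) x hx
  rw [zpow_zero, one_mul] at scale
  rw [← scale, coneDensity_eq_det_bmat h.smooth h.posHomogeneous unit
    (h.pos_of_norm_eq_one _ unit).ne']
  exact (h.posDef_bmat unit).det_pos

end IsStrictSupport

end StrictSupport

section SupportBody

variable {n : ℕ} {F H : Euc n → ℝ} {x v y z : Euc n}

lemma SmoothOffZero.hasDerivAt_line (hF : SmoothOffZero F) {t : ℝ} (hx : x + t • v ≠ 0) :
    HasDerivAt (fun s : ℝ ↦ F (x + s • v)) (_root_.fderiv ℝ F (x + t • v) v) t := by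
  have line : HasDerivAt (fun s : ℝ ↦ x + s • v) v t := by
    simpa using ((hasDerivAt_id t).smul_const v).const_add x
  exact (hF.differentiableAt hx).hasFDerivAt.comp_hasDerivAt t line

lemma SmoothOffZero.hasDerivAt_fderiv_line (hF : SmoothOffZero F) {t : ℝ} (hx : x + t • v ≠ 0) :
    HasDerivAt (fun s : ℝ ↦ _root_.fderiv ℝ F (x + s • v) v) (hessForm F (x + t • v) v) t := by
  simp only [fderiv_apply_eq_sum_pderiv F]
  have term (j : Fin (n + 1)) := ((hF.pderiv j).hasDerivAt_line hx).const_mul (v j)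
  refine (HasDerivAt.fun_sum fun j _ ↦ term j).congr_deriv ?_
  simp only [hessForm_eq_sum, fderiv_apply_eq_sum_pderiv, Finset.mul_sum]
  rw [Finset.sum_comm]
  exact Finset.sum_congr rfl fun i _ ↦ Finset.sum_congr rfl fun j _ ↦ by ring

/-- The convex body whose support function is `H`. -/
def supportBody (H : Euc n → ℝ) : Set (Euc n) := {y | ∀ x : Euc n, ⟪x, y⟫ ≤ H x}

namespace IsStrictSupport

lemma fderiv_lt_sub (h : IsStrictSupport H) (hxv : LinearIndependent ℝ ![x, v]) :
    fderiv ℝ H x v < H (x + v) - H x := by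
  have indep (t : ℝ) : LinearIndependent ℝ ![x + t • v, v] :=
    (LinearIndependent.pair_add_smul_left_iff t).2 hxv
  have ne_zero (t : ℝ) : x + t • v ≠ 0 := (indep t).ne_zero 0
  have slope_strictMono : StrictMono fun t : ℝ ↦ fderiv ℝ H (x + t • v) v := by
    refine strictMono_of_deriv_pos fun t ↦ ?_
    rw [(h.smooth.hasDerivAt_fderiv_line (ne_zero t)).deriv]
    exact h.hessForm_pos (indep t)
  have deriv_line (t : ℝ) := h.smooth.hasDerivAt_line (ne_zero t)
  obtain ⟨c, hc, slope_eq⟩ := exists_hasDerivAt_eq_slope (fun t : ℝ ↦ H (x + t • v)) _ zero_lt_one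
    (fun t _ ↦ (deriv_line t).continuousAt.continuousWithinAt) fun t _ ↦ deriv_line t
  simpa [slope_eq] using slope_strictMono hc.1

lemma inner_gradient_lt (h : IsStrictSupport H) (hxz : ¬SameRay ℝ x z) :
    ⟪gradient H x, z⟫ < H z := by
  have hx : x ≠ 0 := fun hx ↦ hxz (hx ▸ SameRay.zero_left z)
  have hz : z ≠ 0 := fun hz ↦ hxz (hz ▸ SameRay.zero_right x)
  by_cases indep : LinearIndependent ℝ ![x, z]
  · have indep' : LinearIndependent ℝ ![x, (-1 : ℝ) • x + z] :=
      (LinearIndependent.pair_add_smul_right_iff (R := ℝ) _).2 indep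
    have tangent := h.fderiv_lt_sub indep'
    rw [← inner_gradient_left, inner_add_right, inner_smul_right,
      inner_gradient_self h.smooth h.posHomogeneous hx,
      neg_one_smul, add_neg_cancel_left] at tangent
    linarith
  · obtain ⟨c, rfl⟩ : ∃ c : ℝ, c • x = z := by
      simpa [LinearIndependent.pair_iff' hx] using indep
    have hc : c ≤ 0 := by
      by_contra! hc
      exact hxz (SameRay.sameRay_pos_smul_right x hc)
    rw [inner_smul_right, inner_gradient_self h.smooth h.posHomogeneous hx]
    exact (mul_nonpos_of_nonpos_of_nonneg hc (h.nonneg x)).trans_lt (h.pos hz)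

lemma inner_gradient_le (h : IsStrictSupport H) (hx : x ≠ 0) (z : Euc n) :
    ⟪gradient H x, z⟫ ≤ H z := by
  by_cases hxz : SameRay ℝ x z
  · obtain ⟨c, hc, rfl⟩ := hxz.exists_nonneg_left hx
    rcases hc.eq_or_lt with rfl | hc
    · simp [h.map_zero]
    · rw [inner_smul_right, inner_gradient_self h.smooth h.posHomogeneous hx, h.map_smul c hc]
  · exact (h.inner_gradient_lt hxz).le

lemma norm_le_of_coneMap_eq (h : IsStrictSupport H) (hx : x ≠ 0) (hz : z ≠ 0)
    (hxz : coneMap H x = coneMap H z) : ‖z‖ ≤ ‖x‖ := by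
  refine le_of_mul_le_mul_right ?_ (h.pos hz)
  calc ‖z‖ * H z = ⟪coneMap H x, z⟫ := by
        rw [hxz, coneMap, real_inner_smul_left, inner_gradient_self h.smooth h.posHomogeneous hz]
    _ ≤ ‖x‖ * H z := by
        rw [coneMap, real_inner_smul_left]
        exact mul_le_mul_of_nonneg_left (h.inner_gradient_le hx z) (norm_nonneg x)

lemma injOn_coneMap (h : IsStrictSupport H) : Set.InjOn (coneMap H) {0}ᶜ := by
  intro x hx z hz hxz
  have norm_eq : ‖x‖ = ‖z‖ :=
    (h.norm_le_of_coneMap_eq hz hx hxz.symm).antisymm (h.norm_le_of_coneMap_eq hx hz hxz)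
  refine (sameRay_iff_of_norm_eq norm_eq).1 (not_not.1 fun not_sameRay ↦ ?_)
  have gradient_eq : gradient H x = gradient H z := by
    rw [coneMap, coneMap, norm_eq] at hxz
    exact smul_right_injective _ (norm_ne_zero_iff.2 hz) hxz
  have lt := h.inner_gradient_lt not_sameRay
  rw [gradient_eq, inner_gradient_self h.smooth h.posHomogeneous hz] at lt
  exact lt.false

lemma coneMap_mem_supportBody (h : IsStrictSupport H) (hx : x ≠ 0) (hx₁ : ‖x‖ ≤ 1) :
    coneMap H x ∈ supportBody H := fun z ↦
  calc ⟪z, coneMap H x⟫ = ‖x‖ * ⟪gradient H x, z⟫ := by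
        rw [coneMap, real_inner_smul_right, real_inner_comm]
    _ ≤ ‖x‖ * H z := mul_le_mul_of_nonneg_left (h.inner_gradient_le hx z) (norm_nonneg x)
    _ ≤ H z := mul_le_of_le_one_left (h.nonneg z) hx₁

lemma gradient_ne_zero (h : IsStrictSupport H) (hx : x ≠ 0) : gradient H x ≠ 0 := by
  intro gradient_eq
  have := inner_gradient_self h.smooth h.posHomogeneous hx
  rw [gradient_eq, inner_zero_left] at this
  exact (h.pos hx).ne this

lemma coneMap_ne_zero (h : IsStrictSupport H) (hx : x ≠ 0) : coneMap H x ≠ 0 :=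
  smul_ne_zero (norm_ne_zero_iff.2 hx) (h.gradient_ne_zero hx)

lemma gradient_smul (h : IsStrictSupport H) (hx : x ≠ 0) {c : ℝ} (hc : 0 < c) :
    gradient H (c • x) = gradient H x := by
  ext i
  simpa [gradient_apply] using h.posHomogeneous.pderiv i c hc x hx

lemma exists_isMaxOn_inner_div (h : IsStrictSupport H) (hy : y ≠ 0) :
    ∃ x : Euc n, ‖x‖ = 1 ∧ ∀ z ≠ 0, ⟪y, z⟫ ≤ ⟪y, x⟫ / H x * H z := by
  have hcont : ContinuousOn (fun z ↦ ⟪y, z⟫ / H z) (sphere (0 : Euc n) 1) := by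
    have sphere_subset : sphere (0 : Euc n) 1 ⊆ {0}ᶜ :=
      fun z hz ↦ ne_zero_of_mem_unit_sphere ⟨z, hz⟩
    exact ContinuousOn.div (by fun_prop) (h.smooth.continuousOn.mono sphere_subset)
      fun z hz ↦ (h.pos (sphere_subset hz)).ne'
  have normalize_mem (z : Euc n) (hz : z ≠ 0) : ‖z‖⁻¹ • z ∈ sphere (0 : Euc n) 1 :=
    mem_sphere_zero_iff_norm.2 (norm_smul_inv_norm (𝕜 := ℝ) hz)
  obtain ⟨x, hx, hmax⟩ :=
    (isCompact_sphere (0 : Euc n) 1).exists_isMaxOn ⟨_, normalize_mem y hy⟩ hcont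
  refine ⟨x, mem_sphere_zero_iff_norm.1 hx, fun z hz ↦ ?_⟩
  have hz_inv : 0 < ‖z‖⁻¹ := inv_pos.2 (norm_pos_iff.2 hz)
  have le_max : ⟪y, ‖z‖⁻¹ • z⟫ / H (‖z‖⁻¹ • z) ≤ ⟪y, x⟫ / H x := hmax (normalize_mem z hz)
  rwa [inner_smul_right, h.map_smul _ hz_inv, mul_div_mul_left _ _ hz_inv.ne',
    div_le_iff₀ (h.pos hz)] at le_max

lemma eq_smul_gradient_of_inner_le (h : IsStrictSupport H) (hx : x ≠ 0)
    (hle : ∀ z ≠ 0, ⟪y, z⟫ ≤ ⟪y, x⟫ / H x * H z) : y = (⟪y, x⟫ / H x) • gradient H x := by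
  set c := ⟪y, x⟫ / H x with hc
  have value_at_x : ⟪y, x⟫ - c * H x = 0 := by
    rw [hc, div_mul_cancel₀ _ (h.pos hx).ne', sub_self]
  have hderiv : HasFDerivAt (fun z ↦ ⟪y, z⟫ - c * H z) (innerSL ℝ y - c • fderiv ℝ H x) x :=
    (innerSL ℝ y).hasFDerivAt.sub ((h.smooth.differentiableAt hx).hasFDerivAt.const_mul c)
  have hmax : IsLocalMax (fun z ↦ ⟪y, z⟫ - c * H z) x := by
    filter_upwards [compl_zero_mem_nhds hx] with z hz
    exact value_at_x ▸ sub_nonpos.2 (hle z hz)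
  refine ext_inner_right ℝ fun v ↦ ?_
  have := congrArg (· v) (hmax.hasFDerivAt_eq_zero hderiv)
  rw [real_inner_smul_left, inner_gradient_left]
  simpa [sub_eq_zero] using this

theorem image_coneMap (h : IsStrictSupport H) :
    coneMap H '' (closedBall 0 1 ∩ {0}ᶜ) = supportBody H ∩ {0}ᶜ := by
  refine Set.Subset.antisymm ?_ fun y hy ↦ ?_
  · rintro _ ⟨x, ⟨hx₁, hx⟩, rfl⟩
    exact ⟨h.coneMap_mem_supportBody hx (mem_closedBall_zero_iff.1 hx₁), h.coneMap_ne_zero hx⟩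
  obtain ⟨x, hx₁, hle⟩ := h.exists_isMaxOn_inner_div hy.2
  have hx : x ≠ 0 := ne_zero_of_norm_ne_zero (by simp [hx₁])
  have y_eq := h.eq_smul_gradient_of_inner_le hx hle
  set c := ⟪y, x⟫ / H x
  have hc_le : c ≤ 1 := (div_le_one (h.pos hx)).2 (real_inner_comm y x ▸ hy.1 x)
  have hc_pos : 0 < c := by
    have norm_sq_le := real_inner_self_eq_norm_sq y ▸ hle y hy.2
    exact pos_of_mul_pos_left ((pow_pos (norm_pos_iff.2 hy.2) 2).trans_le norm_sq_le) (h.nonneg y)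
  have norm_cx : ‖c • x‖ = c := by rw [norm_smul, hx₁, mul_one, Real.norm_of_nonneg hc_pos.le]
  have hcx : c • x ∈ closedBall 0 1 := mem_closedBall_zero_iff.2 (norm_cx.trans_le hc_le)
  refine ⟨c • x, ⟨hcx, smul_ne_zero hc_pos.ne' hx⟩, ?_⟩
  rw [coneMap, norm_cx, h.gradient_smul hx hc_pos, ← y_eq]

end IsStrictSupport

end SupportBody

section BrunnMinkowski

variable {n : ℕ} {g H H₁ H₂ : Euc n → ℝ} {x : Euc n}

lemma hasFDerivAt_coneMap (hH : SmoothOffZero H) (hx : x ≠ 0) :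
    HasFDerivAt (coneMap H) (Matrix.toEuclideanCLM (𝕜 := ℝ) (coneJacobian H x)) x := by
  rw [← hasFDerivWithinAt_univ, hasFDerivWithinAt_euclidean]
  intro i
  rw [hasFDerivWithinAt_univ]
  refine ((smoothOffZero_coneMap hH i).differentiableAt hx).hasFDerivAt.congr_fderiv ?_
  ext v
  simp [fderiv_apply_eq_sum_pderiv, coneJacobian, Matrix.mulVec, dotProduct, mul_comm]

lemma det_toEuclideanCLM (A : Matrix (Fin (n + 1)) (Fin (n + 1)) ℝ) :
    (Matrix.toEuclideanCLM (𝕜 := ℝ) A).det = A.det := by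
  rw [ContinuousLinearMap.det, coe_toEuclideanCLM_eq_toEuclideanLin]
  exact LinearMap.det_toLin (PiLp.basisFun 2 ℝ _) A

lemma IsStrictSupport.volume_supportBody (h : IsStrictSupport H) :
    volume (supportBody H) = ∫⁻ x in closedBall 0 1, ENNReal.ofReal (coneDensity H x) := by
  set B : Set (Euc n) := closedBall 0 1 ∩ {0}ᶜ
  have hB : MeasurableSet B :=
    isClosed_closedBall.measurableSet.inter (measurableSet_singleton 0).compl
  have ae_ne_zero (s : Set (Euc n)) : (s ∩ {0}ᶜ : Set (Euc n)) =ᵐ[volume] s :=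
    Set.sdiff_eq s {0} ▸ sdiff_null_ae_eq_self (measure_singleton 0)
  calc volume (supportBody H) = volume (supportBody H ∩ {0}ᶜ) :=
        (measure_congr (ae_ne_zero _)).symm
    _ = ∫⁻ x in B, ENNReal.ofReal |(Matrix.toEuclideanCLM (𝕜 := ℝ) (coneJacobian H x)).det| := by
        rw [← h.image_coneMap, lintegral_abs_det_fderiv_eq_addHaar_image volume hB
          (fun x hx ↦ (hasFDerivAt_coneMap h.smooth hx.2).hasFDerivWithinAt)
          (h.injOn_coneMap.mono Set.inter_subset_right)]
    _ = ∫⁻ x in B, ENNReal.ofReal (coneDensity H x) := by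
        refine setLIntegral_congr_fun hB fun x hx ↦ ?_
        simp only [det_toEuclideanCLM]
        rw [← coneDensity, abs_of_pos (h.coneDensity_pos hx.2)]
    _ = ∫⁻ x in closedBall 0 1, ENNReal.ofReal (coneDensity H x) :=
        setLIntegral_congr (ae_ne_zero _)

lemma lintegral_mul_radial (hg : ContinuousOn g {(0 : Euc n)}ᶜ) (hg₀ : PosHomogeneous 0 g)
    {φ : ℝ → ENNReal} (hφ : Measurable φ) :
    ∫⁻ x : Euc n, ENNReal.ofReal (g x) * φ ‖x‖ =
      (∫⁻ s, ENNReal.ofReal (g (s : Euc n)) ∂sphMeasure n) *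
        ∫⁻ r : Set.Ioi (0 : ℝ), φ r ∂Measure.volumeIoiPow (Module.finrank ℝ (Euc n) - 1) := by
  have g_measurable : Measurable fun s : sphere (0 : Euc n) 1 ↦ ENNReal.ofReal (g s) :=
    ENNReal.measurable_ofReal.comp (hg.comp_continuous continuous_subtype_val
      fun s ↦ ne_zero_of_mem_unit_sphere s).measurable
  have φ_measurable : Measurable fun r : Set.Ioi (0 : ℝ) ↦ φ r := hφ.comp measurable_subtype_coe
  have restrict_eq : volume.restrict ({0}ᶜ : Set (Euc n)) = volume :=
    Measure.restrict_eq_self_of_ae_mem (compl_mem_ae_iff.2 (measure_singleton 0))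
  rw [← restrict_eq, ← lintegral_subtype_comap (measurableSet_singleton 0).compl, sphMeasure,
    ← lintegral_prod_mul g_measurable.aemeasurable φ_measurable.aemeasurable,
    ← (volume : Measure (Euc n)).measurePreserving_homeomorphUnitSphereProd.lintegral_comp_emb
      (Homeomorph.measurableEmbedding _)]
  refine lintegral_congr fun x ↦ ?_
  have scale := hg₀ ‖(x : Euc n)‖⁻¹ (inv_pos.2 (norm_pos_iff.2 x.2)) x x.2
  rw [zpow_zero, one_mul] at scale
  simp [scale]

lemma ofReal_shellIntegral (hg : ContinuousOn g {(0 : Euc n)}ᶜ) (hg₀ : PosHomogeneous 0 g)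
    (hg_nonneg : ∀ x ≠ 0, 0 ≤ g x) :
    ENNReal.ofReal (shellIntegral g) =
      (∫⁻ s, ENNReal.ofReal (g (s : Euc n)) ∂sphMeasure n) *
        ∫⁻ r : Set.Ioi (0 : ℝ), ENNReal.ofReal (shellProfile ((r : ℝ) ^ 2))
          ∂Measure.volumeIoiPow (Module.finrank ℝ (Euc n) - 1) := by
  have φ_measurable : Measurable fun r : ℝ ↦ ENNReal.ofReal (shellProfile (r ^ 2)) :=
    ENNReal.measurable_ofReal.comp
      (shellProfile.continuous.comp (continuous_pow 2)).measurable
  rw [← lintegral_mul_radial hg hg₀ φ_measurable, shellIntegral,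
    ofReal_integral_eq_lintegral_ofReal (integrable_shellBump_mul hg)
      (.of_forall (shellBump_mul_nonneg hg_nonneg))]
  refine lintegral_congr fun x ↦ ?_
  rw [ENNReal.ofReal_mul (shellBump_nonneg x), mul_comm, shellBump]

lemma setLIntegral_closedBall (hg : ContinuousOn g {(0 : Euc n)}ᶜ) (hg₀ : PosHomogeneous 0 g) :
    ∫⁻ x in closedBall 0 1, ENNReal.ofReal (g x) =
      (∫⁻ s, ENNReal.ofReal (g (s : Euc n)) ∂sphMeasure n) *
        ∫⁻ r : Set.Ioi (0 : ℝ), (Set.Iic (1 : ℝ)).indicator 1 (r : ℝ)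
          ∂Measure.volumeIoiPow (Module.finrank ℝ (Euc n) - 1) := by
  rw [← lintegral_mul_radial hg hg₀ (measurable_one.indicator measurableSet_Iic),
    ← lintegral_indicator measurableSet_closedBall]
  refine lintegral_congr fun x ↦ ?_
  by_cases hx : ‖x‖ ≤ 1 <;> simp [hx]

theorem setLIntegral_closedBall_mul_shellIntegral_one (hg : ContinuousOn g {(0 : Euc n)}ᶜ)
    (hg₀ : PosHomogeneous 0 g) (hg_nonneg : ∀ x ≠ 0, 0 ≤ g x) :
    (∫⁻ x in closedBall 0 1, ENNReal.ofReal (g x)) *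
        ENNReal.ofReal (shellIntegral fun _ : Euc n ↦ 1) =
      ENNReal.ofReal (shellIntegral g) * volume (closedBall (0 : Euc n) 1) := by
  have one_hom : PosHomogeneous 0 fun _ : Euc n ↦ (1 : ℝ) := fun c _ x _ ↦ by simp
  have volume_eq : volume (closedBall (0 : Euc n) 1) =
      ∫⁻ _ in closedBall (0 : Euc n) 1, ENNReal.ofReal 1 := by
    rw [ENNReal.ofReal_one, setLIntegral_one]
  rw [volume_eq, ofReal_shellIntegral hg hg₀ hg_nonneg, setLIntegral_closedBall hg hg₀,
    setLIntegral_closedBall continuousOn_const one_hom,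
    ofReal_shellIntegral continuousOn_const one_hom fun _ _ ↦ zero_le_one]
  ring

lemma isClosed_supportBody (H : Euc n → ℝ) : IsClosed (supportBody H) := by
  rw [supportBody, Set.ofPred_forall]
  exact isClosed_iInter fun x ↦ isClosed_le (by fun_prop) continuous_const

theorem shellIntegral_coneDensity_mul_le_sq (h : IsStrictSupport H) (h₁ : IsStrictSupport H₁)
    (h₂ : IsStrictSupport H₂) (midpoint : ∀ x, H₁ x + H₂ x = 2 * H x) :
    shellIntegral (coneDensity H₁) * shellIntegral (coneDensity H₂) ≤
      shellIntegral (coneDensity H) ^ 2 := by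
  have volume_le : volume (supportBody H₁) * volume (supportBody H₂) ≤
      volume (supportBody H) ^ 2 := by
    refine volume_mul_volume_le_sq_of_midpoint_mem (isClosed_supportBody _).measurableSet
      (isClosed_supportBody _).measurableSet (isClosed_supportBody _).measurableSet
      fun y hy z hz x ↦ ?_
    rw [inner_smul_right, inner_add_right]
    linarith [midpoint x, hy x, hz x]
  set ω := volume (closedBall (0 : Euc n) 1)
  have ω_ne_zero : ω ≠ 0 := (measure_closedBall_pos volume 0 one_pos).ne'
  have ω_ne_top : ω ≠ ⊤ := measure_closedBall_lt_top.ne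
  set e := ENNReal.ofReal (shellIntegral fun _ : Euc n ↦ 1)
  have volume_eq {G : Euc n → ℝ} (hG : IsStrictSupport G) : volume (supportBody G) * e =
      ENNReal.ofReal (shellIntegral (coneDensity G)) * ω := by
    rw [hG.volume_supportBody]
    exact setLIntegral_closedBall_mul_shellIntegral_one
      (smoothOffZero_coneDensity hG.smooth).continuousOn
      (posHomogeneous_coneDensity hG.posHomogeneous) fun x hx ↦ (hG.coneDensity_pos hx).le
  have nonneg {G : Euc n → ℝ} (hG : IsStrictSupport G) : 0 ≤ shellIntegral (coneDensity G) :=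
    shellIntegral_nonneg fun x hx ↦ (hG.coneDensity_pos hx).le
  rw [← ENNReal.ofReal_le_ofReal_iff (sq_nonneg _), ENNReal.ofReal_mul (nonneg h₁),
    ENNReal.ofReal_pow (nonneg h),
    ← ENNReal.mul_le_mul_iff_left (pow_ne_zero 2 ω_ne_zero) (ENNReal.pow_ne_top ω_ne_top)]
  calc _ = (ENNReal.ofReal (shellIntegral (coneDensity H₁)) * ω) *
        (ENNReal.ofReal (shellIntegral (coneDensity H₂)) * ω) := by ring
    _ = volume (supportBody H₁) * volume (supportBody H₂) * e ^ 2 := by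
        rw [← volume_eq h₁, ← volume_eq h₂]
        ring
    _ ≤ volume (supportBody H) ^ 2 * e ^ 2 := by gcongr
    _ = _ := by rw [← mul_pow, volume_eq h, mul_pow]

end BrunnMinkowski

section Variation

variable {n : ℕ} {f H φ : Euc n → ℝ} {x : Euc n}

theorem hasDerivAt_shellIntegral {g g' : ℝ → Euc n → ℝ} {U : Set ℝ} (hU : IsOpen U)
    (hg : ∀ t ∈ U, ContinuousOn (g t) {(0 : Euc n)}ᶜ)
    (hg' : ContinuousOn (fun z : ℝ × Euc n ↦ g' z.1 z.2) (U ×ˢ {(0 : Euc n)}ᶜ))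
    (hderiv : ∀ t ∈ U, ∀ x ≠ 0, HasDerivAt (fun s ↦ g s x) (g' t x) t) {t : ℝ} (ht : t ∈ U) :
    HasDerivAt (fun s ↦ shellIntegral (g s)) (shellIntegral (g' t)) t := by
  obtain ⟨δ, hδ, ball_subset⟩ := Metric.nhds_basis_closedBall.mem_iff.1 (hU.mem_nhds ht)
  have shell_subset : shell n ⊆ {0}ᶜ := fun x hx ↦ ne_zero_of_mem_shell hx
  obtain ⟨C, hC⟩ := ((isCompact_closedBall t δ).prod isCompact_shell).exists_bound_of_continuousOn
    (hg'.mono (Set.prod_mono ball_subset shell_subset))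
  have g'_continuousOn : ContinuousOn (g' t) {(0 : Euc n)}ᶜ :=
    hg'.comp (f := fun x : Euc n ↦ (t, x)) (by fun_prop) fun x hx ↦ ⟨ht, hx⟩
  refine (hasDerivAt_integral_of_dominated_loc_of_deriv_le (bound := fun x ↦ shellBump x * C)
    (F' := fun s x ↦ shellBump x * g' s x) (closedBall_mem_nhds t hδ) ?_
    (integrable_shellBump_mul (hg t ht))
    (integrable_shellBump_mul g'_continuousOn).aestronglyMeasurable ?_
    (integrable_shellBump_mul continuousOn_const) ?_).2
  · filter_upwards [hU.mem_nhds ht] with s hs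
    exact (integrable_shellBump_mul (hg s hs)).aestronglyMeasurable
  · filter_upwards with x s hs
    by_cases hx : x ∈ shell n
    · rw [norm_mul, Real.norm_of_nonneg (shellBump_nonneg x)]
      exact mul_le_mul_of_nonneg_left (hC (s, x) ⟨hs, hx⟩) (shellBump_nonneg x)
    · simp [shellBump_eq_zero_of_notMem_shell hx]
  · filter_upwards with x s hs
    rcases eq_or_ne x 0 with rfl | hx
    · simp [shellBump_zero, hasDerivAt_const]
    · exact (hderiv s (ball_subset hs) x hx).const_mul _

/-- The variation `H + tφ` of a support function `H` in the direction `φ`. -/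
def variation (H φ : Euc n → ℝ) (t : ℝ) (x : Euc n) : ℝ := H x + t * φ x

lemma variation_zero (H φ : Euc n → ℝ) : variation H φ 0 = H := by
  ext x
  simp [variation]

lemma smoothOffZero_variation (hH : SmoothOffZero H) (hφ : SmoothOffZero φ) (t : ℝ) :
    SmoothOffZero (variation H φ t) :=
  hH.add (contDiffOn_const.mul hφ)

lemma pderiv_variation (hH : SmoothOffZero H) (hφ : SmoothOffZero φ) (t : ℝ) (i : Fin (n + 1))
    (hx : x ≠ 0) : pderiv i (variation H φ t) x = variation (pderiv i H) (pderiv i φ) t x := by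
  have hφx := hφ.differentiableAt hx
  exact (pderiv_add i (hH.differentiableAt hx) (hφx.const_mul t)).trans
    (congrArg _ (pderiv_const_mul i t hφx))

lemma pderiv_pderiv_variation (hH : SmoothOffZero H) (hφ : SmoothOffZero φ) (t : ℝ)
    (i j : Fin (n + 1)) (hx : x ≠ 0) : pderiv i (pderiv j (variation H φ t)) x =
      variation (pderiv i (pderiv j H)) (pderiv i (pderiv j φ)) t x := by
  rw [pderiv_congr (fun y hy ↦ pderiv_variation hH hφ t j hy) i hx,
    pderiv_variation (hH.pderiv j) (hφ.pderiv j) t i hx]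

lemma hessForm_variation (hH : SmoothOffZero H) (hφ : SmoothOffZero φ) (t : ℝ) (hx : x ≠ 0)
    (v : Euc n) : hessForm (variation H φ t) x v = hessForm H x v + t * hessForm φ x v := by
  simp only [hessForm_eq_sum, Finset.mul_sum, ← Finset.sum_add_distrib]
  refine Finset.sum_congr rfl fun i _ ↦ Finset.sum_congr rfl fun j _ ↦ ?_
  rw [pderiv_pderiv_variation hH hφ t i j hx, variation]
  ring

lemma coneJacobian_variation (hH : SmoothOffZero H) (hφ : SmoothOffZero φ) (t : ℝ) (hx : x ≠ 0) :
    coneJacobian (variation H φ t) x = coneJacobian H x + t • coneJacobian φ x := by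
  ext i j
  rw [coneJacobian_apply (smoothOffZero_variation hH hφ t) hx,
    pderiv_pderiv_variation hH hφ t j i hx, pderiv_variation hH hφ t i hx, Matrix.add_apply,
    Matrix.smul_apply, smul_eq_mul, coneJacobian_apply hH hx, coneJacobian_apply hφ hx]
  simp only [variation]
  ring

lemma hasDerivAt_det_add_smul {ι : Type*} [Fintype ι] [DecidableEq ι] (A B : Matrix ι ι ℝ)
    (t : ℝ) : HasDerivAt (fun s : ℝ ↦ (A + s • B).det) ((A + t • B).adjugate * B).trace t := by
  have entry (i j : ι) : HasDerivAt (fun s : ℝ ↦ (A + s • B) i j) (B i j) t := by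
    simpa using ((hasDerivAt_id t).mul_const (B i j)).const_add (A i j)
  refine (hasFDerivAt_det fun i j ↦ (entry i j).hasFDerivAt).hasDerivAt.congr_deriv ?_
  simp [Matrix.trace, Matrix.mul_apply]

lemma hasDerivAt_coneDensity_variation (hH : SmoothOffZero H) (hφ : SmoothOffZero φ) (t : ℝ)
    (hx : x ≠ 0) : HasDerivAt (fun s ↦ coneDensity (variation H φ s) x)
      (mixedDensity (variation H φ t) φ x) t := by
  simp only [coneDensity, mixedDensity, coneJacobian_variation hH hφ _ hx]
  exact hasDerivAt_det_add_smul _ _ t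

lemma continuousOn_coneJacobian (hH : SmoothOffZero H) :
    ContinuousOn (coneJacobian H) {(0 : Euc n)}ᶜ :=
  continuousOn_pi.2 fun i ↦ continuousOn_pi.2 fun j ↦
    (smoothOffZero_coneJacobian hH i j).continuousOn

lemma continuousOn_coneJacobian_variation (hH : SmoothOffZero H) (hφ : SmoothOffZero φ)
    (U : Set ℝ) : ContinuousOn (fun z : ℝ × Euc n ↦ coneJacobian (variation H φ z.1) z.2)
      (U ×ˢ {(0 : Euc n)}ᶜ) := by
  have snd_mapsTo : Set.MapsTo Prod.snd (U ×ˢ {(0 : Euc n)}ᶜ) {0}ᶜ := fun z hz ↦ hz.2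
  have sum_continuousOn := ((continuousOn_coneJacobian hH).comp continuousOn_snd snd_mapsTo).add
    (continuousOn_fst.smul ((continuousOn_coneJacobian hφ).comp continuousOn_snd snd_mapsTo))
  exact sum_continuousOn.congr fun z hz ↦ coneJacobian_variation hH hφ z.1 hz.2

lemma continuousOn_coneDensity_variation (hH : SmoothOffZero H) (hφ : SmoothOffZero φ)
    (U : Set ℝ) : ContinuousOn (fun z : ℝ × Euc n ↦ coneDensity (variation H φ z.1) z.2)
      (U ×ˢ {(0 : Euc n)}ᶜ) :=
  (Continuous.matrix_det continuous_id).comp_continuousOn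
    (continuousOn_coneJacobian_variation hH hφ U)

lemma continuousOn_mixedDensity_variation (hH : SmoothOffZero H) (hφ : SmoothOffZero φ)
    (U : Set ℝ) : ContinuousOn (fun z : ℝ × Euc n ↦ mixedDensity (variation H φ z.1) φ z.2)
      (U ×ˢ {(0 : Euc n)}ᶜ) := by
  have jacobian := continuousOn_coneJacobian_variation hH hφ U
  have adjugate := (Continuous.matrix_adjugate continuous_id).comp_continuousOn jacobian
  exact (Continuous.matrix_trace continuous_id).comp_continuousOn
    (adjugate.mul ((continuousOn_coneJacobian hφ).comp continuousOn_snd fun z hz ↦ hz.2))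

theorem hasDerivAt_shellIntegral_coneDensity_variation (hH : SmoothOffZero H)
    (hφ : SmoothOffZero φ) (t : ℝ) :
    HasDerivAt (fun s ↦ shellIntegral (coneDensity (variation H φ s)))
      (shellIntegral (mixedDensity (variation H φ t) φ)) t :=
  hasDerivAt_shellIntegral isOpen_univ
    (fun s _ ↦ (smoothOffZero_coneDensity (smoothOffZero_variation hH hφ s)).continuousOn)
    (continuousOn_mixedDensity_variation hH hφ _)
    (fun s _ _ hx ↦ hasDerivAt_coneDensity_variation hH hφ s hx) (Set.mem_univ t)

lemma PosHomogeneous.exists_forall_abs_le (hf₀ : PosHomogeneous 0 f) (hf : SmoothOffZero f) :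
    ∃ C, ∀ x ≠ 0, |f x| ≤ C := by
  have sphere_subset : sphere (0 : Euc n) 1 ⊆ {0}ᶜ :=
    fun z hz ↦ ne_zero_of_mem_unit_sphere ⟨z, hz⟩
  obtain ⟨C, hC⟩ := (isCompact_sphere (0 : Euc n) 1).exists_bound_of_continuousOn
    (hf.continuousOn.mono sphere_subset)
  refine ⟨C, fun x hx ↦ ?_⟩
  have scale := hf₀ ‖x‖⁻¹ (inv_pos.2 (norm_pos_iff.2 hx)) x hx
  rw [zpow_zero, one_mul] at scale
  exact scale ▸ hC _ (mem_sphere_zero_iff_norm.2 (norm_smul_inv_norm (𝕜 := ℝ) hx))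

lemma continuousOn_hessForm (hH : SmoothOffZero H) :
    ContinuousOn (fun z : Euc n × Euc n ↦ hessForm H z.1 z.2) ({(0 : Euc n)}ᶜ ×ˢ Set.univ) := by
  simp only [hessForm_eq_sum]
  refine continuousOn_finsetSum _ fun i _ ↦ continuousOn_finsetSum _ fun j _ ↦ ?_
  exact ContinuousOn.mul (by fun_prop)
    (((hH.pderiv j).pderiv i).continuousOn.comp continuousOn_fst fun z hz ↦ hz.1)

lemma IsStrictSupport.exists_abs_hessForm_le (h : IsStrictSupport H) (hφ : SmoothOffZero φ) :
    ∃ C, ∀ x v : Euc n, ‖x‖ = 1 → ‖v‖ = 1 → ⟪x, v⟫ = 0 →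
      |hessForm φ x v| ≤ C * hessForm H x v := by
  set S : Set (Euc n × Euc n) := (sphere 0 1 ×ˢ sphere 0 1) ∩ {z | ⟪z.1, z.2⟫ = 0}
  have S_compact : IsCompact S := ((isCompact_sphere _ _).prod (isCompact_sphere _ _)).inter_right
    (isClosed_eq (by fun_prop) continuous_const)
  have S_subset : S ⊆ {(0 : Euc n)}ᶜ ×ˢ Set.univ :=
    fun z hz ↦ ⟨ne_zero_of_mem_unit_sphere ⟨z.1, hz.1.1⟩, trivial⟩
  have hessForm_pos (z : Euc n × Euc n) (hz : z ∈ S) : 0 < hessForm H z.1 z.2 :=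
    h.hessForm_pos_of_orthonormal _ _ (mem_sphere_zero_iff_norm.1 hz.1.1)
      (mem_sphere_zero_iff_norm.1 hz.1.2) hz.2
  obtain ⟨C, hC⟩ := S_compact.exists_bound_of_continuousOn
    (((continuousOn_hessForm hφ).mono S_subset).div
      ((continuousOn_hessForm h.smooth).mono S_subset) fun z hz ↦ (hessForm_pos z hz).ne')
  refine ⟨C, fun x v hx hv hxv ↦ ?_⟩
  have mem : (x, v) ∈ S := ⟨⟨mem_sphere_zero_iff_norm.2 hx, mem_sphere_zero_iff_norm.2 hv⟩, hxv⟩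
  have hq : 0 < hessForm H x v := hessForm_pos _ mem
  have bound : ‖hessForm φ x v / hessForm H x v‖ ≤ C := hC _ mem
  rwa [norm_div, Real.norm_of_nonneg hq.le, div_le_iff₀ hq, Real.norm_eq_abs] at bound

lemma eventually_abs_mul_lt_one (C : ℝ) : ∀ᶠ t in nhds (0 : ℝ), |t| * C < 1 :=
  (continuous_abs.mul continuous_const).continuousAt.eventually_lt continuousAt_const (by simp)

lemma eventually_one_add_mul_pos (hf : SmoothOffZero f) (hf₀ : PosHomogeneous 0 f) :
    ∀ᶠ t in nhds (0 : ℝ), ∀ x ≠ 0, 0 < 1 + t * f x := by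
  obtain ⟨C, hC⟩ := hf₀.exists_forall_abs_le hf
  filter_upwards [eventually_abs_mul_lt_one C] with t ht x hx
  have : |t * f x| < 1 := by
    rw [abs_mul]
    exact (mul_le_mul_of_nonneg_left (hC x hx) (abs_nonneg t)).trans_lt ht
  linarith [(abs_lt.1 this).1]

theorem IsStrictSupport.eventually_variation (h : IsStrictSupport H) (hf : SmoothOffZero f)
    (hf₀ : PosHomogeneous 0 f) :
    ∀ᶠ t in nhds (0 : ℝ), IsStrictSupport (variation H (fun x ↦ f x * H x) t) := by
  have hφ : SmoothOffZero fun x ↦ f x * H x := hf.mul h.smooth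
  obtain ⟨C, hC⟩ := h.exists_abs_hessForm_le hφ
  filter_upwards [eventually_abs_mul_lt_one C, eventually_one_add_mul_pos hf hf₀]
    with t ht factor_pos
  refine ⟨smoothOffZero_variation h.smooth hφ t, fun c hc x ↦ ?_, fun x hx ↦ ?_,
    fun x v hx hv hxv ↦ ?_⟩
  · rcases eq_or_ne x 0 with rfl | hx
    · simp [variation, h.map_zero]
    · rw [variation, variation, hf₀ c hc x hx, h.map_smul c hc x, zpow_zero]
      ring
  · have hx₀ : x ≠ 0 := ne_zero_of_norm_ne_zero (by simp [hx])
    calc 0 < (1 + t * f x) * H x := mul_pos (factor_pos x hx₀) (h.pos hx₀)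
      _ = variation H (fun x ↦ f x * H x) t x := by
        rw [variation]
        ring
  · rw [hessForm_variation h.smooth hφ t (ne_zero_of_norm_ne_zero (by simp [hx]))]
    have hq := h.hessForm_pos_of_orthonormal x v hx hv hxv
    have := mul_le_mul_of_nonneg_left (hC x v hx hv hxv) (abs_nonneg t)
    rw [← abs_mul] at this
    nlinarith [neg_abs_le (t * hessForm (fun x ↦ f x * H x) x v)]

end Variation

section PoincareInequality

variable {n : ℕ} {f H : Euc n → ℝ} {t : ℝ}

lemma deriv_deriv_nonpos_of_mul_le_sq {V : ℝ → ℝ} (hcont : ContinuousAt V 0)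
    (hpos : 0 < V 0) (hderiv : deriv V 0 = 0)
    (hle : ∀ᶠ t in nhds 0, V t * V (-t) ≤ V 0 ^ 2) : deriv (deriv V) 0 ≤ 0 := by
  by_contra! hconvex
  have hmin : ∀ᶠ t in nhds 0, V 0 ≤ V t :=
    isLocalMin_of_deriv_deriv_pos hconvex hderiv hcont
  have neg_tendsto : Filter.Tendsto (fun t : ℝ ↦ -t) (nhds 0) (nhds 0) :=
    (continuous_neg (G := ℝ)).tendsto' 0 0 neg_zero
  have hconst : V =ᶠ[nhds 0] fun _ ↦ V 0 := by
    filter_upwards [hmin, neg_tendsto.eventually hmin, hle] with t ht ht_neg hmul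
    nlinarith
  rw [hconst.deriv.deriv_eq] at hconvex
  simp at hconvex

lemma posHomogeneous_div_one_add_mul (hf₀ : PosHomogeneous 0 f) (t : ℝ) :
    PosHomogeneous 0 fun x ↦ f x / (1 + t * f x) := by
  intro c hc x hx
  simp only [hf₀ c hc x hx, zpow_zero, one_mul]

lemma smoothOffZero_div_one_add_mul (hf : SmoothOffZero f) (ht : ∀ x ≠ 0, 0 < 1 + t * f x) :
    SmoothOffZero fun x ↦ f x / (1 + t * f x) :=
  hf.div (contDiffOn_const.add (contDiffOn_const.mul hf)) fun x hx ↦ (ht x hx).ne'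

lemma mixedDensity_congr {φ ψ : Euc n → ℝ} (h : ∀ x ≠ 0, φ x = ψ x) {x : Euc n} (hx : x ≠ 0) :
    mixedDensity H φ x = mixedDensity H ψ x := by
  have jacobian_eq : coneJacobian φ x = coneJacobian ψ x := by
    ext i j
    refine pderiv_congr (fun y hy ↦ ?_) j hx
    rw [coneMap_apply, coneMap_apply, pderiv_congr h i hy]
  rw [mixedDensity, mixedDensity, jacobian_eq]

/-- `f H = (f / (1 + t f)) · (H + t f H)`, so the first variation formula at `H + t f H` applies. -/
lemma shellIntegral_mixedDensity_variation
    (ht : IsStrictSupport (variation H (fun x ↦ f x * H x) t)) (hf : SmoothOffZero f)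
    (hf₀ : PosHomogeneous 0 f) (hft : ∀ x ≠ 0, 0 < 1 + t * f x) :
    shellIntegral (mixedDensity (variation H (fun x ↦ f x * H x) t) fun x ↦ f x * H x) =
      (n + 1) * shellIntegral fun x ↦
        f x / (1 + t * f x) * coneDensity (variation H (fun x ↦ f x * H x) t) x := by
  rw [← shellIntegral_mixedDensity ht.smooth ht.posHomogeneous (fun x hx ↦ (ht.pos hx).ne')
    (smoothOffZero_div_one_add_mul hf hft) (posHomogeneous_div_one_add_mul hf₀ t)]
  refine shellIntegral_congr fun x hx ↦ mixedDensity_congr (fun y hy ↦ ?_) hx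
  have factor : H y + t * (f y * H y) = (1 + t * f y) * H y := by ring
  rw [variation, factor, ← mul_assoc, div_mul_cancel₀ _ (hft y hy).ne']

lemma hasDerivAt_div_one_add_mul {a : ℝ} (ha : 1 + t * a ≠ 0) :
    HasDerivAt (fun s ↦ a / (1 + s * a)) (-(a / (1 + t * a)) ^ 2) t := by
  have denominator : HasDerivAt (fun s ↦ 1 + s * a) a t := by
    simpa using ((hasDerivAt_id t).mul_const a).const_add 1
  refine ((hasDerivAt_const t a).div denominator ha).congr_deriv ?_
  field

lemma hasDerivAt_shellIntegral_div_one_add_mul (hH : SmoothOffZero H) (hf : SmoothOffZero f)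
    (hf₀ : PosHomogeneous 0 f) :
    HasDerivAt (fun t ↦ shellIntegral fun x ↦
        f x / (1 + t * f x) * coneDensity (variation H (fun x ↦ f x * H x) t) x)
      (shellIntegral fun x ↦
        f x * mixedDensity H (fun x ↦ f x * H x) x - f x ^ 2 * coneDensity H x) 0 := by
  set φ : Euc n → ℝ := fun x ↦ f x * H x
  have hφ : SmoothOffZero φ := hf.mul hH
  obtain ⟨U, hft, hU, zero_mem⟩ :=
    _root_.eventually_nhds_iff.1 (eventually_one_add_mul_pos hf hf₀)
  have f_continuousOn : ContinuousOn (fun z : ℝ × Euc n ↦ f z.2) (U ×ˢ {0}ᶜ) :=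
    hf.continuousOn.comp continuousOn_snd fun z hz ↦ hz.2
  have quotient : ContinuousOn (fun z : ℝ × Euc n ↦ f z.2 / (1 + z.1 * f z.2)) (U ×ˢ {0}ᶜ) :=
    f_continuousOn.div (continuousOn_const.add (continuousOn_fst.mul f_continuousOn))
      fun z hz ↦ (hft z.1 hz.1 z.2 hz.2).ne'
  have density_deriv := hasDerivAt_shellIntegral
    (g := fun t x ↦ f x / (1 + t * f x) * coneDensity (variation H φ t) x)
    (g' := fun t x ↦ -(f x / (1 + t * f x)) ^ 2 * coneDensity (variation H φ t) x +
      f x / (1 + t * f x) * mixedDensity (variation H φ t) φ x) hU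
    (fun t ht ↦ ((smoothOffZero_div_one_add_mul hf (hft t ht)).mul
      (smoothOffZero_coneDensity (smoothOffZero_variation hH hφ t))).continuousOn)
    (((quotient.pow 2).neg.mul (continuousOn_coneDensity_variation hH hφ U)).add
      (quotient.mul (continuousOn_mixedDensity_variation hH hφ U)))
    (fun t ht x hx ↦ (hasDerivAt_div_one_add_mul (hft t ht x hx).ne').mul
      (hasDerivAt_coneDensity_variation hH hφ t hx)) zero_mem
  refine density_deriv.congr_deriv (shellIntegral_congr fun x _ ↦ ?_)
  simp only [variation_zero, zero_mul, add_zero, div_one]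
  ring

theorem IsStrictSupport.deriv_deriv_shellIntegral_coneDensity (h : IsStrictSupport H)
    (hf : SmoothOffZero f) (hf₀ : PosHomogeneous 0 f) :
    deriv (deriv fun t ↦ shellIntegral (coneDensity (variation H (fun x ↦ f x * H x) t))) 0 =
      (n + 1) * (n * shellIntegral (fun x ↦ f x ^ 2 * coneDensity H x) -
        shellIntegral (dirichletDensity H f)) := by
  set φ : Euc n → ℝ := fun x ↦ f x * H x
  have hφ : SmoothOffZero φ := hf.mul h.smooth
  have deriv_eq : (deriv fun t ↦ shellIntegral (coneDensity (variation H φ t))) =ᶠ[nhds 0]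
      fun t ↦ (n + 1) * shellIntegral fun x ↦
        f x / (1 + t * f x) * coneDensity (variation H φ t) x := by
    filter_upwards [h.eventually_variation hf hf₀, eventually_one_add_mul_pos hf hf₀]
      with t ht hft
    rw [(hasDerivAt_shellIntegral_coneDensity_variation h.smooth hφ t).deriv,
      shellIntegral_mixedDensity_variation ht hf hf₀ hft]
  have hmixed : SmoothOffZero fun x ↦ f x * mixedDensity H φ x :=
    hf.mul (smoothOffZero_mixedDensity h.smooth hφ)
  have hsq : SmoothOffZero fun x ↦ f x ^ 2 * coneDensity H x :=
    (hf.pow 2).mul (smoothOffZero_coneDensity h.smooth)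
  rw [deriv_eq.deriv_eq,
    ((hasDerivAt_shellIntegral_div_one_add_mul h.smooth hf hf₀).const_mul _).deriv,
    shellIntegral_sub hmixed.continuousOn hsq.continuousOn,
    shellIntegral_mul_mixedDensity h.smooth h.posHomogeneous (fun x hx ↦ (h.pos hx).ne') hf hf₀]
  ring

lemma IsStrictSupport.shellIntegral_coneDensity_pos (h : IsStrictSupport H) :
    0 < shellIntegral (coneDensity H) :=
  shellIntegral_pos (smoothOffZero_coneDensity h.smooth).continuousOn
    fun _ hx ↦ h.coneDensity_pos hx

theorem IsStrictSupport.poincare_of_mean_eq_zero (h : IsStrictSupport H) (hf : SmoothOffZero f)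
    (hf₀ : PosHomogeneous 0 f) (hmean : shellIntegral (fun x ↦ f x * coneDensity H x) = 0) :
    n * shellIntegral (fun x ↦ f x ^ 2 * coneDensity H x) ≤
      shellIntegral (dirichletDensity H f) := by
  set φ : Euc n → ℝ := fun x ↦ f x * H x
  have hφ : SmoothOffZero φ := hf.mul h.smooth
  set V : ℝ → ℝ := fun t ↦ shellIntegral (coneDensity (variation H φ t))
  have hV : HasDerivAt V (shellIntegral (mixedDensity H φ)) 0 := by
    simpa only [variation_zero] using
      hasDerivAt_shellIntegral_coneDensity_variation h.smooth hφ 0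
  have V_zero : V 0 = shellIntegral (coneDensity H) := by simp only [V, variation_zero]
  have deriv_zero : deriv V 0 = 0 := by
    rw [hV.deriv, shellIntegral_mixedDensity h.smooth h.posHomogeneous
      (fun x hx ↦ (h.pos hx).ne') hf hf₀, hmean, mul_zero]
  have support := h.eventually_variation hf hf₀
  have neg_tendsto : Filter.Tendsto (fun t : ℝ ↦ -t) (nhds 0) (nhds 0) :=
    (continuous_neg (G := ℝ)).tendsto' 0 0 neg_zero
  have logConcave : ∀ᶠ t in nhds 0, V t * V (-t) ≤ V 0 ^ 2 := by
    filter_upwards [support, neg_tendsto.eventually support] with t ht ht_neg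
    refine V_zero ▸ shellIntegral_coneDensity_mul_le_sq h ht ht_neg fun x ↦ ?_
    rw [variation, variation]
    ring
  have second_deriv := deriv_deriv_nonpos_of_mul_le_sq hV.continuousAt
    (V_zero ▸ h.shellIntegral_coneDensity_pos) deriv_zero logConcave
  rw [h.deriv_deriv_shellIntegral_coneDensity hf hf₀] at second_deriv
  exact sub_nonpos.1 (nonpos_of_mul_nonpos_right second_deriv (by positivity))

lemma dirichletDensity_sub_const (H : Euc n → ℝ) (hf : SmoothOffZero f) (m : ℝ) {x : Euc n}
    (hx : x ≠ 0) : dirichletDensity H (fun x ↦ f x - m) x = dirichletDensity H f x := by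
  have pderiv_eq (i : Fin (n + 1)) : pderiv i (fun x ↦ f x - m) x = pderiv i f x := by
    rw [pderiv_sub i (hf.differentiableAt hx) (differentiableAt_const m), pderiv_const, sub_zero]
  simp only [dirichletDensity, centroAffineFlux, pderiv_eq]

theorem IsStrictSupport.poincare (h : IsStrictSupport H) (hf : SmoothOffZero f)
    (hf₀ : PosHomogeneous 0 f) :
    n * shellIntegral (fun x ↦ f x ^ 2 * coneDensity H x) ≤ shellIntegral (dirichletDensity H f) +
      n * shellIntegral (fun x ↦ f x * coneDensity H x) ^ 2 / shellIntegral (coneDensity H) := by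
  have volume_pos := h.shellIntegral_coneDensity_pos
  have hD := smoothOffZero_coneDensity h.smooth
  have hfD : SmoothOffZero fun x ↦ f x * coneDensity H x := hf.mul hD
  have hf2D : SmoothOffZero fun x ↦ f x ^ 2 * coneDensity H x := (hf.pow 2).mul hD
  set A := shellIntegral fun x ↦ f x * coneDensity H x
  set W := shellIntegral (coneDensity H)
  have hmD (c : ℝ) : SmoothOffZero fun x ↦ c * coneDensity H x := contDiffOn_const.mul hD
  have hmfD (c : ℝ) : SmoothOffZero fun x ↦ c * (f x * coneDensity H x) :=
    contDiffOn_const.mul hfD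
  have mean_zero : shellIntegral (fun x ↦ (f x - A / W) * coneDensity H x) = 0 := by
    simp only [sub_mul]
    rw [shellIntegral_sub hfD.continuousOn (hmD _).continuousOn, shellIntegral_const_mul,
      div_mul_cancel₀ _ volume_pos.ne', sub_self]
  have variance : shellIntegral (fun x ↦ (f x - A / W) ^ 2 * coneDensity H x) =
      shellIntegral (fun x ↦ f x ^ 2 * coneDensity H x) - A ^ 2 / W := by
    have expand (x : Euc n) : (f x - A / W) ^ 2 * coneDensity H x = f x ^ 2 * coneDensity H x -
        2 * (A / W) * (f x * coneDensity H x) + (A / W) ^ 2 * coneDensity H x := by ring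
    simp only [expand]
    rw [shellIntegral_add (hf2D.continuousOn.fun_sub (hmfD _).continuousOn) (hmD _).continuousOn,
      shellIntegral_sub hf2D.continuousOn (hmfD _).continuousOn, shellIntegral_const_mul,
      shellIntegral_const_mul]
    field
  have centered := h.poincare_of_mean_eq_zero (hf.sub contDiffOn_const)
    (fun c hc x hx ↦ by simp only [hf₀ c hc x hx, zpow_zero, one_mul]) mean_zero
  rw [variance, shellIntegral_congr fun x hx ↦ dirichletDensity_sub_const H hf _ hx] at centered
  rw [mul_div_assoc]
  linarith

end PoincareInequality

section TangentialGradient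

variable {n : ℕ} {H L g : Euc n → ℝ} {x : Euc n}

/-- The Euclidean gradient of `H` with its radial part `H(x) x / ‖x‖²` removed. For the
`1`-homogeneous extension `H` of `h` it is the `0`-homogeneous extension of the spherical gradient
`∇̄h`. -/
def tangentialGradient (H : Euc n → ℝ) (x : Euc n) : Euc n :=
  gradient H x - (H x / ‖x‖ ^ 2) • x

lemma tangentialGradient_apply (H : Euc n → ℝ) (x : Euc n) (i : Fin (n + 1)) :
    tangentialGradient H x i = pderiv i H x - H x / ‖x‖ ^ 2 * x i := by
  rw [tangentialGradient, PiLp.sub_apply, PiLp.smul_apply, gradient_apply, smul_eq_mul]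

lemma smoothOffZero_div_norm_sq (hH : SmoothOffZero H) : SmoothOffZero fun x ↦ H x / ‖x‖ ^ 2 :=
  hH.div (smoothOffZero_norm.pow 2) fun _ hx ↦ pow_ne_zero 2 (norm_ne_zero_iff.2 hx)

lemma smoothOffZero_tangentialGradient (hH : SmoothOffZero H) (i : Fin (n + 1)) :
    SmoothOffZero fun x ↦ tangentialGradient H x i := by
  simp only [tangentialGradient_apply]
  exact (hH.pderiv i).sub ((smoothOffZero_div_norm_sq hH).mul (smoothOffZero_coord i))

lemma inner_tangentialGradient_self (hH : SmoothOffZero H) (hH₁ : PosHomogeneous 1 H)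
    (hx : x ≠ 0) : ⟪tangentialGradient H x, x⟫ = 0 := by
  rw [tangentialGradient, inner_sub_left, real_inner_smul_left, real_inner_self_eq_norm_sq,
    inner_gradient_self hH hH₁ hx,
    div_mul_cancel₀ _ (pow_ne_zero 2 (norm_ne_zero_iff.2 hx)), sub_self]

lemma inner_gradient_tangentialGradient (hL : SmoothOffZero L) (hL₁ : PosHomogeneous 1 L)
    (H : Euc n → ℝ) (hx : x ≠ 0) :
    ⟪gradient H x, tangentialGradient L x⟫ = ⟪tangentialGradient H x, tangentialGradient L x⟫ := by
  have gradient_split : tangentialGradient H x = gradient H x - (H x / ‖x‖ ^ 2) • x := rfl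
  rw [gradient_split, inner_sub_left, real_inner_smul_left, real_inner_comm _ x,
    inner_tangentialGradient_self hL hL₁ hx, mul_zero, sub_zero]

lemma norm_tangentialGradient_sq (hH : SmoothOffZero H) (hH₁ : PosHomogeneous 1 H) (hx : x ≠ 0) :
    ‖tangentialGradient H x‖ ^ 2 = ‖gradient H x‖ ^ 2 - (H x / ‖x‖) ^ 2 := by
  have hnorm := norm_ne_zero_iff.2 hx
  rw [tangentialGradient, norm_sub_sq_real, real_inner_smul_right,
    inner_gradient_self hH hH₁ hx, norm_smul, mul_pow, Real.norm_eq_abs, sq_abs]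
  field_simp
  ring

lemma pderiv_div_norm (hH : SmoothOffZero H) (hx : x ≠ 0) (i : Fin (n + 1)) :
    pderiv i (fun y ↦ H y / ‖y‖) x = tangentialGradient H x i / ‖x‖ := by
  have hnorm := norm_ne_zero_iff.2 hx
  rw [pderiv_div i (hH.differentiableAt hx) (smoothOffZero_norm.differentiableAt hx) hnorm,
    pderiv_norm i hx, tangentialGradient_apply]
  field_simp

lemma fderiv_div_norm_apply (hH : SmoothOffZero H) (hx : x ≠ 0) (v : Euc n) :
    fderiv ℝ (fun y ↦ H y / ‖y‖) x v = ⟪tangentialGradient H x, v⟫ / ‖x‖ := by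
  simp only [fderiv_apply_eq_sum_pderiv, pderiv_div_norm hH hx, real_inner_eq_sum, Finset.sum_div]
  exact Finset.sum_congr rfl fun i _ ↦ by ring

lemma sum_pderiv_div_norm_sq_mul_coord (hH : SmoothOffZero H) (hH₁ : PosHomogeneous 1 H)
    (hx : x ≠ 0) :
    ∑ i, pderiv i (fun y ↦ H y / ‖y‖ ^ 2 * y i) x = n * H x / ‖x‖ ^ 2 := by
  have hq : SmoothOffZero fun x ↦ H x / ‖x‖ ^ 2 := smoothOffZero_div_norm_sq hH
  have hq₁ : PosHomogeneous (-1) fun x ↦ H x / ‖x‖ ^ 2 := by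
    intro c hc y hy
    have := norm_ne_zero_iff.2 hy
    simp only [hH₁ c hc y hy, norm_smul, Real.norm_eq_abs, abs_of_pos hc, zpow_one,
      _root_.zpow_neg_one]
    field_simp
  have product (i : Fin (n + 1)) : pderiv i (fun y ↦ H y / ‖y‖ ^ 2 * y i) x =
      x i * pderiv i (fun y ↦ H y / ‖y‖ ^ 2) x + H x / ‖x‖ ^ 2 := by
    rw [pderiv_mul i (hq.differentiableAt hx) ((smoothOffZero_coord i).differentiableAt hx),
      pderiv_coord, if_pos rfl]
    ring
  simp only [product, Finset.sum_add_distrib, hq₁.euler (hq.differentiableAt hx) hx,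
    Finset.sum_const, Finset.card_univ, Fintype.card_fin, nsmul_eq_mul]
  push_cast
  ring

lemma sum_pderiv_tangentialGradient (hH : SmoothOffZero H) (hH₁ : PosHomogeneous 1 H)
    (hx : x ≠ 0) : ∑ i, pderiv i (fun y ↦ tangentialGradient H y i) x =
      (ehess n H x).trace - n * H x / ‖x‖ ^ 2 := by
  have hq := smoothOffZero_div_norm_sq hH
  simp only [tangentialGradient_apply]
  have split (i : Fin (n + 1)) : pderiv i (fun y ↦ pderiv i H y - H y / ‖y‖ ^ 2 * y i) x =
      ehess n H x i i - pderiv i (fun y ↦ H y / ‖y‖ ^ 2 * y i) x :=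
    pderiv_sub i ((hH.pderiv i).differentiableAt hx)
      (SmoothOffZero.differentiableAt (hq.mul (smoothOffZero_coord i)) hx)
  rw [Finset.sum_congr rfl fun i _ ↦ split i, Finset.sum_sub_distrib,
    sum_pderiv_div_norm_sq_mul_coord hH hH₁ hx, Matrix.trace]
  rfl

/-- Green's formula on the sphere: the spherical Laplacian of `L/‖x‖` is `tr D²L - n L/‖x‖²` at
unit `x`. -/
theorem shellIntegral_green (hL : SmoothOffZero L) (hL₁ : PosHomogeneous 1 L)
    (hg : SmoothOffZero g) :
    shellIntegral (fun x ↦ fderiv ℝ g x (tangentialGradient L x) +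
      g x * ((ehess n L x).trace - n * L x / ‖x‖ ^ 2)) = 0 := by
  have hV := smoothOffZero_tangentialGradient hL
  rw [← shellIntegral_divergence_eq_zero (Y := fun i x ↦ g x * tangentialGradient L x i)
    (fun i ↦ hg.mul (hV i)) fun x hx ↦ ?tangent]
  case tangent =>
    simp only [mul_left_comm _ (g x), ← Finset.mul_sum, ← real_inner_eq_sum, real_inner_comm _ x,
      inner_tangentialGradient_self hL hL₁ hx, mul_zero]
  refine shellIntegral_congr fun x hx ↦ ?_
  have product (i : Fin (n + 1)) : pderiv i (fun y ↦ g y * tangentialGradient L y i) x =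
      tangentialGradient L x i * pderiv i g x +
        g x * pderiv i (fun y ↦ tangentialGradient L y i) x := by
    rw [pderiv_mul i (hg.differentiableAt hx) ((hV i).differentiableAt hx)]
    ring
  rw [Finset.sum_congr rfl fun i _ ↦ product i, Finset.sum_add_distrib, ← Finset.mul_sum,
    sum_pderiv_tangentialGradient hL hL₁ hx, fderiv_apply_eq_sum_pderiv]

end TangentialGradient

section DualWeight

variable {n : ℕ} {H : Euc n → ℝ} {x : Euc n}

lemma contDiffOn_gradient (hH : SmoothOffZero H) :
    ContDiffOn ℝ (⊤ : ℕ∞) (gradient H) {(0 : Euc n)}ᶜ := by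
  refine contDiffOn_euclidean.2 fun i ↦ ?_
  simp only [gradient_apply]
  exact hH.pderiv i

lemma pderiv_norm_gradient (hH : SmoothOffZero H) (hx : x ≠ 0) (hgrad : gradient H x ≠ 0)
    (i : Fin (n + 1)) :
    pderiv i (fun y ↦ ‖gradient H y‖) x =
      (ehess n H x *ᵥ (gradient H x).ofLp) i / ‖gradient H x‖ := by
  have hN : DifferentiableAt ℝ (fun y ↦ ‖gradient H y‖) x :=
    (((contDiffOn_gradient hH).contDiffAt (compl_zero_mem_nhds hx)).norm ℝ
      hgrad).differentiableAt (by simp)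
  have expand (y : Euc n) : ‖gradient H y‖ * ‖gradient H y‖ =
      ∑ j, pderiv j H y * pderiv j H y := by
    simp only [← real_inner_self_eq_norm_mul_norm, real_inner_eq_sum, gradient_apply]
  have deriv_sq : pderiv i (fun y ↦ ‖gradient H y‖ * ‖gradient H y‖) x =
      ∑ j, (pderiv i (pderiv j H) x * pderiv j H x + pderiv j H x * pderiv i (pderiv j H) x) := by
    have hpderiv (j : Fin (n + 1)) := (hH.pderiv j).differentiableAt hx
    simp only [expand]
    rw [pderiv_sum i fun j _ ↦ (hpderiv j).fun_mul (hpderiv j)]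
    exact Finset.sum_congr rfl fun j _ ↦ pderiv_mul i (hpderiv j) (hpderiv j)
  have mulVec_eq : (ehess n H x *ᵥ (gradient H x).ofLp) i =
      ∑ j, pderiv i (pderiv j H) x * pderiv j H x := by
    simp only [Matrix.mulVec, dotProduct, ehess_apply, gradient_apply]
  rw [pderiv_mul i hN hN, Finset.sum_add_distrib] at deriv_sq
  simp only [mul_comm (pderiv _ H x)] at deriv_sq
  rw [eq_div_iff (norm_ne_zero_iff.2 hgrad), mulVec_eq]
  linarith

lemma fderiv_norm_gradient_apply (hH : SmoothOffZero H) (hx : x ≠ 0) (hgrad : gradient H x ≠ 0)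
    (v : Euc n) : fderiv ℝ (fun y ↦ ‖gradient H y‖) x v =
      v.ofLp ⬝ᵥ ehess n H x *ᵥ (gradient H x).ofLp / ‖gradient H x‖ := by
  simp only [fderiv_apply_eq_sum_pderiv, pderiv_norm_gradient hH hx hgrad, dotProduct,
    Finset.sum_div, mul_div_assoc]

lemma tangentialGradient_dotProduct_ehess_mulVec (hH : SmoothOffZero H) (hH₁ : PosHomogeneous 1 H)
    (hx : x ≠ 0) :
    (tangentialGradient H x).ofLp ⬝ᵥ ehess n H x *ᵥ (gradient H x).ofLp =
      hessForm H x (gradient H x) := by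
  rw [tangentialGradient, WithLp.ofLp_sub, WithLp.ofLp_smul, sub_dotProduct, smul_dotProduct,
    Matrix.dotProduct_mulVec x.ofLp, self_vecMul_ehess hH hH₁ hx, zero_dotProduct, smul_zero,
    sub_zero, hessForm]

/-- The weight `h^p |Dh|^r` as a `0`-homogeneous function. The equation says that `coneDensity H`
is this weight with `r = n + 1 - q`. -/
def dualWeight (H : Euc n → ℝ) (p r : ℝ) (x : Euc n) : ℝ := (H x / ‖x‖) ^ p * ‖gradient H x‖ ^ r

namespace IsStrictSupport

lemma div_norm_pos (h : IsStrictSupport H) (hx : x ≠ 0) : 0 < H x / ‖x‖ :=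
  div_pos (h.pos hx) (norm_pos_iff.2 hx)

lemma smoothOffZero_div_norm (h : IsStrictSupport H) : SmoothOffZero fun x ↦ H x / ‖x‖ :=
  h.smooth.div smoothOffZero_norm fun _ hx ↦ norm_ne_zero_iff.2 hx

lemma smoothOffZero_norm_gradient (h : IsStrictSupport H) :
    SmoothOffZero fun x ↦ ‖gradient H x‖ :=
  (contDiffOn_gradient h.smooth).norm ℝ fun _ hx ↦ h.gradient_ne_zero hx

lemma norm_gradient_pos (h : IsStrictSupport H) (hx : x ≠ 0) : 0 < ‖gradient H x‖ :=
  norm_pos_iff.2 (h.gradient_ne_zero hx)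

lemma smoothOffZero_norm_gradient_rpow (h : IsStrictSupport H) (r : ℝ) :
    SmoothOffZero fun x ↦ ‖gradient H x‖ ^ r :=
  h.smoothOffZero_norm_gradient.rpow_const_of_ne fun _ hx ↦ (h.norm_gradient_pos hx).ne'

lemma smoothOffZero_dualWeight (h : IsStrictSupport H) (p r : ℝ) :
    SmoothOffZero (dualWeight H p r) :=
  (h.smoothOffZero_div_norm.rpow_const_of_ne fun _ hx ↦ (h.div_norm_pos hx).ne').mul
    (h.smoothOffZero_norm_gradient_rpow r)

lemma dualWeight_pos (h : IsStrictSupport H) (p r : ℝ) (hx : x ≠ 0) : 0 < dualWeight H p r x :=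
  mul_pos (Real.rpow_pos_of_pos (h.div_norm_pos hx) p)
    (Real.rpow_pos_of_pos (h.norm_gradient_pos hx) r)

lemma dualWeight_mul_norm_gradient_rpow (h : IsStrictSupport H) (p r s : ℝ) (hx : x ≠ 0) :
    dualWeight H p r x * ‖gradient H x‖ ^ s = dualWeight H p (r + s) x := by
  rw [dualWeight, dualWeight, mul_assoc, Real.rpow_add (h.norm_gradient_pos hx)]

lemma fderiv_dualWeight_apply (h : IsStrictSupport H) (p r : ℝ) (hx : x ≠ 0) (v : Euc n) :
    fderiv ℝ (dualWeight H p r) x v = dualWeight H p r x *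
      (p * ⟪tangentialGradient H x, v⟫ / H x +
        r * (v.ofLp ⬝ᵥ ehess n H x *ᵥ (gradient H x).ofLp) / ‖gradient H x‖ ^ 2) := by
  have hk := h.div_norm_pos hx
  have hG := h.norm_gradient_pos hx
  have hH := h.pos hx
  have deriv_k := (h.smoothOffZero_div_norm.differentiableAt hx).hasFDerivAt.rpow_const
    (p := p) (.inl hk.ne')
  have deriv_G := (h.smoothOffZero_norm_gradient.differentiableAt hx).hasFDerivAt.rpow_const
    (p := r) (.inl hG.ne')
  have fderiv_eq : fderiv ℝ (dualWeight H p r) x = _ := (deriv_k.mul deriv_G).fderiv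
  rw [fderiv_eq]
  simp only [_root_.add_apply, _root_.smul_apply, smul_eq_mul, fderiv_div_norm_apply h.smooth hx,
    fderiv_norm_gradient_apply h.smooth hx (h.gradient_ne_zero hx), dualWeight,
    Real.rpow_sub_one hk.ne', Real.rpow_sub_one hG.ne']
  field_simp
  ring

lemma fderiv_mul_dualWeight_apply (h : IsStrictSupport H) (p r : ℝ) (hx : x ≠ 0) (v : Euc n) :
    fderiv ℝ (fun y ↦ H y * dualWeight H p r y) x v = dualWeight H p r x *
      (⟪gradient H x, v⟫ + p * ⟪tangentialGradient H x, v⟫ +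
        r * (H x * (v.ofLp ⬝ᵥ ehess n H x *ᵥ (gradient H x).ofLp) / ‖gradient H x‖ ^ 2)) := by
  have hH := (h.pos hx).ne'
  rw [fderiv_fun_mul (h.smooth.differentiableAt hx)
    ((h.smoothOffZero_dualWeight p r).differentiableAt hx)]
  simp only [_root_.add_apply, _root_.smul_apply, smul_eq_mul, h.fderiv_dualWeight_apply p r hx,
    ← inner_gradient_left]
  field_simp
  ring

lemma smoothOffZero_mul_dualWeight (h : IsStrictSupport H) (p r : ℝ) :
    SmoothOffZero fun x ↦ H x * dualWeight H p r x :=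
  h.smooth.mul (h.smoothOffZero_dualWeight p r)

/-- Green's formula with `g = H · h^p |Dh|^r` and `L = H`. -/
theorem shellIntegral_green_dualWeight (h : IsStrictSupport H) (p r : ℝ) :
    shellIntegral (fun x ↦ dualWeight H p r x * ((p + 1) * ‖tangentialGradient H x‖ ^ 2 +
      r * (H x * hessForm H x (gradient H x) / ‖gradient H x‖ ^ 2) +
      H x * (ehess n H x).trace - n * (H x / ‖x‖) ^ 2)) = 0 := by
  rw [← shellIntegral_green h.smooth h.posHomogeneous (h.smoothOffZero_mul_dualWeight p r)]
  refine shellIntegral_congr fun x hx ↦ ?_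
  rw [h.fderiv_mul_dualWeight_apply p r hx,
    inner_gradient_tangentialGradient h.smooth h.posHomogeneous H hx,
    tangentialGradient_dotProduct_ehess_mulVec h.smooth h.posHomogeneous hx,
    real_inner_self_eq_norm_sq]
  ring

end IsStrictSupport

end DualWeight

section Coordinates

variable {n : ℕ} {H : Euc n → ℝ} {x : Euc n}

lemma posHomogeneous_coord (j : Fin (n + 1)) : PosHomogeneous 1 fun x : Euc n ↦ x j := by
  intro c _ x _
  simp only [zpow_one, PiLp.smul_apply, smul_eq_mul]

lemma ehess_coord (j : Fin (n + 1)) (x : Euc n) : ehess n (fun y ↦ y j) x = 0 := by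
  ext i k
  have pderiv_eq : pderiv k (fun y : Euc n ↦ y j) = fun _ ↦ if j = k then 1 else 0 :=
    funext fun y ↦ pderiv_coord k j
  rw [ehess_apply, pderiv_eq, pderiv_const, Matrix.zero_apply]

lemma inner_tangentialGradient_coord (v x : Euc n) (j : Fin (n + 1)) :
    ⟪v, tangentialGradient (fun y ↦ y j) x⟫ = v j - x j / ‖x‖ ^ 2 * ⟪v, x⟫ := by
  have gradient_eq : gradient (fun y : Euc n ↦ y j) x = EuclideanSpace.single j 1 := by
    ext i
    rw [gradient_apply, pderiv_coord]
    simp [eq_comm]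
  rw [tangentialGradient, gradient_eq, inner_sub_right, inner_smul_right,
    EuclideanSpace.inner_single_right]
  simp

/-- Green's formula with `g = H · h^p` and `L` the `j`-th coordinate function. -/
theorem IsStrictSupport.shellIntegral_green_coord (h : IsStrictSupport H) (p : ℝ)
    (j : Fin (n + 1)) :
    n * shellIntegral (fun x ↦ dualWeight H p 0 x * pderiv j H x) =
      (n + 1 + p) * shellIntegral fun x ↦ dualWeight H p 0 x * tangentialGradient H x j := by
  have hw := h.smoothOffZero_dualWeight p 0
  have hgrad : SmoothOffZero fun x ↦ (n : ℝ) * (dualWeight H p 0 x * pderiv j H x) :=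
    contDiffOn_const.mul (hw.mul (h.smooth.pderiv j))
  have htan : SmoothOffZero fun x ↦
      (n + 1 + p) * (dualWeight H p 0 x * tangentialGradient H x j) :=
    contDiffOn_const.mul (hw.mul (smoothOffZero_tangentialGradient h.smooth j))
  have green : shellIntegral (fun x ↦ (n + 1 + p) * (dualWeight H p 0 x * tangentialGradient H x j)
      - n * (dualWeight H p 0 x * pderiv j H x)) = 0 := by
    refine (shellIntegral_congr fun x hx ↦ ?_).trans (shellIntegral_green (smoothOffZero_coord j)
      (posHomogeneous_coord j) (h.smoothOffZero_mul_dualWeight p 0))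
    rw [h.fderiv_mul_dualWeight_apply p 0 hx, inner_tangentialGradient_coord,
      inner_tangentialGradient_coord, inner_gradient_self h.smooth h.posHomogeneous hx,
      inner_tangentialGradient_self h.smooth h.posHomogeneous hx, ehess_coord, Matrix.trace_zero,
      gradient_apply, tangentialGradient_apply]
    ring
  rw [shellIntegral_sub htan.continuousOn hgrad.continuousOn, shellIntegral_const_mul,
    shellIntegral_const_mul] at green
  linarith

end Coordinates

section TestFunctions

variable {n : ℕ} {H f : Euc n → ℝ} {x : Euc n}

lemma norm_smul_ehess_mulVec (hH : SmoothOffZero H) (hx : x ≠ 0) (u : Fin (n + 1) → ℝ) :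
    ‖x‖ • (ehess n H x *ᵥ u) =
      coneJacobian H x *ᵥ u - (x.ofLp ⬝ᵥ u / ‖x‖ ^ 2) • (coneMap H x).ofLp := by
  have hnorm := norm_ne_zero_iff.2 hx
  ext i
  simp only [Pi.smul_apply, Pi.sub_apply, smul_eq_mul, Matrix.mulVec, dotProduct, Finset.mul_sum,
    Finset.sum_div, Finset.sum_mul, ← Finset.sum_sub_distrib]
  refine Finset.sum_congr rfl fun j _ ↦ ?_
  rw [ehess_apply, coneJacobian_apply hH hx, coneMap_apply, hH.pderiv_comm i j hx]
  field_simp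
  ring

lemma adjugate_coneJacobian_mulVec_coneMap (hH : SmoothOffZero H) (hH₁ : PosHomogeneous 1 H)
    (hx : x ≠ 0) :
    (coneJacobian H x).adjugate *ᵥ (coneMap H x).ofLp = coneDensity H x • x.ofLp :=
  funext (sum_adjugate_coneJacobian_mul_coneMap hH hH₁ hx)

lemma centroAffineFlux_eq_of_pderiv_eq (hH : SmoothOffZero H) (hH₁ : PosHomogeneous 1 H)
    (hx : x ≠ 0) {u : Fin (n + 1) → ℝ} (hu : ∀ i, pderiv i f x = (ehess n H x *ᵥ u) i)
    (j : Fin (n + 1)) :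
    centroAffineFlux H f j x =
      H x * coneDensity H x * (u j - x.ofLp ⬝ᵥ u / ‖x‖ ^ 2 * x j) := by
  have adjugate_mulVec : (coneJacobian H x).adjugate *ᵥ (‖x‖ • (ehess n H x *ᵥ u)) =
      coneDensity H x • (u - (x.ofLp ⬝ᵥ u / ‖x‖ ^ 2) • x.ofLp) := by
    rw [norm_smul_ehess_mulVec hH hx, Matrix.mulVec_sub, Matrix.mulVec_mulVec,
      Matrix.adjugate_mul, ← coneDensity, Matrix.smul_mulVec, Matrix.one_mulVec,
      Matrix.mulVec_smul, adjugate_coneJacobian_mulVec_coneMap hH hH₁ hx, smul_sub, smul_comm]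
  have flux_eq : centroAffineFlux H f j x =
      H x * ((coneJacobian H x).adjugate *ᵥ (‖x‖ • (ehess n H x *ᵥ u))) j := by
    rw [centroAffineFlux, Matrix.mulVec, dotProduct, Finset.mul_sum]
    refine Finset.sum_congr rfl fun i _ ↦ ?_
    rw [hu i, Pi.smul_apply, smul_eq_mul]
    ring
  rw [flux_eq, adjugate_mulVec, Pi.smul_apply, Pi.sub_apply, Pi.smul_apply, smul_eq_mul,
    smul_eq_mul, mul_assoc]

/-- In the centro-affine metric `D²H / H`, the function `f` has gradient `H u`. -/
lemma dirichletDensity_eq_of_pderiv_eq (hH : SmoothOffZero H) (hH₁ : PosHomogeneous 1 H)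
    (hx : x ≠ 0) {u : Fin (n + 1) → ℝ} (hu : ∀ i, pderiv i f x = (ehess n H x *ᵥ u) i) :
    dirichletDensity H f x = H x * coneDensity H x * (u ⬝ᵥ ehess n H x *ᵥ u) := by
  have radial : x.ofLp ⬝ᵥ ehess n H x *ᵥ u = 0 := by
    rw [Matrix.dotProduct_mulVec, self_vecMul_ehess hH hH₁ hx, zero_dotProduct]
  calc dirichletDensity H f x
      = H x * coneDensity H x *
          ((u - (x.ofLp ⬝ᵥ u / ‖x‖ ^ 2) • x.ofLp) ⬝ᵥ ehess n H x *ᵥ u) := by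
        simp only [dirichletDensity, centroAffineFlux_eq_of_pderiv_eq hH hH₁ hx hu, hu, mul_assoc,
          ← Finset.mul_sum]
        rfl
    _ = _ := by rw [sub_dotProduct, smul_dotProduct, radial, smul_zero, sub_zero]

lemma sum_dotProduct_mulVec_single_sub_smul {ι : Type*} [Fintype ι] [DecidableEq ι]
    (A : Matrix ι ι ℝ) (g : ι → ℝ) (c : ℝ) :
    ∑ k, (Pi.single k 1 - (c * g k) • g) ⬝ᵥ A *ᵥ (Pi.single k 1 - (c * g k) • g) =
      A.trace - (2 * c - c ^ 2 * (g ⬝ᵥ g)) * (g ⬝ᵥ A *ᵥ g) := by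
  have dotProduct_col (k : ι) : g ⬝ᵥ A.col k = (g ᵥ* A) k := rfl
  have expand (k : ι) :
      (Pi.single k 1 - (c * g k) • g) ⬝ᵥ A *ᵥ (Pi.single k 1 - (c * g k) • g) =
        A k k - c * (g k * (A *ᵥ g) k) - c * ((g ᵥ* A) k * g k) +
          c ^ 2 * (g k * g k) * (g ⬝ᵥ A *ᵥ g) := by
    simp only [Matrix.mulVec_sub, Matrix.mulVec_smul, sub_dotProduct, dotProduct_sub,
      smul_dotProduct, dotProduct_smul, single_one_dotProduct, Matrix.mulVec_single_one,
      Matrix.col_apply, dotProduct_col, smul_eq_mul]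
    ring
  have sum_diag : ∑ k, A k k = A.trace := rfl
  have sum_mul_self : ∑ k, g k * g k = g ⬝ᵥ g := rfl
  have sum_mul_mulVec : ∑ k, g k * (A *ᵥ g) k = g ⬝ᵥ A *ᵥ g := rfl
  have sum_vecMul_mul : ∑ k, (g ᵥ* A) k * g k = g ⬝ᵥ A *ᵥ g :=
    (Matrix.dotProduct_mulVec g A g).symm
  simp only [expand, Finset.sum_add_distrib, Finset.sum_sub_distrib, ← Finset.mul_sum,
    ← Finset.sum_mul, sum_diag, sum_mul_self, sum_mul_mulVec, sum_vecMul_mul]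
  ring

/-- The test functions `|X|^{-b} X_k`, where `X = Dh` is the inverse Gauss map. -/
def weightedGradient (H : Euc n → ℝ) (b : ℝ) (k : Fin (n + 1)) (x : Euc n) : ℝ :=
  ‖gradient H x‖ ^ (-b) * pderiv k H x

namespace IsStrictSupport

lemma smoothOffZero_weightedGradient (h : IsStrictSupport H) (b : ℝ) (k : Fin (n + 1)) :
    SmoothOffZero (weightedGradient H b k) :=
  (h.smoothOffZero_norm_gradient_rpow (-b)).mul (h.smooth.pderiv k)

lemma posHomogeneous_weightedGradient (h : IsStrictSupport H) (b : ℝ) (k : Fin (n + 1)) :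
    PosHomogeneous 0 (weightedGradient H b k) := by
  intro c hc x hx
  have gradient_eq := h.gradient_smul hx hc
  simp only [weightedGradient, ← gradient_apply, gradient_eq, zpow_zero, one_mul]

lemma pderiv_weightedGradient (h : IsStrictSupport H) (b : ℝ) (k : Fin (n + 1)) (hx : x ≠ 0)
    (i : Fin (n + 1)) :
    pderiv i (weightedGradient H b k) x = (ehess n H x *ᵥ (‖gradient H x‖ ^ (-b) •
      (Pi.single k 1 - (b / ‖gradient H x‖ ^ 2 * gradient H x k) • (gradient H x).ofLp))) i := by
  have hG := (h.norm_gradient_pos hx).ne'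
  have hdiff := h.smoothOffZero_norm_gradient.differentiableAt hx
  have product_rule := pderiv_mul i
    ((h.smoothOffZero_norm_gradient_rpow (-b)).differentiableAt hx)
    ((h.smooth.pderiv k).differentiableAt hx)
  rw [pderiv_rpow i (-b) hdiff hG, Real.rpow_sub_one hG,
    pderiv_norm_gradient h.smooth hx (h.gradient_ne_zero hx)] at product_rule
  refine product_rule.trans ?_
  simp only [Matrix.mulVec_smul, Matrix.mulVec_sub, Matrix.mulVec_single_one, Pi.smul_apply,
    Pi.sub_apply, Matrix.col_apply, ehess_apply, smul_eq_mul, gradient_apply]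
  field_simp
  ring

theorem sum_dirichletDensity_weightedGradient (h : IsStrictSupport H) (b : ℝ) (hx : x ≠ 0) :
    ∑ k, dirichletDensity H (weightedGradient H b k) x =
      coneDensity H x * (‖gradient H x‖ ^ (-b)) ^ 2 * (H x * (ehess n H x).trace -
        (2 * b - b ^ 2) * (H x * hessForm H x (gradient H x) / ‖gradient H x‖ ^ 2)) := by
  have hG := (h.norm_gradient_pos hx).ne'
  have norm_sq : (gradient H x).ofLp ⬝ᵥ (gradient H x).ofLp = ‖gradient H x‖ ^ 2 := by
    rw [← real_inner_eq_dotProduct, real_inner_self_eq_norm_sq]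
  have density_eq (k : Fin (n + 1)) := dirichletDensity_eq_of_pderiv_eq h.smooth h.posHomogeneous hx
    (h.pderiv_weightedGradient b k hx)
  simp only [density_eq, smul_dotProduct, Matrix.mulVec_smul, dotProduct_smul, smul_eq_mul,
    ← Finset.mul_sum, sum_dotProduct_mulVec_single_sub_smul, norm_sq, hessForm]
  field_simp

lemma sum_weightedGradient_sq (h : IsStrictSupport H) (b : ℝ) (hx : x ≠ 0) :
    ∑ k, weightedGradient H b k x ^ 2 =
      (‖gradient H x‖ ^ (-b)) ^ 2 * (‖tangentialGradient H x‖ ^ 2 + (H x / ‖x‖) ^ 2) := by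
  rw [norm_tangentialGradient_sq h.smooth h.posHomogeneous hx, sub_add_cancel,
    EuclideanSpace.real_norm_sq_eq (gradient H x), Finset.mul_sum]
  simp only [weightedGradient, mul_pow, gradient_apply]

end IsStrictSupport

end TestFunctions

section Rigidity

variable {n : ℕ} {H : Euc n → ℝ} {x : Euc n}

lemma contDiffOn_tangentialGradient (hH : SmoothOffZero H) :
    ContDiffOn ℝ (⊤ : ℕ∞) (tangentialGradient H) {(0 : Euc n)}ᶜ :=
  contDiffOn_euclidean.2 fun i ↦ smoothOffZero_tangentialGradient hH i

lemma smoothOffZero_hessForm_gradient (hH : SmoothOffZero H) :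
    SmoothOffZero fun x ↦ hessForm H x (gradient H x) := by
  simp only [hessForm_eq_sum, gradient_apply]
  exact ContDiffOn.sum fun i _ ↦ ContDiffOn.sum fun j _ ↦
    ((hH.pderiv i).mul (hH.pderiv j)).mul ((hH.pderiv j).pderiv i)

lemma smoothOffZero_trace_ehess (hH : SmoothOffZero H) :
    SmoothOffZero fun x ↦ (ehess n H x).trace :=
  ContDiffOn.sum fun i _ ↦ (hH.pderiv i).pderiv i

lemma eq_zero_of_posHomogeneous_of_shellIntegral_nonpos {F : Euc n → ℝ}
    (hF : ContinuousOn F {(0 : Euc n)}ᶜ) (hF_homog : PosHomogeneous 0 F)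
    (hF₀ : ∀ x ≠ 0, 0 ≤ F x) (hint : shellIntegral F ≤ 0) (hx : x ≠ 0) : F x = 0 := by
  have hnorm := norm_pos_iff.2 hx
  have hscale : 0 < √2 / ‖x‖ := by positivity
  have norm_sq : ‖(√2 / ‖x‖) • x‖ ^ 2 = 2 := by
    rw [norm_smul_of_nonneg hscale.le, div_mul_cancel₀ _ hnorm.ne', Real.sq_sqrt zero_le_two]
  have hbump : shellBump ((√2 / ‖x‖) • x) ≠ 0 := by
    rw [shellBump_ne_zero_iff, norm_sq]
    norm_num
  have vanish := eq_zero_of_shellIntegral_nonpos hF hF₀ hint hbump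
  rwa [hF_homog _ hscale x hx, zpow_zero, one_mul] at vanish

namespace IsStrictSupport

lemma hessForm_nonneg (h : IsStrictSupport H) (hx : x ≠ 0) (v : Euc n) : 0 ≤ hessForm H x v := by
  by_cases hxv : LinearIndependent ℝ ![x, v]
  · exact (h.hessForm_pos hxv).le
  · obtain ⟨c, rfl⟩ : ∃ c : ℝ, c • x = v := by
      simpa [LinearIndependent.pair_iff' hx] using hxv
    exact (hessForm_smul_self h.smooth h.posHomogeneous hx c).ge

lemma tangentialGradient_smul (h : IsStrictSupport H) (hx : x ≠ 0) {c : ℝ} (hc : 0 < c) :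
    tangentialGradient H (c • x) = tangentialGradient H x := by
  have hnorm := norm_ne_zero_iff.2 hx
  rw [tangentialGradient, h.gradient_smul hx hc, h.map_smul c hc, norm_smul_of_nonneg hc.le,
    smul_smul, tangentialGradient]
  congr 2
  field_simp

lemma posHomogeneous_div_norm (h : IsStrictSupport H) : PosHomogeneous 0 fun x ↦ H x / ‖x‖ := by
  intro c hc x _
  simp only [h.map_smul c hc, norm_smul_of_nonneg hc.le, mul_div_mul_left _ _ hc.ne', zpow_zero,
    one_mul]

lemma posHomogeneous_dualWeight (h : IsStrictSupport H) (p r : ℝ) :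
    PosHomogeneous 0 (dualWeight H p r) := by
  intro c hc x hx
  have support_eq := h.posHomogeneous_div_norm c hc x hx
  simp only [zpow_zero, one_mul] at support_eq ⊢
  rw [dualWeight, support_eq, h.gradient_smul hx hc, dualWeight]

variable {p b : ℝ}

lemma coneDensity_mul_norm_gradient_rpow_sq (h : IsStrictSupport H)
    (hD : ∀ x ≠ 0, coneDensity H x = dualWeight H p b x) (hx : x ≠ 0) :
    coneDensity H x * (‖gradient H x‖ ^ (-b)) ^ 2 = dualWeight H p (-b) x := by
  rw [hD x hx, pow_two, ← mul_assoc, h.dualWeight_mul_norm_gradient_rpow p b _ hx,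
    h.dualWeight_mul_norm_gradient_rpow p _ _ hx]
  congr 1
  ring

lemma shellIntegral_weightedGradient_mul_coneDensity (h : IsStrictSupport H)
    (hD : ∀ x ≠ 0, coneDensity H x = dualWeight H p b x) (k : Fin (n + 1)) :
    n * shellIntegral (fun x ↦ weightedGradient H b k x * coneDensity H x) =
      (n + 1 + p) * shellIntegral fun x ↦ dualWeight H p 0 x * tangentialGradient H x k := by
  rw [← h.shellIntegral_green_coord p k]
  congr 1
  refine shellIntegral_congr fun x hx ↦ ?_
  rw [hD x hx, weightedGradient, mul_comm, ← mul_assoc,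
    h.dualWeight_mul_norm_gradient_rpow p b _ hx, add_neg_cancel]

lemma sum_shellIntegral_weightedGradient_sq (h : IsStrictSupport H)
    (hD : ∀ x ≠ 0, coneDensity H x = dualWeight H p b x) :
    ∑ k, shellIntegral (fun x ↦ weightedGradient H b k x ^ 2 * coneDensity H x) =
      shellIntegral fun x ↦ dualWeight H p (-b) x *
        (‖tangentialGradient H x‖ ^ 2 + (H x / ‖x‖) ^ 2) := by
  have hterm (k : Fin (n + 1)) :
      SmoothOffZero fun x ↦ weightedGradient H b k x ^ 2 * coneDensity H x :=
    ((h.smoothOffZero_weightedGradient b k).pow 2).mul (smoothOffZero_coneDensity h.smooth)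
  rw [← shellIntegral_sum fun k _ ↦ (hterm k).continuousOn]
  refine shellIntegral_congr fun x hx ↦ ?_
  rw [← Finset.sum_mul, h.sum_weightedGradient_sq b hx,
    ← h.coneDensity_mul_norm_gradient_rpow_sq hD hx]
  ring

lemma sum_shellIntegral_dirichletDensity_weightedGradient (h : IsStrictSupport H)
    (hD : ∀ x ≠ 0, coneDensity H x = dualWeight H p b x) :
    ∑ k, shellIntegral (dirichletDensity H (weightedGradient H b k)) =
      shellIntegral fun x ↦ dualWeight H p (-b) x * (H x * (ehess n H x).trace -
        (2 * b - b ^ 2) * (H x * hessForm H x (gradient H x) / ‖gradient H x‖ ^ 2)) := by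
  rw [← shellIntegral_sum fun k _ ↦ (smoothOffZero_dirichletDensity h.smooth
    (h.smoothOffZero_weightedGradient b k)).continuousOn]
  refine shellIntegral_congr fun x hx ↦ ?_
  rw [h.sum_dirichletDensity_weightedGradient b hx, h.coneDensity_mul_norm_gradient_rpow_sq hD hx]

theorem poincare_weightedGradient (h : IsStrictSupport H)
    (hD : ∀ x ≠ 0, coneDensity H x = dualWeight H p b x) :
    n * shellIntegral (fun x ↦ dualWeight H p (-b) x *
        (‖tangentialGradient H x‖ ^ 2 + (H x / ‖x‖) ^ 2)) ≤
      shellIntegral (fun x ↦ dualWeight H p (-b) x * (H x * (ehess n H x).trace -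
        (2 * b - b ^ 2) * (H x * hessForm H x (gradient H x) / ‖gradient H x‖ ^ 2))) +
      ∑ k, n * shellIntegral (fun x ↦ weightedGradient H b k x * coneDensity H x) ^ 2 /
        shellIntegral (coneDensity H) := by
  rw [← h.sum_shellIntegral_weightedGradient_sq hD,
    ← h.sum_shellIntegral_dirichletDensity_weightedGradient hD, Finset.mul_sum,
    ← Finset.sum_add_distrib]
  exact Finset.sum_le_sum fun k _ ↦
    h.poincare (h.smoothOffZero_weightedGradient b k) (h.posHomogeneous_weightedGradient b k)

theorem mul_shellIntegral_norm_tangentialGradient_sq_le (h : IsStrictSupport H)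
    (hD : ∀ x ≠ 0, coneDensity H x = dualWeight H p b x) (hb₀ : 0 ≤ b) (hb₁ : b ≤ 1) :
    (n + 1 + p) * shellIntegral (fun x ↦ dualWeight H p (-b) x * ‖tangentialGradient H x‖ ^ 2) ≤
      ∑ k, n * shellIntegral (fun x ↦ weightedGradient H b k x * coneDensity H x) ^ 2 /
        shellIntegral (coneDensity H) := by
  let w := dualWeight H p (-b)
  let V (x : Euc n) := ‖tangentialGradient H x‖ ^ 2
  let Θ (x : Euc n) := H x * hessForm H x (gradient H x) / ‖gradient H x‖ ^ 2
  let Λ (x : Euc n) := H x * (ehess n H x).trace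
  let k (x : Euc n) := H x / ‖x‖
  have hw : SmoothOffZero w := h.smoothOffZero_dualWeight p (-b)
  have hV : SmoothOffZero V := (contDiffOn_tangentialGradient h.smooth).norm_sq ℝ
  have hΘ : SmoothOffZero Θ := (h.smooth.mul (smoothOffZero_hessForm_gradient h.smooth)).div
    (h.smoothOffZero_norm_gradient.pow 2) fun x hx ↦ pow_ne_zero 2 (h.norm_gradient_pos hx).ne'
  have hΛ : SmoothOffZero Λ := h.smooth.mul (smoothOffZero_trace_ehess h.smooth)
  have hk : SmoothOffZero fun x ↦ k x ^ 2 := h.smoothOffZero_div_norm.pow 2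
  have energy : SmoothOffZero fun x ↦ (n + 1 + p) * (w x * V x) :=
    contDiffOn_const.mul (hw.mul hV)
  have mass : SmoothOffZero fun x ↦ n * (w x * (V x + k x ^ 2)) :=
    contDiffOn_const.mul (hw.mul (hV.add hk))
  have dirichlet : SmoothOffZero fun x ↦ w x * (Λ x - (2 * b - b ^ 2) * Θ x) :=
    hw.mul (hΛ.sub (contDiffOn_const.mul hΘ))
  have green : SmoothOffZero fun x ↦ w x * ((p + 1) * V x + -b * Θ x + Λ x - n * k x ^ 2) :=
    hw.mul ((((contDiffOn_const.mul hV).add (contDiffOn_const.mul hΘ)).add hΛ).sub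
      (contDiffOn_const.mul hk))
  have pointwise (x : Euc n) (hx : x ≠ 0) : (n + 1 + p) * (w x * V x) ≤
      n * (w x * (V x + k x ^ 2)) - w x * (Λ x - (2 * b - b ^ 2) * Θ x) +
        w x * ((p + 1) * V x + -b * Θ x + Λ x - n * k x ^ 2) := by
    have hwx : 0 < w x := h.dualWeight_pos p (-b) hx
    have hΘx : 0 ≤ Θ x :=
      div_nonneg (mul_nonneg (h.nonneg x) (h.hessForm_nonneg hx _)) (sq_nonneg _)
    have hslack : 0 ≤ w x * (b * (1 - b) * Θ x) :=
      mul_nonneg hwx.le (mul_nonneg (mul_nonneg hb₀ (sub_nonneg.2 hb₁)) hΘx)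
    linarith
  have integrated := shellIntegral_mono energy.continuousOn
    ((mass.sub dirichlet).add green).continuousOn pointwise
  rw [shellIntegral_const_mul, shellIntegral_add (mass.sub dirichlet).continuousOn
    green.continuousOn, shellIntegral_sub mass.continuousOn dirichlet.continuousOn,
    shellIntegral_const_mul] at integrated
  linarith [h.poincare_weightedGradient hD, h.shellIntegral_green_dualWeight p (-b)]

end IsStrictSupport

/-- The vector `∫ h^p ∇̄h`; normalised by `∫ dV` it is the constant `c` in the equality case
`∇̄h = |Dh|^b c`. -/
def tangentialMoment (H : Euc n → ℝ) (p : ℝ) : Euc n :=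
  WithLp.toLp 2 fun k ↦ shellIntegral fun x ↦ dualWeight H p 0 x * tangentialGradient H x k

namespace IsStrictSupport

variable {p b : ℝ}

theorem shellIntegral_norm_tangentialGradient_sq_le (h : IsStrictSupport H)
    (hD : ∀ x ≠ 0, coneDensity H x = dualWeight H p b x) (hb₀ : 0 ≤ b) (hb₁ : b ≤ 1)
    (hp₀ : 0 < n + 1 + p) (hp₁ : p ≤ -1) :
    shellIntegral (fun x ↦ dualWeight H p (-b) x * ‖tangentialGradient H x‖ ^ 2) ≤
      ‖tangentialMoment H p‖ ^ 2 / shellIntegral (coneDensity H) := by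
  have hn : (0 : ℝ) < n := by linarith
  have hE := h.shellIntegral_coneDensity_pos
  refine le_of_mul_le_mul_left ?_ hp₀
  calc (n + 1 + p) * shellIntegral (fun x ↦ dualWeight H p (-b) x * ‖tangentialGradient H x‖ ^ 2)
      ≤ ∑ k, n * shellIntegral (fun x ↦ weightedGradient H b k x * coneDensity H x) ^ 2 /
          shellIntegral (coneDensity H) :=
        h.mul_shellIntegral_norm_tangentialGradient_sq_le hD hb₀ hb₁
    _ = (n + 1 + p) * ((n + 1 + p) / n) *
          (‖tangentialMoment H p‖ ^ 2 / shellIntegral (coneDensity H)) := by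
        rw [EuclideanSpace.real_norm_sq_eq, Finset.sum_div, Finset.mul_sum]
        refine Finset.sum_congr rfl fun k _ ↦ ?_
        have moment : shellIntegral (fun x ↦ weightedGradient H b k x * coneDensity H x) =
            (n + 1 + p) * tangentialMoment H p k / n := by
          rw [eq_div_iff hn.ne', mul_comm]
          exact h.shellIntegral_weightedGradient_mul_coneDensity hD k
        rw [moment]
        field_simp
    _ ≤ (n + 1 + p) * 1 * (‖tangentialMoment H p‖ ^ 2 / shellIntegral (coneDensity H)) := by
        gcongr
        rw [div_le_one hn]
        linarith
    _ = _ := by rw [mul_one]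

lemma dualWeight_mul_norm_tangentialGradient_sub_sq (h : IsStrictSupport H)
    (hD : ∀ x ≠ 0, coneDensity H x = dualWeight H p b x) (c : Euc n) (hx : x ≠ 0) :
    dualWeight H p (-b) x * ‖tangentialGradient H x - ‖gradient H x‖ ^ b • c‖ ^ 2 =
      dualWeight H p (-b) x * ‖tangentialGradient H x‖ ^ 2 -
        2 * ∑ k, c k * (dualWeight H p 0 x * tangentialGradient H x k) +
        ‖c‖ ^ 2 * coneDensity H x := by
  have weight_zero : dualWeight H p 0 x = dualWeight H p (-b) x * ‖gradient H x‖ ^ b := by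
    rw [h.dualWeight_mul_norm_gradient_rpow p (-b) b hx, neg_add_cancel]
  have weight_cone : coneDensity H x = dualWeight H p 0 x * ‖gradient H x‖ ^ b := by
    rw [hD x hx, h.dualWeight_mul_norm_gradient_rpow p 0 b hx, zero_add]
  have inner_eq : ∑ k, c k * (dualWeight H p 0 x * tangentialGradient H x k) =
      dualWeight H p 0 x * ⟪tangentialGradient H x, c⟫ := by
    rw [real_inner_eq_sum, Finset.mul_sum]
    exact Finset.sum_congr rfl fun k _ ↦ by ring
  rw [inner_eq, weight_cone, weight_zero, norm_sub_sq_real, inner_smul_right, norm_smul, mul_pow,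
    Real.norm_eq_abs, sq_abs]
  ring

lemma shellIntegral_norm_tangentialGradient_sub_sq (h : IsStrictSupport H)
    (hD : ∀ x ≠ 0, coneDensity H x = dualWeight H p b x) (c : Euc n) :
    shellIntegral (fun x ↦ dualWeight H p (-b) x *
        ‖tangentialGradient H x - ‖gradient H x‖ ^ b • c‖ ^ 2) =
      shellIntegral (fun x ↦ dualWeight H p (-b) x * ‖tangentialGradient H x‖ ^ 2) -
        2 * ⟪c, tangentialMoment H p⟫ + ‖c‖ ^ 2 * shellIntegral (coneDensity H) := by
  have energy : SmoothOffZero fun x ↦ dualWeight H p (-b) x * ‖tangentialGradient H x‖ ^ 2 :=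
    (h.smoothOffZero_dualWeight p (-b)).mul ((contDiffOn_tangentialGradient h.smooth).norm_sq ℝ)
  have moment (k : Fin (n + 1)) :
      SmoothOffZero fun x ↦ c k * (dualWeight H p 0 x * tangentialGradient H x k) :=
    contDiffOn_const.mul ((h.smoothOffZero_dualWeight p 0).mul
      (smoothOffZero_tangentialGradient h.smooth k))
  have mixed : SmoothOffZero fun x ↦
      2 * ∑ k, c k * (dualWeight H p 0 x * tangentialGradient H x k) :=
    contDiffOn_const.mul (ContDiffOn.sum fun k _ ↦ moment k)
  have mass : SmoothOffZero fun x ↦ ‖c‖ ^ 2 * coneDensity H x :=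
    contDiffOn_const.mul (smoothOffZero_coneDensity h.smooth)
  have inner_moment : ⟪c, tangentialMoment H p⟫ =
      shellIntegral fun x ↦ ∑ k, c k * (dualWeight H p 0 x * tangentialGradient H x k) := by
    rw [shellIntegral_sum fun k _ ↦ (moment k).continuousOn, real_inner_eq_sum]
    simp only [shellIntegral_const_mul, tangentialMoment]
  rw [inner_moment, ← shellIntegral_const_mul, ← shellIntegral_const_mul,
    ← shellIntegral_sub energy.continuousOn mixed.continuousOn,
    ← shellIntegral_add (energy.sub mixed).continuousOn mass.continuousOn]
  exact shellIntegral_congr fun x hx ↦ h.dualWeight_mul_norm_tangentialGradient_sub_sq hD c hx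

/-- Equality holds in the Cauchy–Schwarz inequality for `∇̄h` and `|Dh|^b`. -/
theorem exists_tangentialGradient_eq_smul (h : IsStrictSupport H)
    (hD : ∀ x ≠ 0, coneDensity H x = dualWeight H p b x) (hb₀ : 0 ≤ b) (hb₁ : b ≤ 1)
    (hp₀ : 0 < n + 1 + p) (hp₁ : p ≤ -1) :
    ∃ c : Euc n, ∀ x ≠ 0, tangentialGradient H x = ‖gradient H x‖ ^ b • c := by
  have hE := h.shellIntegral_coneDensity_pos
  let c := (shellIntegral (coneDensity H))⁻¹ • tangentialMoment H p
  let defect (x : Euc n) := dualWeight H p (-b) x *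
    ‖tangentialGradient H x - ‖gradient H x‖ ^ b • c‖ ^ 2
  have hdefect : SmoothOffZero defect := (h.smoothOffZero_dualWeight p (-b)).mul
    (((contDiffOn_tangentialGradient h.smooth).sub
      ((h.smoothOffZero_norm_gradient_rpow b).smul contDiffOn_const)).norm_sq ℝ)
  have defect_homog : PosHomogeneous 0 defect := by
    intro r hr x hx
    simp only [defect, h.posHomogeneous_dualWeight p (-b) r hr x hx,
      h.tangentialGradient_smul hx hr, h.gradient_smul hx hr, zpow_zero, one_mul]
  have defect_integral : shellIntegral defect ≤ 0 := by
    have le_moment := h.shellIntegral_norm_tangentialGradient_sq_le hD hb₀ hb₁ hp₀ hp₁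
    rw [h.shellIntegral_norm_tangentialGradient_sub_sq hD c, inner_smul_left, norm_smul, mul_pow,
      Real.norm_eq_abs, sq_abs, real_inner_self_eq_norm_sq, conj_trivial]
    field_simp at le_moment ⊢
    linarith
  refine ⟨c, fun x hx ↦ ?_⟩
  have vanish : defect x = 0 := eq_zero_of_posHomogeneous_of_shellIntegral_nonpos
    hdefect.continuousOn defect_homog
    (fun y hy ↦ mul_nonneg (h.dualWeight_pos p (-b) hy).le (sq_nonneg _)) defect_integral hx
  have norm_eq := (mul_eq_zero.1 vanish).resolve_left (h.dualWeight_pos p (-b) hx).ne'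
  exact sub_eq_zero.1 (norm_eq_zero.1 (pow_eq_zero_iff two_ne_zero |>.1 norm_eq))

end IsStrictSupport

end Rigidity

section Ball

variable {n : ℕ} {H F G : Euc n → ℝ} {x : Euc n}

lemma PosHomogeneous.eq_of_eqOn_sphere (hF : PosHomogeneous 0 F) (hG : PosHomogeneous 0 G)
    (heq : Set.EqOn F G (sphere 0 1)) (hx : x ≠ 0) : F x = G x := by
  have hscale := inv_pos.2 (norm_pos_iff.2 hx)
  have unit_eq := heq (mem_sphere_zero_iff_norm.2 (norm_smul_inv_norm (𝕜 := ℝ) hx))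
  simpa [hF _ hscale x hx, hG _ hscale x hx] using unit_eq

lemma gaussCurv_eq_div_coneDensity (hH : SmoothOffZero H) (hH₁ : PosHomogeneous 1 H)
    (hx : ‖x‖ = 1) (hHx : H x ≠ 0) : gaussCurv n H x = H x / coneDensity H x := by
  rw [gaussCurv, sigman, inv_div, coneDensity_eq_det_bmat hH hH₁ hx hHx]

lemma gradient_const_mul_norm (c : ℝ) (hx : x ≠ 0) :
    gradient (fun y : Euc n ↦ c * ‖y‖) x = (c / ‖x‖) • x := by
  ext i
  rw [gradient_apply, pderiv_const_mul i c (smoothOffZero_norm.differentiableAt hx),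
    pderiv_norm i hx, PiLp.smul_apply, smul_eq_mul, mul_div_assoc', div_mul_eq_mul_div]

lemma coneDensity_const_mul_norm (c : ℝ) (hx : x ≠ 0) :
    coneDensity (fun y : Euc n ↦ c * ‖y‖) x = c ^ (n + 1) := by
  have coneMap_eq (y : Euc n) (hy : y ≠ 0) (i : Fin (n + 1)) :
      coneMap (fun y ↦ c * ‖y‖) y i = c * y i := by
    rw [coneMap, gradient_const_mul_norm c hy, smul_smul,
      mul_div_cancel₀ c (norm_ne_zero_iff.2 hy), PiLp.smul_apply, smul_eq_mul]
  have jacobian_eq : coneJacobian (fun y : Euc n ↦ c * ‖y‖) x = c • 1 := by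
    ext i j
    rw [coneJacobian, Matrix.of_apply, pderiv_congr (fun y hy ↦ coneMap_eq y hy i) j hx,
      pderiv_const_mul j c ((smoothOffZero_coord i).differentiableAt hx), pderiv_coord,
      Matrix.smul_apply, Matrix.one_apply, smul_eq_mul]
  rw [coneDensity, jacobian_eq, Matrix.det_smul, Matrix.det_one, mul_one, Fintype.card_fin]

lemma dualWeight_const_mul_norm {c : ℝ} (hc : 0 < c) (p r : ℝ) (hx : x ≠ 0) :
    dualWeight (fun y : Euc n ↦ c * ‖y‖) p r x = c ^ (p + r) := by
  have hnorm := norm_pos_iff.2 hx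
  rw [dualWeight, gradient_const_mul_norm c hx, norm_smul_of_nonneg (by positivity),
    div_mul_cancel₀ _ hnorm.ne', mul_div_cancel_right₀ _ hnorm.ne', Real.rpow_add hc]

lemma supportBody_norm : supportBody (fun x : Euc n ↦ ‖x‖) = closedBall 0 1 := by
  ext y
  rw [supportBody, Set.mem_ofPred_eq, mem_closedBall_zero_iff]
  constructor
  · intro hy
    have self_le := hy y
    rw [real_inner_self_eq_norm_sq] at self_le
    by_contra! hlt
    nlinarith
  · intro hy x
    exact (real_inner_le_norm x y).trans (mul_le_of_le_one_right (norm_nonneg x) hy)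

namespace IsStrictSupport

lemma coneDensity_eq_dualWeight (h : IsStrictSupport H) {p b : ℝ}
    (heq : ∀ x ∈ sphere (0 : Euc n) 1,
      H x ^ (p - 1) * ‖gradient H x‖ ^ b * gaussCurv n H x = 1) (hx : x ≠ 0) :
    coneDensity H x = dualWeight H p b x := by
  refine (posHomogeneous_coneDensity h.posHomogeneous).eq_of_eqOn_sphere
    (h.posHomogeneous_dualWeight p b) (fun y hy ↦ ?_) hx
  have equation := heq y hy
  rw [mem_sphere_zero_iff_norm] at hy
  have hy₀ : y ≠ 0 := ne_zero_of_norm_ne_zero (by simp [hy])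
  have hHy := h.pos hy₀
  have hdensity := h.coneDensity_pos hy₀
  rw [gaussCurv_eq_div_coneDensity h.smooth h.posHomogeneous hy hHy.ne',
    Real.rpow_sub_one hHy.ne'] at equation
  rw [dualWeight, hy, div_one]
  field_simp at equation
  exact equation.symm

lemma exists_tangentialGradient_eq_zero (h : IsStrictSupport H) :
    ∃ x ≠ 0, tangentialGradient H x = 0 := by
  have ne_zero (x : Euc n) (hx : x ∈ sphere (0 : Euc n) 1) : x ≠ 0 :=
    ne_of_mem_sphere hx one_ne_zero
  obtain ⟨x, hx, hmax⟩ := (isCompact_sphere (0 : Euc n) 1).exists_isMaxOn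
    (NormedSpace.sphere_nonempty.2 zero_le_one) (h.smoothOffZero_div_norm.continuousOn.mono ne_zero)
  have hx₀ := ne_zero x hx
  have local_max : IsLocalMax (fun y ↦ H y / ‖y‖) x := by
    filter_upwards [compl_zero_mem_nhds hx₀] with y hy
    have radial := h.posHomogeneous_div_norm _ (inv_pos.2 (norm_pos_iff.2 hy)) y hy
    simp only [zpow_zero, one_mul] at radial
    rw [← radial]
    exact hmax (mem_sphere_zero_iff_norm.2 (norm_smul_inv_norm (𝕜 := ℝ) hy))
  refine ⟨x, hx₀, ext_inner_right ℝ fun v ↦ ?_⟩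
  have critical := fderiv_div_norm_apply h.smooth hx₀ v
  rw [local_max.fderiv_eq_zero, _root_.zero_apply, eq_comm,
    div_eq_zero_iff, or_iff_left (norm_ne_zero_iff.2 hx₀)] at critical
  rw [critical, inner_zero_left]

lemma tangentialGradient_eq_zero_of_eq_smul (h : IsStrictSupport H) {b : ℝ} {c : Euc n}
    (hc : ∀ x ≠ 0, tangentialGradient H x = ‖gradient H x‖ ^ b • c) (hx : x ≠ 0) :
    tangentialGradient H x = 0 := by
  obtain ⟨y, hy, hcritical⟩ := h.exists_tangentialGradient_eq_zero
  rw [hc y hy, smul_eq_zero] at hcritical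
  rw [hc x hx, hcritical.resolve_left (Real.rpow_pos_of_pos (h.norm_gradient_pos hy) b).ne',
    smul_zero]

lemma exists_eq_const_mul_norm (h : IsStrictSupport H) (hn : 1 ≤ n)
    (htan : ∀ x ≠ 0, tangentialGradient H x = 0) : ∃ c > 0, H = fun x ↦ c * ‖x‖ := by
  have hrank : 1 < Module.rank ℝ (Euc n) := by
    rw [← Module.finrank_eq_rank, finrank_euclideanSpace_fin]
    exact_mod_cast Nat.lt_succ_of_le hn
  have hconn := (isConnected_compl_singleton_of_one_lt_rank hrank (0 : Euc n)).isPreconnected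
  have fderiv_eq_zero : Set.EqOn (fderiv ℝ fun y ↦ H y / ‖y‖) 0 {(0 : Euc n)}ᶜ := fun x hx ↦ by
    ext v
    simp [fderiv_div_norm_apply h.smooth hx, htan x hx]
  obtain ⟨c, hc⟩ := isOpen_compl_singleton.exists_is_const_of_fderiv_eq_zero hconn
    (h.smoothOffZero_div_norm.differentiableOn (by simp)) fderiv_eq_zero
  obtain ⟨x₀, hx₀⟩ := exists_ne (0 : Euc n)
  refine ⟨c, hc x₀ hx₀ ▸ h.div_norm_pos hx₀, funext fun x ↦ ?_⟩
  rcases eq_or_ne x 0 with rfl | hx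
  · rw [h.map_zero, norm_zero, mul_zero]
  · rw [← hc x hx, div_mul_cancel₀ _ (norm_ne_zero_iff.2 hx)]

end IsStrictSupport

lemma eq_one_of_coneDensity_eq_dualWeight {c p b : ℝ} (hc : 0 < c) (hpb : p + b ≠ n + 1)
    (hD : ∀ x ≠ 0, coneDensity (fun y : Euc n ↦ c * ‖y‖) x = dualWeight (fun y ↦ c * ‖y‖) p b x) :
    c = 1 := by
  obtain ⟨x, hx⟩ := exists_ne (0 : Euc n)
  have power_eq := hD x hx
  rw [coneDensity_const_mul_norm c hx, dualWeight_const_mul_norm hc p b hx, ← Real.rpow_natCast,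
    Nat.cast_add_one] at power_eq
  by_contra hc₁
  exact hpb ((Real.rpow_right_inj hc hc₁).1 power_eq).symm

end Ball

theorem isotropic_Lp_dual_Minkowski_uniqueness_case1_general
    (n : ℕ) (p q : ℝ) (H : Euc n → ℝ)
    (hhomog : ∀ c : ℝ, 0 < c → ∀ x : Euc n, H (c • x) = c * H x)
    (hsmooth : ContDiffOn ℝ (⊤ : ℕ∞) H {(0 : Euc n)}ᶜ)
    (hpos : ∀ x ∈ sphere (0 : Euc n) 1, 0 < H x)
    (hposdef : ∀ x ∈ sphere (0 : Euc n) 1, (bmat n H x).PosDef)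
    (heq : ∀ x ∈ sphere (0 : Euc n) 1,
      H x ^ (p - 1) * ‖gradient H x‖ ^ ((n : ℝ) + 1 - q) * gaussCurv n H x = 1)
    (hp1 : -((n : ℝ) + 1) < p) (hp2 : p ≤ -1)
    (hq1 : (n : ℝ) ≤ q) (hq2 : q ≤ (n : ℝ) + 1) :
    frontier (supportBody H) = sphere (0 : Euc n) 1 := by
  have h : IsStrictSupport H := isStrictSupport_of_posDef_bmat hsmooth hhomog hpos hposdef
  have hn₀ : (0 : ℝ) < n := by linarith
  have hn : 1 ≤ n := Nat.cast_pos.1 hn₀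
  have hD : ∀ x ≠ 0, coneDensity H x = dualWeight H p (n + 1 - q) x :=
    fun _ ↦ h.coneDensity_eq_dualWeight heq
  obtain ⟨v, hv⟩ := h.exists_tangentialGradient_eq_smul hD (by linarith) (by linarith)
    (by linarith) hp2
  obtain ⟨c, hc, rfl⟩ := h.exists_eq_const_mul_norm hn
    fun _ ↦ h.tangentialGradient_eq_zero_of_eq_smul hv
  obtain rfl : c = 1 := eq_one_of_coneDensity_eq_dualWeight hc (by linarith) hD
  simp only [one_mul]
  rw [supportBody_norm, frontier_closedBall _ one_ne_zero]

/-- If a smooth, closed, strictly convex hypersurface `M = ∂K` in `ℝ^{n+1}`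
(`n ≥ 2`) enclosing the origin, with positive support function `h` (encoded by its
1-homogeneous extension `H`), satisfies the isotropic `L_p` dual Minkowski equation
`h^{p-1} |Dh|^{n+1-q} 𝒦 = 1` on `S^n`, with `-(n+1) < p ≤ -1` and `n ≤ q ≤ n+1`,
then `M` is the unit sphere. -/
theorem isotropic_Lp_dual_Minkowski_uniqueness_case1
    (n : ℕ) (hn : 2 ≤ n) (p q : ℝ)
    (H : Euc n → ℝ) (K : Set (Euc n))
    (hK : K = {y : Euc n | ∀ x : Euc n, ⟪x, y⟫ ≤ H x})
    (hhomog : ∀ c : ℝ, 0 < c → ∀ x : Euc n, H (c • x) = c * H x)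
    (hconv : ConvexOn ℝ Set.univ H)
    (hsmooth : ContDiffOn ℝ (⊤ : ℕ∞) H {(0 : Euc n)}ᶜ)
    (hpos : ∀ x ∈ sphere (0 : Euc n) 1, 0 < H x)
    (hposdef : ∀ x ∈ sphere (0 : Euc n) 1, (bmat n H x).PosDef)
    (heq : ∀ x ∈ sphere (0 : Euc n) 1,
      H x ^ (p - 1) * ‖gradient H x‖ ^ ((n : ℝ) + 1 - q) * gaussCurv n H x = 1)
    (hp1 : -((n : ℝ) + 1) < p) (hp2 : p ≤ -1)
    (hq1 : (n : ℝ) ≤ q) (hq2 : q ≤ (n : ℝ) + 1) :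
    frontier K = sphere (0 : Euc n) 1 := by
  rw [hK]
  exact isotropic_Lp_dual_Minkowski_uniqueness_case1_general n p q H hhomog hsmooth hpos hposdef heq
    hp1 hp2 hq1 hq2
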